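/- Let ℓ ≥ 1 be an integer and let ε be either of the two signs. Define f(x) := x · d/dx [ log E_{O_ε(ℓ+1)} e^{x·tr M} ], a smooth function of x ∈ ℝ. Then f(0) = 0, f′(0) = 0, and for every x ≠ 0 the third-order equation f′′′ + (1/x)f′′ + (6/x)(f′)² − (4/x²)·f·f′ − ((16x² + ℓ²)/x²)·f′ + (16/x)·f + 2(ℓ² − 1)/x = 0 holds. -/

import Mathlib

/-!
The expectation is first reduced to an integral over eigenangles. Elements of a component of
`O(ℓ+1)` have forced real eigenvalues `s` (none, a single `ε`, or both `1` and `-1`) and `n`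
conjugate pairs `exp (±iθ_j)`; the density of the angles is
`wt = V(cos θ)² ∏_j ∏_c (1 - s_c cos θ_j)`, with `V` the Vandermonde determinant, so that
`E exp (x tr M) = C e^{(∑ s) x} ∫ wt(θ) e^{2x ∑ cos θ_j} dθ` (`average`).
This case of the Weyl integration formula is obtained without a change of variables on the group.
Let `N = Uᵀ T_θ U`, with `U` Haar distributed and `θ` distributed according to `wt`, and let
`Psi Q` be the average of `exp (tr (N Q))`. The infinitesimal left invariance of Haar measure gives
Ward identities (`Frame.ward`), which turn the variation of the integrand along `Q ↦ Q (1 + B)`,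
`B` antisymmetric, into a sum of `θ`-derivatives of periodic functions; the logarithmic derivative
of `wt` is exactly what makes this work (`core_gen`). Hence `Psi (Q P) = Psi Q` for every rotation
`P` (`core`, `Psi_curve`, `Psi_orth`), the rotations being connected to the identity through
products of reflections. Averaging `Psi (x P)` over `P ∈ SO` and exchanging the integrals gives the
integral over the component of determinant `∏ s` by translation invariance, whereas
`Psi x` only involves `tr N`.

The eigenangle integral `ev` is a Hankel determinant: by the Andréief identity, its insertions of
Schur functions are minors of a moment matrix, and the three-term Plücker relation between them
is the bilinear KP equation (`kp`). Integration by parts on the torus gives the loop equations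
(`loop`), linear relations between the moments of the power sums `p_k` of `cos θ_j`. These are
solved for the moments involving `p₂` and `p₃` in terms of the moments of `p₁`, which are the
`x`-derivatives of the partition function; inserted in the KP equation they give the third-order
equation (`moments`, `elimination`, `ode_of_partition`). The value `ℓ = 2n - 1 + #s` is the
coefficient of the leading terms of the loop equations.
-/

open MeasureTheory Matrix

noncomputable section

instance (m : ℕ) : MeasurableSpace (Matrix.orthogonalGroup (Fin m) ℝ) := borel _

/-- Expectation over the component of the orthogonal group `O(m)` where the determinant
equals `e` (with `e = ±1`): `E_{O_ε(m)} f = 2 ∫_{O(m)} f(M)·𝟙[det M = e] dμ(M)`, where `μ`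
is the normalized Haar probability measure on `O(m)`. -/
noncomputable def expO (m : ℕ) (μ : Measure (Matrix.orthogonalGroup (Fin m) ℝ)) (e : ℝ)
    (f : Matrix.orthogonalGroup (Fin m) ℝ → ℝ) : ℝ :=
  2 * ∫ M, (if (M : Matrix (Fin m) (Fin m) ℝ).det = e then f M else 0) ∂μ

namespace OrthPV

/-! ### Alternants, the Plücker relation and the KP equation -/

/-- The alternant `det (z_i ^ a_j)`. -/
def alt {n : ℕ} (a : Fin n → ℕ) (z : Fin n → ℝ) : ℝ :=
  (Matrix.of fun i j => z i ^ a j).det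

/-- The power sum `∑ z_i ^ k`. -/
def psum {n : ℕ} (k : ℕ) (z : Fin n → ℝ) : ℝ := ∑ i, z i ^ k

/-- The exponents `n-1, …, 1, 0` of the Vandermonde determinant. -/
def stair (n : ℕ) : Fin n → ℕ := fun i => n - 1 - i

lemma stair_succ (n : ℕ) : stair (n + 1) = Fin.cons n (stair n) := by
  funext i
  refine Fin.cases ?_ (fun j => ?_) i
  · simp [stair]
  · simp [stair]; omega

lemma alt_eq_sum {n : ℕ} (a : Fin n → ℕ) (z : Fin n → ℝ) :
    alt a z = ∑ σ : Equiv.Perm (Fin n), (Equiv.Perm.sign σ : ℝ) * ∏ i, z i ^ a (σ i) := by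
  rw [alt, ← Matrix.det_transpose, Matrix.det_apply']
  rfl

lemma alt_eq_zero {n : ℕ} {a : Fin n → ℕ} (z : Fin n → ℝ) {i j : Fin n} (hij : i ≠ j)
    (h : a i = a j) : alt a z = 0 :=
  Matrix.det_zero_of_column_eq hij (fun k => by simp [h])

lemma alt_swap {n : ℕ} (a : Fin n → ℕ) (z : Fin n → ℝ) {i j : Fin n} (hij : i ≠ j) :
    alt (a ∘ Equiv.swap i j) z = - alt a z := by
  have := Matrix.det_permute' (Equiv.swap i j) (Matrix.of fun i j => z i ^ a j)
  rw [Equiv.Perm.sign_swap hij] at this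
  simp only [alt]
  rw [show (Matrix.of fun i' j' => z i' ^ (a ∘ Equiv.swap i j) j') =
    (Matrix.of fun i j => z i ^ a j).submatrix id (Equiv.swap i j) from rfl, this]
  simp

/-- Multiplication by a power sum acts on alternants as a derivation on the exponents. -/
lemma psum_mul_alt {n : ℕ} (k : ℕ) (a : Fin n → ℕ) (z : Fin n → ℝ) :
    psum k z * alt a z = ∑ j, alt (Function.update a j (a j + k)) z := by
  simp only [alt_eq_sum, psum]
  rw [Finset.sum_comm, Finset.mul_sum]
  refine Finset.sum_congr rfl fun σ _ => ?_
  rw [← Finset.mul_sum, mul_left_comm]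
  congr 1
  rw [Finset.sum_mul, ← Equiv.sum_comp σ (fun j => ∏ i, z i ^ Function.update a j (a j + k) (σ i))]
  refine Finset.sum_congr rfl fun i _ => ?_
  rw [← Finset.mul_prod_erase _ (fun x => z x ^ a (σ x)) (Finset.mem_univ i),
    ← Finset.mul_prod_erase _ (fun x => z x ^ Function.update a (σ i) (a (σ i) + k) (σ x))
      (Finset.mem_univ i)]
  simp only [Function.update_self, pow_add]
  have : ∏ x ∈ Finset.univ.erase i, z x ^ Function.update a (σ i) (a (σ i) + k) (σ x)
      = ∏ x ∈ Finset.univ.erase i, z x ^ a (σ x) := by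
    refine Finset.prod_congr rfl fun x hx => ?_
    rw [Function.update_of_ne]
    simpa using (Finset.ne_of_mem_erase hx)
  rw [this]; ring

/-- The Andréief identity for monomials. -/
lemma andreief {X : Type*} [MeasurableSpace X] (ν : Measure X) [SigmaFinite ν] {n : ℕ}
    (ζ ω : X → ℝ) (h : ∀ k : ℕ, Integrable (fun x => ζ x ^ k * ω x) ν) (a b : Fin n → ℕ) :
    ∫ x : Fin n → X, alt a (ζ ∘ x) * alt b (ζ ∘ x) * ∏ i, ω (x i) ∂(Measure.pi fun _ => ν)
      = n.factorial *
        (Matrix.of fun i j => ∫ x, ζ x ^ (a i + b j) * ω x ∂ν).det := by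
  have e : ∀ x : Fin n → X, alt a (ζ ∘ x) * alt b (ζ ∘ x) * ∏ i, ω (x i) =
      ∑ σ : Equiv.Perm (Fin n), ∑ τ : Equiv.Perm (Fin n),
        ((Equiv.Perm.sign σ : ℝ) * (Equiv.Perm.sign τ : ℝ)) *
        ∏ i, (ζ (x i) ^ (a (σ i) + b (τ i)) * ω (x i)) := by
    intro x
    rw [alt_eq_sum, alt_eq_sum, Finset.sum_mul_sum, Finset.sum_mul]
    refine Finset.sum_congr rfl fun σ _ => ?_
    rw [Finset.sum_mul]
    refine Finset.sum_congr rfl fun τ _ => ?_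
    simp only [pow_add, Finset.prod_mul_distrib, Function.comp]
    ring
  have hi : ∀ σ τ : Equiv.Perm (Fin n), Integrable (fun x : Fin n → X =>
      ((Equiv.Perm.sign σ : ℝ) * (Equiv.Perm.sign τ : ℝ)) *
        ∏ i, (ζ (x i) ^ (a (σ i) + b (τ i)) * ω (x i))) (Measure.pi fun _ => ν) := by
    intro σ τ
    refine Integrable.const_mul ?_ _
    exact Integrable.fintype_prod (f := fun i y => ζ y ^ (a (σ i) + b (τ i)) * ω y)
      (fun i => h _)
  simp_rw [e]
  rw [integral_finsetSum _ (fun σ _ => integrable_finsetSum _ (fun τ _ => hi σ τ))]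
  simp_rw [integral_finsetSum _ (fun τ _ => hi _ τ), integral_const_mul]
  have hp : ∀ σ τ : Equiv.Perm (Fin n), ∫ x : Fin n → X,
      ∏ i, (ζ (x i) ^ (a (σ i) + b (τ i)) * ω (x i)) ∂(Measure.pi fun _ => ν) =
      ∏ i, ∫ y, ζ y ^ (a (σ i) + b (τ i)) * ω y ∂ν := fun σ τ =>
    integral_fintype_prod_eq_prod (fun i y => ζ y ^ (a (σ i) + b (τ i)) * ω y)
  simp_rw [hp]
  rw [← Matrix.det_transpose, Matrix.det_apply']
  rw [show (n.factorial : ℝ) * _ = ∑ σ : Equiv.Perm (Fin n),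
    ∑ τ : Equiv.Perm (Fin n), ((Equiv.Perm.sign τ : ℤ) : ℝ) *
      ∏ i, (Matrix.of fun i j => ∫ x, ζ x ^ (a i + b j) * ω x ∂ν)ᵀ (τ i) i by
    rw [Finset.sum_const, Finset.card_univ, Fintype.card_perm, Fintype.card_fin, nsmul_eq_mul]]
  refine Finset.sum_congr rfl fun σ _ => ?_
  rw [← Equiv.sum_comp (Equiv.mulRight σ)]
  refine Finset.sum_congr rfl fun τ _ => ?_
  simp only [Equiv.coe_mulRight, Equiv.Perm.sign_mul, Matrix.transpose_apply, Matrix.of_apply,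
    Equiv.Perm.coe_mul, Function.comp]
  rw [Equiv.prod_comp σ (fun i => ∫ y, ζ y ^ (a i + b (τ i)) * ω y ∂ν)]
  congr 1
  push_cast
  have : ((Equiv.Perm.sign σ : ℤ) : ℝ) * ((Equiv.Perm.sign σ : ℤ) : ℝ) = 1 := by
    exact_mod_cast Int.units_coe_mul_self _
  linear_combination ((Equiv.Perm.sign τ : ℤ) : ℝ) * this

/-- The three-term Plücker relation for maximal minors with all but two rows in common. -/
lemma plucker {k : ℕ} (R : Fin k → Fin (k + 2) → ℝ) (v₁ v₂ v₃ v₄ : Fin (k + 2) → ℝ) :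
    (Matrix.of (vecCons v₁ (vecCons v₂ R))).det * (Matrix.of (vecCons v₃ (vecCons v₄ R))).det
    - (Matrix.of (vecCons v₁ (vecCons v₃ R))).det * (Matrix.of (vecCons v₂ (vecCons v₄ R))).det
    + (Matrix.of (vecCons v₁ (vecCons v₄ R))).det * (Matrix.of (vecCons v₂ (vecCons v₃ R))).det
    = 0 := by
  set A : Matrix (Fin (k + 2)) (Fin (k + 2)) ℝ := Matrix.of (vecCons v₃ (vecCons v₄ R)) with hA
  -- Cramer's rule writes `v₂` through the rows of `A`; then apply `v ↦ det (v₁, v, R)`.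
  have hC := Matrix.mulVec_cramer Aᵀ v₂
  have hu : ∀ v : Fin (k + 2) → ℝ, Matrix.of (vecCons v₁ (vecCons v R)) =
      (Matrix.of (vecCons v₁ (vecCons 0 R))).updateRow 1 v := fun v => by
    ext i j
    refine Fin.cases ?_ (fun i => ?_) i <;> [skip; refine Fin.cases ?_ (fun i => ?_) i] <;>
      simp [Matrix.updateRow_apply, Fin.ext_iff]
  let φ : (Fin (k + 2) → ℝ) →ₗ[ℝ] ℝ :=
    { toFun := fun v => (Matrix.of (vecCons v₁ (vecCons v R))).det
      map_add' := fun u v => by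
        rw [hu u, hu v, hu (u + v), Matrix.det_updateRow_add]
      map_smul' := fun c v => by
        rw [hu v, hu (c • v), Matrix.det_updateRow_smul]; simp }
  have h2 := congrArg φ hC
  rw [Matrix.mulVec_eq_sum, map_sum, map_smul, Matrix.det_transpose, Fin.sum_univ_succ,
    Fin.sum_univ_succ] at h2
  simp only [op_smul_eq_smul, map_smul, Matrix.transpose_transpose,
    Matrix.cramer_transpose_apply] at h2
  have hR : ∀ i : Fin k, φ (A i.succ.succ) = 0 := fun i => by
    change Matrix.det _ = 0
    refine Matrix.det_zero_of_row_eq (i := 1) (j := i.succ.succ) (by simp [Fin.ext_iff]) ?_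
    simp [hA]
    rfl
  have e1 : A.updateRow 0 v₂ = Matrix.of (vecCons v₂ (vecCons v₄ R)) := by
    ext i j; refine Fin.cases ?_ (fun i => ?_) i <;> [skip; refine Fin.cases ?_ (fun i => ?_) i] <;>
      simp [hA, Matrix.updateRow_apply, Fin.ext_iff]
  have e2 : A.updateRow (Fin.succ 0) v₂ = Matrix.of (vecCons v₃ (vecCons v₂ R)) := by
    ext i j; refine Fin.cases ?_ (fun i => ?_) i <;> [skip; refine Fin.cases ?_ (fun i => ?_) i] <;>
      simp [hA, Matrix.updateRow_apply, Fin.ext_iff]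
  have e3 : (Matrix.of (vecCons v₃ (vecCons v₂ R))).det =
      -(Matrix.of (vecCons v₂ (vecCons v₃ R))).det := by
    have := Matrix.det_permute (Equiv.swap (0 : Fin (k+2)) 1) (Matrix.of (vecCons v₂ (vecCons v₃ R)))
    rw [Equiv.Perm.sign_swap (by simp)] at this
    rw [show (Matrix.of (vecCons v₃ (vecCons v₂ R))) =
      (Matrix.of (vecCons v₂ (vecCons v₃ R))).submatrix
        (Equiv.swap (0 : Fin (k+2)) 1) id from ?_, this]
    · simp
    · ext i j; refine Fin.cases ?_ (fun i => ?_) i <;> [skip; refine Fin.cases ?_ (fun i => ?_) i]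
      · simp
      · simp
      · rw [Matrix.submatrix_apply, Equiv.swap_apply_of_ne_of_ne] <;> simp [Fin.ext_iff]
  have f0 : φ (A 0) = (Matrix.of (vecCons v₁ (vecCons v₃ R))).det := rfl
  have f1 : φ (A (Fin.succ 0)) = (Matrix.of (vecCons v₁ (vecCons v₄ R))).det := rfl
  have f2 : φ v₂ = (Matrix.of (vecCons v₁ (vecCons v₂ R))).det := rfl
  simp only [hR, mul_zero, Finset.sum_const_zero, add_zero, e1, e2, e3, f0, f1, f2,
    smul_eq_mul] at h2
  linear_combination -h2

/-- The alternant with exponents `b₀ + k, …, b₃ + k, k - 1, …, 0`. -/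
def alt4 (k b₀ b₁ b₂ b₃ : ℕ) (z : Fin (k + 4) → ℝ) : ℝ :=
  alt (Fin.cons (b₀ + k) (Fin.cons (b₁ + k) (Fin.cons (b₂ + k) (Fin.cons (b₃ + k) (stair k))))) z

/-- When `0, …, q-1` occur among the `b_i`, shifting an exponent of the tail by `q` produces a
repeated exponent, so only the four leading exponents contribute. -/
lemma psum_mul_alt4 (k q b₀ b₁ b₂ b₃ : ℕ) (hq : 0 < q) (z : Fin (k + 4) → ℝ)
    (h : ∀ c < q, c = b₀ ∨ c = b₁ ∨ c = b₂ ∨ c = b₃) :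
    psum q z * alt4 k b₀ b₁ b₂ b₃ z = alt4 k (b₀ + q) b₁ b₂ b₃ z + alt4 k b₀ (b₁ + q) b₂ b₃ z
      + alt4 k b₀ b₁ (b₂ + q) b₃ z + alt4 k b₀ b₁ b₂ (b₃ + q) z := by
  rw [alt4, psum_mul_alt, Fin.sum_univ_succ, Fin.sum_univ_succ, Fin.sum_univ_succ,
    Fin.sum_univ_succ]
  rw [Finset.sum_eq_zero]
  · simp only [Fin.cons_zero, Fin.update_cons_zero, Fin.cons_succ, ← Fin.cons_update, add_zero]
    simp only [alt4, add_right_comm _ k q]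
    ring
  · intro i _
    simp only [Fin.cons_succ, ← Fin.cons_update]
    have hi := i.2
    by_cases hqi : q ≤ i
    · refine alt_eq_zero z (i := i.succ.succ.succ.succ)
        (j := (⟨i - q, by omega⟩ : Fin k).succ.succ.succ.succ) ?_ ?_
      · simp only [ne_eq, Fin.ext_iff, Fin.val_succ]; omega
      · simp only [Fin.cons_succ, Function.update_self]
        rw [Function.update_of_ne]
        · simp only [stair]; omega
        · simp only [ne_eq, Fin.ext_iff]; omega
    · rcases h (q - 1 - i) (by omega) with h | h | h | h
      · refine alt_eq_zero z (i := i.succ.succ.succ.succ) (j := 0) (by simp [Fin.ext_iff]) ?_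
        simp only [Fin.cons_succ, Function.update_self, Fin.cons_zero, stair]; omega
      · refine alt_eq_zero z (i := i.succ.succ.succ.succ) (j := Fin.succ 0)
          (by simp [Fin.ext_iff]) ?_
        simp only [Fin.cons_succ, Function.update_self, Fin.cons_zero, stair]; omega
      · refine alt_eq_zero z (i := i.succ.succ.succ.succ) (j := Fin.succ (Fin.succ 0))
          (by simp only [ne_eq, Fin.succ_inj]; exact Fin.succ_ne_zero _) ?_
        simp only [Fin.cons_succ, Function.update_self, Fin.cons_zero, stair]; omega
      · refine alt_eq_zero z (i := i.succ.succ.succ.succ) (j := Fin.succ (Fin.succ (Fin.succ 0)))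
          (by simp only [ne_eq, Fin.succ_inj]; exact Fin.succ_ne_zero _) ?_
        simp only [Fin.cons_succ, Function.update_self, Fin.cons_zero, stair]; omega

lemma alt4_swap01 (k b₀ b₁ b₂ b₃ : ℕ) (z : Fin (k + 4) → ℝ) :
    alt4 k b₁ b₀ b₂ b₃ z = - alt4 k b₀ b₁ b₂ b₃ z := by
  rw [alt4, alt4, ← alt_swap _ z (i := ⟨0, by omega⟩) (j := ⟨1, by omega⟩) (by simp)]
  congr 1
  funext ⟨i, hi⟩
  match i with
  | 0 => rw [Function.comp, Equiv.swap_apply_left]; rfl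
  | 1 => rw [Function.comp, Equiv.swap_apply_right]; rfl
  | 2 => rw [Function.comp, Equiv.swap_apply_of_ne_of_ne] <;> first | rfl | simp
  | 3 => rw [Function.comp, Equiv.swap_apply_of_ne_of_ne] <;> first | rfl | simp
  | i + 4 => rw [Function.comp, Equiv.swap_apply_of_ne_of_ne] <;> first | rfl | simp

lemma alt4_swap12 (k b₀ b₁ b₂ b₃ : ℕ) (z : Fin (k + 4) → ℝ) :
    alt4 k b₀ b₂ b₁ b₃ z = - alt4 k b₀ b₁ b₂ b₃ z := by
  rw [alt4, alt4, ← alt_swap _ z (i := ⟨1, by omega⟩) (j := ⟨2, by omega⟩) (by simp)]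
  congr 1
  funext ⟨i, hi⟩
  match i with
  | 0 => rw [Function.comp, Equiv.swap_apply_of_ne_of_ne] <;> first | rfl | simp
  | 1 => rw [Function.comp, Equiv.swap_apply_left]; rfl
  | 2 => rw [Function.comp, Equiv.swap_apply_right]; rfl
  | 3 => rw [Function.comp, Equiv.swap_apply_of_ne_of_ne] <;> first | rfl | simp
  | i + 4 => rw [Function.comp, Equiv.swap_apply_of_ne_of_ne] <;> first | rfl | simp

lemma alt4_swap23 (k b₀ b₁ b₂ b₃ : ℕ) (z : Fin (k + 4) → ℝ) :
    alt4 k b₀ b₁ b₃ b₂ z = - alt4 k b₀ b₁ b₂ b₃ z := by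
  rw [alt4, alt4, ← alt_swap _ z (i := ⟨2, by omega⟩) (j := ⟨3, by omega⟩) (by simp)]
  congr 1
  funext ⟨i, hi⟩
  match i with
  | 0 => rw [Function.comp, Equiv.swap_apply_of_ne_of_ne] <;> first | rfl | simp
  | 1 => rw [Function.comp, Equiv.swap_apply_of_ne_of_ne] <;> first | rfl | simp
  | 2 => rw [Function.comp, Equiv.swap_apply_left]; rfl
  | 3 => rw [Function.comp, Equiv.swap_apply_right]; rfl
  | i + 4 => rw [Function.comp, Equiv.swap_apply_of_ne_of_ne] <;> first | rfl | simp

lemma alt4_eq01 (k b c d : ℕ) (z : Fin (k + 4) → ℝ) : alt4 k b b c d z = 0 := by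
  linarith [alt4_swap01 k b b c d z]

lemma alt4_eq12 (k b c d : ℕ) (z : Fin (k + 4) → ℝ) : alt4 k c b b d z = 0 := by
  linarith [alt4_swap12 k c b b d z]

lemma alt4_eq23 (k b c d : ℕ) (z : Fin (k + 4) → ℝ) : alt4 k c d b b z = 0 := by
  linarith [alt4_swap23 k c d b b z]

/-- The alternant whose two leading exponents are `p, q`, the others being `k - 1, …, 0`. -/
def alt2 (k p q : ℕ) (z : Fin (k + 2) → ℝ) : ℝ := alt (Fin.cons p (Fin.cons q (stair k))) z

lemma alt_stair (k : ℕ) (z : Fin (k + 2) → ℝ) : alt (stair (k + 2)) z = alt2 k (k + 1) k z := by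
  rw [alt2, stair_succ, stair_succ]

/-- The products of the Schur polynomials `s_1, s_2, s_{11}, s_{21}, s_{22}`, written through power
sums, with the Vandermonde determinant. -/
lemma schur_mul_alt (k : ℕ) (z : Fin (k + 2) → ℝ) :
    psum 1 z * alt2 k (k + 1) k z = alt2 k (k + 2) k z ∧
    (psum 1 z ^ 2 + psum 2 z) * alt2 k (k + 1) k z = 2 * alt2 k (k + 3) k z ∧
    (psum 1 z ^ 2 - psum 2 z) * alt2 k (k + 1) k z = 2 * alt2 k (k + 2) (k + 1) z ∧
    (psum 1 z ^ 3 - psum 3 z) * alt2 k (k + 1) k z = 3 * alt2 k (k + 3) (k + 1) z ∧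
    (psum 1 z ^ 4 + 3 * psum 2 z ^ 2 - 4 * (psum 1 z * psum 3 z)) * alt2 k (k + 1) k z
      = 12 * alt2 k (k + 3) (k + 2) z := by
  match k with
  | 0 =>
    have hA : ∀ p q, alt2 0 p q z = z 0 ^ p * z 1 ^ q - z 0 ^ q * z 1 ^ p := fun p q => by
      rw [alt2, alt]
      exact Matrix.det_fin_two _
    have hp : ∀ j, psum j z = z 0 ^ j + z 1 ^ j := fun j => Fin.sum_univ_two _
    simp only [hA, hp]
    refine ⟨?_, ?_, ?_, ?_, ?_⟩ <;> ring
  | 1 =>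
    have hA : ∀ p q, alt2 1 p q z = z 0 ^ p * z 1 ^ q * z 2 ^ 0 - z 0 ^ p * z 1 ^ 0 * z 2 ^ q
        - z 0 ^ q * z 1 ^ p * z 2 ^ 0 + z 0 ^ q * z 1 ^ 0 * z 2 ^ p + z 0 ^ 0 * z 1 ^ p * z 2 ^ q
        - z 0 ^ 0 * z 1 ^ q * z 2 ^ p := fun p q => by
      rw [alt2, alt]
      exact Matrix.det_fin_three _
    have hp : ∀ j, psum j z = z 0 ^ j + z 1 ^ j + z 2 ^ j := fun j => Fin.sum_univ_three _
    simp only [hA, hp]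
    refine ⟨?_, ?_, ?_, ?_, ?_⟩ <;> ring
  | k + 2 =>
    have e : ∀ p q, alt2 (k + 2) (p + k) (q + k) z = alt4 k p q 1 0 z := fun p q => by
      rw [alt2, alt4, stair_succ, stair_succ, add_comm 1 k, zero_add]
    have e0 := e 3 2
    have e1 := e 4 2
    have e2 := e 5 2
    have e11 := e 4 3
    have e21 := e 5 3
    have e22 := e 5 4
    rw [show 3 + k = k + 2 + 1 by ring, show 2 + k = k + 2 by ring] at e0
    rw [show 4 + k = k + 2 + 2 by ring, show 2 + k = k + 2 by ring] at e1
    rw [show 5 + k = k + 2 + 3 by ring, show 2 + k = k + 2 by ring] at e2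
    rw [show 4 + k = k + 2 + 2 by ring, show 3 + k = k + 2 + 1 by ring] at e11
    rw [show 5 + k = k + 2 + 3 by ring, show 3 + k = k + 2 + 1 by ring] at e21
    rw [show 5 + k = k + 2 + 3 by ring, show 4 + k = k + 2 + 2 by ring] at e22
    rw [e0, e1, e2, e11, e21, e22]
    have P1 : ∀ b₀ b₁ b₂, _ := fun b₀ b₁ b₂ =>
      psum_mul_alt4 k 1 b₀ b₁ b₂ 0 one_pos z (by intro c hc; omega)
    have P2 : ∀ b₀ b₁, _ := fun b₀ b₁ =>
      psum_mul_alt4 k 2 b₀ b₁ 1 0 two_pos z (by intro c hc; omega)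
    have P3 := psum_mul_alt4 k 3 3 2 1 0 (by norm_num) z (by intro c hc; omega)
    have a1 := P1 3 2 1
    have a2 := P1 4 2 1
    have a3 := P1 5 2 1
    have a4 := P1 4 3 1
    have a5 := P1 6 2 1
    have a6 := P1 5 3 1
    have a7 := P1 4 3 2
    have c1 := P2 3 2
    have c2 := P2 5 2
    have c3 := P2 4 3
    have s1 := alt4_swap01 k 4 3 1 0 z
    have s2 := alt4_swap12 k 5 3 2 0 z
    have s3 := alt4_swap01 k 5 4 1 0 z
    have s4 := alt4_swap23 k 4 3 2 1 z
    have s5 := alt4_swap01 k 5 3 1 0 z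
    have s6 := alt4_swap12 k 3 4 2 0 z
    have s7 := alt4_swap01 k 4 3 2 0 z
    have s8 : alt4 k 5 2 1 2 z = 0 := by rw [alt4_swap23, alt4_eq12, neg_zero]
    have s9 : alt4 k 3 2 1 2 z = 0 := by rw [alt4_swap23, alt4_eq12, neg_zero]
    have s10 : alt4 k 3 2 1 3 z = 0 := by
      rw [alt4_swap23, alt4_swap12, alt4_eq01, neg_zero, neg_zero]
    have s11 : alt4 k 3 2 3 0 z = 0 := by rw [alt4_swap12, alt4_eq01, neg_zero]
    simp only [Nat.reduceAdd, alt4_eq01, alt4_eq12, alt4_eq23, s1, s2, s3, s4, s5, s6, s7, s8, s9,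
      s10, s11, add_zero] at a1 a2 a3 a4 a5 a6 a7 c1 c2 c3 P3
    generalize psum 1 z = p1 at *
    generalize psum 2 z = p2 at *
    generalize psum 3 z = p3 at *
    refine ⟨a1, ?_, ?_, ?_, ?_⟩
    · linear_combination p1 * a1 + a2 + c1
    · linear_combination p1 * a1 + a2 - c1
    · linear_combination p1 ^ 2 * a1 + p1 * a2 + a3 + a4 - P3
    · linear_combination p1 ^ 3 * a1 + p1 ^ 2 * a2 + p1 * a3 + p1 * a4 + a5 + 2 * a6 + a7
        + 3 * p2 * c1 + 3 * c2 - 3 * c3 - 4 * p1 * P3 - 4 * a5 + 4 * a6 - 4 * a7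

/-- The expectation-like functional `s ↦ ∫ s(ζ(x)) Δ(ζ(x))² ∏ ω(x_i) dν(x_1) ⋯ dν(x_n)`. -/
def hank {X : Type*} [MeasurableSpace X] (ν : Measure X) (n : ℕ) (ζ ω : X → ℝ)
    (s : (Fin n → ℝ) → ℝ) : ℝ :=
  ∫ x : Fin n → X, s (ζ ∘ x) * (alt (stair n) (ζ ∘ x) ^ 2 * ∏ i, ω (x i))
    ∂(Measure.pi fun _ => ν)

/-- The KP equation in bilinear form: a Plücker relation between Hankel minors. -/
lemma kp {X : Type*} [MeasurableSpace X] (ν : Measure X) [SigmaFinite ν] (n : ℕ)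
    (ζ ω : X → ℝ) (h : ∀ k : ℕ, Integrable (fun x => ζ x ^ k * ω x) ν) :
    hank ν n ζ ω (fun z => psum 1 z ^ 4 + 3 * psum 2 z ^ 2 - 4 * (psum 1 z * psum 3 z))
        * hank ν n ζ ω (fun _ => 1)
      - 4 * hank ν n ζ ω (fun z => psum 1 z ^ 3 - psum 3 z) * hank ν n ζ ω (fun z => psum 1 z)
      + 3 * (hank ν n ζ ω (fun z => psum 1 z ^ 2 + psum 2 z)
        * hank ν n ζ ω (fun z => psum 1 z ^ 2 - psum 2 z)) = 0 := by
  match n with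
  -- in fewer than two variables the Schur functions with two rows vanish identically
  | 0 => simp [hank, psum]
  | 1 =>
    have h1 : ∀ z : Fin 1 → ℝ,
        psum 1 z ^ 4 + 3 * psum 2 z ^ 2 - 4 * (psum 1 z * psum 3 z) = 0 := fun z => by
      simp [psum]; ring
    have h2 : ∀ z : Fin 1 → ℝ, psum 1 z ^ 3 - psum 3 z = 0 := fun z => by simp [psum]
    have h3 : ∀ z : Fin 1 → ℝ, psum 1 z ^ 2 - psum 2 z = 0 := fun z => by simp [psum]
    simp only [h1, h2, h3, hank]
    simp
  | k + 2 =>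
    set D : ℕ → ℕ → ℝ := fun p q => ((k + 2).factorial : ℝ) * (Matrix.of fun i j =>
      ∫ x, ζ x ^ ((Fin.cons p (Fin.cons q (stair k)) : Fin (k + 2) → ℕ) i + stair (k + 2) j)
        * ω x ∂ν).det with hD
    -- `D p q` is the integral of the alternant `alt2 k p q` against the Vandermonde determinant
    have key : ∀ (s : (Fin (k + 2) → ℝ) → ℝ) (c : ℝ) (p q : ℕ),
        (∀ z, s z * alt2 k (k + 1) k z = c * alt2 k p q z) →
        hank ν (k + 2) ζ ω s = c * D p q := by
      intro s c p q hs
      simp only [hD]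
      rw [← andreief ν ζ ω h, ← integral_const_mul, hank]
      refine integral_congr_ae (Filter.Eventually.of_forall fun x => ?_)
      have := hs (ζ ∘ x)
      simp only [alt2] at this
      simp only [alt_stair]
      simp only [alt2]
      linear_combination (alt (Fin.cons (k + 1) (Fin.cons k (stair k))) (ζ ∘ x)
        * ∏ i, ω (x i)) * this
    rw [key _ 12 (k + 3) (k + 2) fun z => (schur_mul_alt k z).2.2.2.2,
      key _ 3 (k + 3) (k + 1) fun z => (schur_mul_alt k z).2.2.2.1,
      key _ 2 (k + 2) (k + 1) fun z => (schur_mul_alt k z).2.2.1,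
      key _ 2 (k + 3) k fun z => (schur_mul_alt k z).2.1,
      key (fun z => psum 1 z) 1 (k + 2) k fun z => by rw [(schur_mul_alt k z).1, one_mul],
      key (fun _ => 1) 1 (k + 1) k fun z => rfl]
    have hpl := plucker (fun (i : Fin k) (j : Fin (k + 2)) =>
      ∫ x, ζ x ^ (stair k i + stair (k + 2) j) * ω x ∂ν)
      (fun j => ∫ x, ζ x ^ (k + 3 + stair (k + 2) j) * ω x ∂ν)
      (fun j => ∫ x, ζ x ^ (k + 2 + stair (k + 2) j) * ω x ∂ν)
      (fun j => ∫ x, ζ x ^ (k + 1 + stair (k + 2) j) * ω x ∂ν)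
      (fun j => ∫ x, ζ x ^ (k + stair (k + 2) j) * ω x ∂ν)
    have hm : ∀ p q, (Matrix.of (vecCons (fun j => ∫ x, ζ x ^ (p + stair (k + 2) j) * ω x ∂ν)
        (vecCons (fun j => ∫ x, ζ x ^ (q + stair (k + 2) j) * ω x ∂ν)
        (fun (i : Fin k) (j : Fin (k + 2)) =>
          ∫ x, ζ x ^ (stair k i + stair (k + 2) j) * ω x ∂ν)))) =
        (Matrix.of fun i j => ∫ x, ζ x ^ ((Fin.cons p (Fin.cons q (stair k)) :
          Fin (k + 2) → ℕ) i + stair (k + 2) j) * ω x ∂ν) := by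
      intro p q
      ext i j
      refine Fin.cases ?_ (fun i => ?_) i
      · simp
      refine Fin.cases ?_ (fun i => ?_) i <;> simp
    simp only [hm] at hpl
    simp only [hD]
    linear_combination 12 * ((k + 2).factorial : ℝ) ^ 2 * hpl

/-! ### The torus of eigenangles -/

/-- Lebesgue measure on one period `(0, 2π]`. -/
def circ : Measure ℝ := volume.restrict (Set.Ioc 0 (2 * Real.pi))

/-- Lebesgue measure on the box `(0, 2π]ⁿ`, a fundamental domain of the torus. -/
def tor (n : ℕ) : Measure (Fin n → ℝ) := Measure.pi fun _ => circ

instance : IsFiniteMeasure circ := by unfold circ; infer_instance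
instance (n : ℕ) : IsFiniteMeasure (tor n) := by unfold tor; infer_instance

lemma tor_eq (n : ℕ) : tor n = (volume : Measure (Fin n → ℝ)).restrict
    (Set.univ.pi fun _ => Set.Ioc 0 (2 * Real.pi)) := by
  unfold tor circ
  rw [← Measure.restrict_pi_pi]; rfl

lemma tor_ae_mem (n : ℕ) : ∀ᵐ θ ∂tor n, θ ∈ Set.Icc (0 : Fin n → ℝ) (fun _ => 2 * Real.pi) := by
  rw [tor_eq]
  filter_upwards [ae_restrict_mem (MeasurableSet.univ_pi fun _ => measurableSet_Ioc)] with θ hθ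
  exact ⟨fun i => (hθ i trivial).1.le, fun i => (hθ i trivial).2⟩

lemma integrable_tor {n : ℕ} {E : Type*} [NormedAddCommGroup E] [NormedSpace ℝ E]
    {G : (Fin n → ℝ) → E} (hG : Continuous G) : Integrable G (tor n) := by
  rw [tor_eq]
  have h : IntegrableOn G (Set.Icc (0 : Fin n → ℝ) (fun _ => 2 * Real.pi)) volume :=
    (hG.continuousOn).integrableOn_compact isCompact_Icc
  exact h.mono_set fun θ hθ => ⟨fun i => (hθ i trivial).1.le, fun i => (hθ i trivial).2⟩

/-- The integral over the torus of a partial derivative of a periodic function vanishes. -/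
lemma ibp {n : ℕ} {E : Type*} [NormedAddCommGroup E] [NormedSpace ℝ E] [CompleteSpace E]
    (i : Fin n) (G : (Fin n → ℝ) → E) (hG : ContDiff ℝ 1 G)
    (per : ∀ θ, G (Function.update θ i (2 * Real.pi)) = G (Function.update θ i 0)) :
    ∫ θ, fderiv ℝ G θ (Pi.single i 1) ∂tor n = 0 := by
  obtain ⟨m, rfl⟩ : ∃ m, n = m + 1 := ⟨n - 1, by have := i.pos; omega⟩
  have hc : Continuous fun θ => fderiv ℝ G θ (Pi.single i 1) :=
    (hG.continuous_fderiv one_ne_zero).clm_apply continuous_const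
  have hmp := measurePreserving_piFinSuccAbove (fun _ : Fin (m + 1) => circ) i
  have hmp' := hmp.symm
  have hintg := (hmp'.integrable_comp_emb
    (MeasurableEquiv.measurableEmbedding _)).2 (integrable_tor hc)
  unfold tor
  rw [← hmp'.integral_comp (MeasurableEquiv.measurableEmbedding _)]
  refine (integral_prod_symm _ hintg).trans ?_
  simp only [Function.comp_apply]
  refine integral_eq_zero_of_ae (Filter.Eventually.of_forall fun y => ?_)
  simp only [Pi.zero_apply]
  have hupd : ∀ x : ℝ, (MeasurableEquiv.piFinSuccAbove (fun _ : Fin (m + 1) => ℝ) i).symm (x, y)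
      = Function.update (i.insertNth (0 : ℝ) y : Fin (m + 1) → ℝ) i x := by
    intro x
    simp [MeasurableEquiv.piFinSuccAbove]
    rfl
  simp only [hupd]
  set θ₀ : Fin (m + 1) → ℝ := i.insertNth (0 : ℝ) y
  have hd : ∀ x : ℝ, HasDerivAt (fun x => G (Function.update θ₀ i x))
      (fderiv ℝ G (Function.update θ₀ i x) (Pi.single i 1)) x := by
    intro x
    exact ((hG.differentiable one_ne_zero) _).hasFDerivAt.comp_hasDerivAt x
      (hasDerivAt_update θ₀ i x)
  unfold circ
  rw [← intervalIntegral.integral_of_le (by positivity),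
    intervalIntegral.integral_eq_sub_of_hasDerivAt (fun x _ => hd x)]
  · rw [per, sub_self]
  · apply Continuous.intervalIntegrable
    exact hc.comp (continuous_const.update i continuous_id)

/-- Generic points of the torus: distinct cosines and nonvanishing sines. -/
def Gen {n : ℕ} (θ : Fin n → ℝ) : Prop :=
  (∀ i j, i ≠ j → Real.cos (θ i) ≠ Real.cos (θ j)) ∧ ∀ i, Real.sin (θ i) ≠ 0

lemma cos_countable (c : ℝ) : {s : ℝ | Real.cos s = c}.Countable := by
  have h := Set.countable_range (fun p : ℤ × Bool =>
    2 * (p.1 : ℝ) * Real.pi + (if p.2 then Real.arccos c else - Real.arccos c))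
  refine h.mono ?_
  intro s hs
  simp only [Set.mem_ofPred_eq] at hs
  have h1 : Real.cos (Real.arccos c) = Real.cos s := by
    rw [Real.cos_arccos (hs ▸ Real.neg_one_le_cos s) (hs ▸ Real.cos_le_one s), hs]
  rcases (Real.cos_eq_cos_iff).1 h1 with ⟨k, hk | hk⟩
  · exact ⟨(k, true), by simp [hk]⟩
  · exact ⟨(k, false), by simp [hk, sub_eq_add_neg]⟩

lemma dense_coord {n : ℕ} (i : Fin n) (S : Set (Fin n → ℝ))
    (h : ∀ θ, {s : ℝ | Function.update θ i s ∉ S}.Countable) : Dense S := by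
  intro θ
  have h1 := (h θ).dense_compl ℝ (θ i)
  have hc : Continuous fun s => Function.update θ i s := continuous_const.update i continuous_id
  have h2 := hc.continuousAt.continuousWithinAt.mem_closure_image h1
  rw [Function.update_eq_self] at h2
  refine closure_mono ?_ h2
  rintro _ ⟨s, hs, rfl⟩
  simpa using hs

lemma dense_gen (n : ℕ) : Dense {θ : Fin n → ℝ | Gen θ} := by
  have h1 : Dense (⋂ p : {p : Fin n × Fin n // p.1 ≠ p.2},
      {θ : Fin n → ℝ | Real.cos (θ p.1.1) ≠ Real.cos (θ p.1.2)}) := by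
    apply dense_iInter_of_isOpen
    · intro p
      exact isOpen_ne_fun (by fun_prop) (by fun_prop)
    · rintro ⟨⟨i, j⟩, hij⟩
      refine dense_coord i _ fun θ => (cos_countable (Real.cos (θ j))).mono ?_
      intro s hs
      simpa [Function.update_of_ne (Ne.symm hij)] using hs
  have h2 : Dense (⋂ i : Fin n, {θ : Fin n → ℝ | Real.sin (θ i) ≠ 0}) := by
    apply dense_iInter_of_isOpen
    · intro p
      exact isOpen_ne_fun (by fun_prop) (by fun_prop)
    · intro i
      refine dense_coord i _ fun θ => ((cos_countable 1).union (cos_countable (-1))).mono ?_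
      intro s hs
      have : Real.sin s = 0 := by simpa using hs
      exact Real.sin_eq_zero_iff_cos_eq.1 this
  have h3 := h1.inter_of_isOpen_left h2 (isOpen_iInter_of_finite fun p =>
    isOpen_ne_fun (by fun_prop) (by fun_prop))
  refine h3.mono ?_
  rintro θ ⟨ha, hb⟩
  simp only [Set.mem_iInter] at ha hb
  exact ⟨fun i j hij => ha ⟨(i, j), hij⟩, fun i => hb i⟩

/-- Continuous functions on the torus are determined by their values at generic points. -/
lemma eq_of_gen {n : ℕ} {E : Type*} [TopologicalSpace E] [T2Space E] {f g : (Fin n → ℝ) → E}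
    (hf : Continuous f) (hg : Continuous g) (h : ∀ θ, Gen θ → f θ = g θ) : f = g :=
  Continuous.ext_on (dense_gen n) hf hg h

/-- Logarithmic derivatives add up under products. -/
lemma hasDerivAt_prod_log {ι : Type*} (S : Finset ι) (F : ι → ℝ → ℝ) (L : ι → ℝ) (x : ℝ)
    (h : ∀ i ∈ S, HasDerivAt (F i) (F i x * L i) x) :
    HasDerivAt (fun y => ∏ i ∈ S, F i y) ((∏ i ∈ S, F i x) * ∑ i ∈ S, L i) x := by
  classical
  induction S using Finset.induction_on with
  | empty => simpa using hasDerivAt_const x (1 : ℝ)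
  | insert a S ha ih =>
    simp only [Finset.prod_insert ha, Finset.sum_insert ha]
    refine ((h a (by simp)).mul (ih fun i hi => h i (by simp [hi]))).congr_deriv ?_
    ring

lemma alt_stair_sq (n : ℕ) : ∃ c : ℝ, c ≠ 0 ∧ ∀ z : Fin n → ℝ,
    alt (stair n) z ^ 2 = c * ∏ i, ∏ j ∈ {i}ᶜ, (z j - z i) := by
  have hdet : ∀ z : Fin n → ℝ, alt (stair n) z ^ 2 = (∏ i, ∏ j ∈ Finset.Ioi i, (z j - z i)) ^ 2 := by
    intro z
    rw [← Matrix.det_vandermonde]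
    have : (Matrix.of fun i j => z i ^ stair n j) =
        (Matrix.vandermonde z).submatrix id (Fin.revPerm) := by
      ext i j
      simp only [of_apply, stair, submatrix_apply, id, vandermonde_apply, Fin.revPerm_apply,
        Fin.val_rev]
      congr 1; omega
    rw [alt, this, Matrix.det_permute', mul_pow]
    rw [← Int.cast_pow, ← Units.val_pow_eq_pow_val]
    simp
  refine ⟨∏ i : Fin n, ∏ j ∈ Finset.Ioi i, (-1), ?_, fun z => ?_⟩
  · simp [Finset.prod_ne_zero_iff]
  · rw [hdet, ← Finset.prod_prod_Ioi_mul_eq_prod_prod_off_diag (fun j i => z j - z i),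
      ← Finset.prod_mul_distrib, ← Finset.prod_pow]
    refine Finset.prod_congr rfl fun i _ => ?_
    rw [← Finset.prod_mul_distrib, ← Finset.prod_pow]
    refine Finset.prod_congr rfl fun j _ => ?_
    ring

lemma alt_stair_ne_zero {n : ℕ} {z : Fin n → ℝ} (hz : ∀ i j, i ≠ j → z i ≠ z j) :
    alt (stair n) z ^ 2 ≠ 0 := by
  obtain ⟨c, hc, h⟩ := alt_stair_sq n
  rw [h]
  refine mul_ne_zero hc (Finset.prod_ne_zero_iff.2 fun i _ => Finset.prod_ne_zero_iff.2 fun j hj => ?_)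
  exact sub_ne_zero.2 (hz _ _ (by simpa using hj))

/-- Logarithmic derivative of the squared Vandermonde determinant in the `i`-th variable. The
term `k = i` of the sum is `1 / 0 = 0`. -/
lemma hasDerivAt_alt_sq {n : ℕ} (i : Fin n) (z : ℝ → Fin n → ℝ) (t z' : ℝ)
    (hz : ∀ k, HasDerivAt (fun s => z s k) (if k = i then z' else 0) t)
    (hne : ∀ j k, j ≠ k → z t j ≠ z t k) :
    HasDerivAt (fun s => alt (stair n) (z s) ^ 2)
      (alt (stair n) (z t) ^ 2 * (2 * z' * ∑ k, 1 / (z t i - z t k))) t := by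
  obtain ⟨c, hc, h⟩ := alt_stair_sq n
  simp only [h]
  have h1 : ∀ a b, b ≠ a → HasDerivAt (fun s => z s b - z s a) ((z t b - z t a) *
      (((if b = i then z' else 0) - (if a = i then z' else 0)) / (z t b - z t a))) t := by
    intro a b hab
    refine ((hz b).sub (hz a)).congr_deriv ?_
    have := sub_ne_zero.2 (hne b a hab)
    field_simp
  have h2 := hasDerivAt_prod_log Finset.univ
    (fun a s => ∏ b ∈ ({a}ᶜ : Finset (Fin n)), (z s b - z s a)) _ t
    (fun a _ => hasDerivAt_prod_log ({a}ᶜ : Finset (Fin n)) (fun b s => z s b - z s a) _ t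
      fun b hb => h1 a b (by simpa using hb))
  refine (h2.const_mul c).congr_deriv ?_
  rw [mul_assoc]
  congr 2
  have h3 : ∀ a, ∑ b ∈ ({a}ᶜ : Finset (Fin n)),
      (((if b = i then z' else 0) - (if a = i then z' else 0)) / (z t b - z t a)) =
      ∑ b, (((if b = i then z' else 0) - (if a = i then z' else 0)) / (z t b - z t a)) := by
    intro a
    rw [← Finset.sum_compl_add_sum {a}]
    simp
  simp only [h3]
  simp only [sub_div, Finset.sum_sub_distrib, ite_div, zero_div, Finset.sum_ite_eq',
    Finset.mem_univ, if_true]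
  rw [Finset.sum_comm]
  simp only [Finset.sum_ite_eq', Finset.mem_univ, if_true]
  rw [← Finset.sum_sub_distrib, Finset.mul_sum]
  refine Finset.sum_congr rfl fun k _ => ?_
  rw [← neg_sub (z t i) (z t k), div_neg]
  ring

/-! ### The joint density and its loop equations -/

section

/-- The one-variable weight `∏_c (1 - s_c cos θ) · e^{t cos θ}`. -/
def om {κ : Type} [Fintype κ] (s : κ → ℝ) (t θ : ℝ) : ℝ :=
  (∏ c, (1 - s c * Real.cos θ)) * Real.exp (t * Real.cos θ)

/-- The joint density `V(cos θ)² ∏_i om s t θ_i` of the eigenangles. -/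
def wt {κ : Type} [Fintype κ] (n : ℕ) (s : κ → ℝ) (t : ℝ) (θ : Fin n → ℝ) : ℝ :=
  alt (stair n) (Real.cos ∘ θ) ^ 2 * ∏ i, om s t (θ i)

variable {κ : Type} [Fintype κ] {n : ℕ}

lemma contDiff_psum (k : ℕ) : ContDiff ℝ 1 (fun z : Fin n → ℝ => psum k z) := by
  unfold psum
  exact ContDiff.sum fun i _ => by fun_prop

lemma contDiff_wt (s : κ → ℝ) (t : ℝ) : ContDiff ℝ 1 (wt n s t) := by
  obtain ⟨c, _, h⟩ := alt_stair_sq n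
  unfold wt om
  simp only [h, Function.comp_apply]
  refine ContDiff.mul (contDiff_const.mul (contDiff_prod fun i _ => contDiff_prod fun j _ => ?_))
    (contDiff_prod fun i _ => (contDiff_prod fun c _ => ?_).mul ?_)
  · fun_prop
  · fun_prop
  · fun_prop

lemma one_sub_ne {x σ : ℝ} (hs : σ ^ 2 = 1) (hx : Real.sin x ≠ 0) : 1 - σ * Real.cos x ≠ 0 := by
  intro h
  apply hx
  have h1 := Real.sin_sq_add_cos_sq x
  have : Real.sin x ^ 2 = 0 := by
    have h2 : σ * Real.cos x = 1 := by linarith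
    have h3 : σ ^ 2 * Real.cos x ^ 2 = 1 := by rw [← mul_pow, h2, one_pow]
    rw [hs] at h3; linarith
  exact pow_eq_zero_iff two_ne_zero |>.1 this

lemma hasDerivAt_om (s : κ → ℝ) (hs : ∀ c, s c ^ 2 = 1) (t x : ℝ) (hx : Real.sin x ≠ 0) :
    HasDerivAt (om s t) (om s t x * (∑ c, s c * Real.sin x / (1 - s c * Real.cos x)
      - t * Real.sin x)) x := by
  have h1 := hasDerivAt_prod_log Finset.univ (fun c y => 1 - s c * Real.cos y)
    (fun c => s c * Real.sin x / (1 - s c * Real.cos x)) x (fun c _ => by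
      refine (((Real.hasDerivAt_cos x).const_mul (s c)).const_sub 1).congr_deriv ?_
      have := one_sub_ne (hs c) hx
      field_simp)
  have h2 : HasDerivAt (fun y => Real.exp (t * Real.cos y)) _ x :=
    ((Real.hasDerivAt_cos x).const_mul t).exp
  refine (h1.mul h2).congr_deriv ?_
  unfold om
  ring

/-- Logarithmic derivative of the joint density at a generic point. -/
lemma hasDerivAt_wt (s : κ → ℝ) (hs : ∀ c, s c ^ 2 = 1) (t : ℝ) (θ : Fin n → ℝ) (hθ : Gen θ)
    (i : Fin n) :
    HasDerivAt (fun x => wt n s t (Function.update θ i x))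
      (wt n s t θ * (2 * (-Real.sin (θ i)) * ∑ k, 1 / (Real.cos (θ i) - Real.cos (θ k))
        + (∑ c, s c * Real.sin (θ i) / (1 - s c * Real.cos (θ i)) - t * Real.sin (θ i)))) (θ i) := by
  have h1 := hasDerivAt_alt_sq i (fun x => Real.cos ∘ Function.update θ i x) (θ i)
    (-Real.sin (θ i)) (fun k => by
      by_cases hk : k = i
      · subst hk
        simpa using Real.hasDerivAt_cos (θ k)
      · simpa [Function.update_of_ne hk, hk] using hasDerivAt_const (θ i) (Real.cos (θ k)))
    (by simpa using hθ.1)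
  have h2 := hasDerivAt_prod_log Finset.univ (fun k x => om s t (Function.update θ i x k))
    (fun k => if k = i then (∑ c, s c * Real.sin (θ i) / (1 - s c * Real.cos (θ i))
      - t * Real.sin (θ i)) else 0) (θ i) (fun k _ => by
      by_cases hk : k = i
      · subst hk
        simpa using hasDerivAt_om s hs t (θ k) (hθ.2 k)
      · simpa [Function.update_of_ne hk, hk] using hasDerivAt_const (θ i) (om s t (θ k)))
  refine (h1.mul h2).congr_deriv ?_
  simp only [Function.update_eq_self, Finset.sum_ite_eq', Finset.mem_univ, if_true, wt,
    Function.comp_apply]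
  ring

lemma wt_update_period (s : κ → ℝ) (t : ℝ) (θ : Fin n → ℝ) (i : Fin n) :
    wt n s t (Function.update θ i (2 * Real.pi)) = wt n s t (Function.update θ i 0) := by
  have h : Real.cos ∘ (Function.update θ i (2 * Real.pi)) = Real.cos ∘ (Function.update θ i 0) := by
    rw [Function.comp_update, Function.comp_update]; simp
  have h' : ∀ k, Real.cos (Function.update θ i (2 * Real.pi) k) =
    Real.cos (Function.update θ i 0 k) := fun k => congrFun h k
  simp only [wt, h, om, h']

lemma fderiv_of_update {E : Type*} [NormedAddCommGroup E] [NormedSpace ℝ E]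
    {G : (Fin n → ℝ) → E} (hG : ContDiff ℝ 1 G) {θ : Fin n → ℝ} {i : Fin n} {g : E}
    (h : HasDerivAt (fun x => G (Function.update θ i x)) g (θ i)) :
    fderiv ℝ G θ (Pi.single i 1) = g := by
  have h1 := ((hG.differentiable one_ne_zero) (Function.update θ i (θ i))).hasFDerivAt.comp_hasDerivAt
    (θ i) (hasDerivAt_update θ i (θ i))
  rw [Function.update_eq_self] at h1
  exact h1.unique h

/-- Symmetrization of the two-body terms in the loop equations. -/
lemma loop_symm (z : Fin n → ℝ) (hz : ∀ i j, i ≠ j → z i ≠ z j) (a₀ a₁ : ℝ) :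
    2 * ∑ i, (a₀ + a₁ * z i) * (1 - z i ^ 2) * ∑ k, 1 / (z i - z k) =
      a₀ * (-2 * n * psum 1 z + 2 * psum 1 z)
        + a₁ * (n ^ 2 - n - 2 * n * psum 2 z - psum 1 z ^ 2 + 3 * psum 2 z) := by
  have h1 : ∑ i, (a₀ + a₁ * z i) * (1 - z i ^ 2) * ∑ k, 1 / (z i - z k) =
      ∑ i, ∑ k, (a₀ + a₁ * z i) * (1 - z i ^ 2) * (1 / (z i - z k)) := by
    simp only [Finset.mul_sum]
  have h2 : ∑ i, ∑ k, (a₀ + a₁ * z i) * (1 - z i ^ 2) * (1 / (z i - z k)) =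
      ∑ i, ∑ k, (a₀ + a₁ * z k) * (1 - z k ^ 2) * (1 / (z k - z i)) := Finset.sum_comm
  rw [two_mul, h1]
  nth_rewrite 2 [h2]
  rw [← Finset.sum_add_distrib]
  simp only [← Finset.sum_add_distrib]
  have h3 : ∀ i k, (a₀ + a₁ * z i) * (1 - z i ^ 2) * (1 / (z i - z k)) +
      (a₀ + a₁ * z k) * (1 - z k ^ 2) * (1 / (z k - z i)) =
      (-a₀ * (z i + z k) + a₁ * (1 - z i ^ 2 - z i * z k - z k ^ 2)) -
        (if k = i then (-2 * a₀ * z i + a₁ * (1 - 3 * z i ^ 2)) else 0) := by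
    intro i k
    by_cases h : k = i
    · subst h; simp; ring
    · rw [if_neg h]
      have h4 : z i - z k ≠ 0 := sub_ne_zero.2 (hz _ _ (Ne.symm h))
      rw [← neg_sub (z i) (z k), one_div_neg_eq_neg_one_div]
      field_simp
      ring
  simp only [h3, Finset.sum_sub_distrib, Finset.sum_ite_eq', Finset.mem_univ, if_true]
  simp only [psum, mul_add, mul_sub, Finset.sum_add_distrib, Finset.sum_sub_distrib, ← Finset.mul_sum,
    ← Finset.sum_mul, Finset.sum_const, Finset.card_univ, Fintype.card_fin, nsmul_eq_mul, pow_one]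
  ring

/-- The loop equations: the vector field `sin θ_i (a₀ + a₁ cos θ_i) Φ` is integrated by parts
against the joint density. -/
lemma loop (s : κ → ℝ) (hs : ∀ c, s c ^ 2 = 1) (t a₀ a₁ c₀ c₁ c₂ : ℝ) :
    hank circ n Real.cos (om s t) (fun z =>
      a₀ * (((2 * n - 1 + Fintype.card κ) * psum 1 z + n * ∑ c, s c - t * n + t * psum 2 z) *
          (c₀ + c₁ * psum 1 z + c₂ * psum 2 z)
          - (c₁ * (n - psum 2 z) + 2 * c₂ * (psum 1 z - psum 3 z)))
      + a₁ * (((2 * n - 1 + Fintype.card κ) * psum 2 z - n ^ 2 + psum 1 z ^ 2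
          + (∑ c, s c) * psum 1 z - t * psum 1 z + t * psum 3 z) *
          (c₀ + c₁ * psum 1 z + c₂ * psum 2 z)
          - (c₁ * (psum 1 z - psum 3 z) + 2 * c₂ * (psum 2 z - psum 4 z)))) = 0 := by
  set Φ : (Fin n → ℝ) → ℝ := fun θ =>
    c₀ + c₁ * psum 1 (Real.cos ∘ θ) + c₂ * psum 2 (Real.cos ∘ θ) with hΦ
  set G : Fin n → (Fin n → ℝ) → ℝ := fun i θ =>
    Real.sin (θ i) * (a₀ + a₁ * Real.cos (θ i)) * Φ θ * wt n s t θ with hGdef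
  have hcos : ContDiff ℝ 1 (fun θ : Fin n → ℝ => Real.cos ∘ θ) := by
    rw [contDiff_pi]; intro i; simp only [Function.comp_apply]; fun_prop
  have hp : ∀ k, ContDiff ℝ 1 (fun θ : Fin n → ℝ => psum k (Real.cos ∘ θ)) := fun k =>
    (contDiff_psum k).comp hcos
  have hΦc : ContDiff ℝ 1 Φ := by
    have h1 := hp 1
    have h2 := hp 2
    fun_prop
  have hGc : ∀ i, ContDiff ℝ 1 (G i) := by
    intro i
    refine ContDiff.mul (ContDiff.mul ?_ hΦc) (contDiff_wt s t)
    fun_prop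
  have hibp : ∀ i, ∫ θ, fderiv ℝ (G i) θ (Pi.single i 1) ∂tor n = 0 := by
    intro i
    refine ibp i (G i) (hGc i) fun θ => ?_
    simp [hGdef]
  have hfc : ∀ i, Continuous fun θ => fderiv ℝ (G i) θ (Pi.single i 1) := fun i =>
    ((hGc i).continuous_fderiv one_ne_zero).clm_apply continuous_const
  have hsum : ∫ θ, ∑ i, fderiv ℝ (G i) θ (Pi.single i 1) ∂tor n = 0 := by
    rw [integral_finsetSum _ fun i _ => integrable_tor (hfc i)]
    simp [hibp]
  rw [← hsum]
  unfold hank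
  change ∫ θ, _ ∂tor n = _
  congr 1
  -- by continuity the divergence may be computed at generic points only, where the logarithmic
  -- derivative of the density exists
  refine eq_of_gen ?_ ?_ ?_
  · refine Continuous.mul ?_ (contDiff_wt s t).continuous
    have h1 := (hp 1).continuous
    have h2 := (hp 2).continuous
    have h3 := (hp 3).continuous
    have h4 := (hp 4).continuous
    fun_prop
  · exact continuous_finsetSum _ fun i _ => hfc i
  · intro θ hθ
    have hpd : ∀ i k, HasDerivAt (fun x => psum (k + 1) (Real.cos ∘ Function.update θ i x))
        ((k + 1) * Real.cos (θ i) ^ k * (-Real.sin (θ i))) (θ i) := by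
      intro i k
      simp only [psum, Function.comp_apply]
      have h := HasDerivAt.fun_sum (u := Finset.univ) (x := θ i)
        (A := fun (j : Fin n) x => Real.cos (Function.update θ i x j) ^ (k + 1))
        (A' := fun j => if j = i then ((k + 1) * Real.cos (θ i) ^ k * (-Real.sin (θ i))) else 0)
        (fun j _ => by
          by_cases hj : j = i
          · subst hj
            simpa using (Real.hasDerivAt_cos (θ j)).fun_pow (k + 1)
          · simpa [Function.update_of_ne hj, hj] using
              hasDerivAt_const (θ i) (Real.cos (θ j) ^ (k + 1)))
      simpa using h
    have hder : ∀ i, fderiv ℝ (G i) θ (Pi.single i 1) = (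
        (Real.cos (θ i) * (a₀ + a₁ * Real.cos (θ i)) - a₁ * (1 - Real.cos (θ i) ^ 2)) * Φ θ
        - (1 - Real.cos (θ i) ^ 2) * (a₀ + a₁ * Real.cos (θ i)) * (c₁ + 2 * c₂ * Real.cos (θ i))
        + (a₀ + a₁ * Real.cos (θ i)) * Φ θ *
          (- 2 * (1 - Real.cos (θ i) ^ 2) * ∑ k, 1 / (Real.cos (θ i) - Real.cos (θ k))
            + (∑ c, s c + Fintype.card κ * Real.cos (θ i)) - t * (1 - Real.cos (θ i) ^ 2)))
        * wt n s t θ := by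
      intro i
      apply fderiv_of_update (hGc i)
      have hA : HasDerivAt (fun x => Real.sin (Function.update θ i x i) *
          (a₀ + a₁ * Real.cos (Function.update θ i x i)))
          (Real.cos (θ i) * (a₀ + a₁ * Real.cos (θ i)) + Real.sin (θ i) * (a₁ * (-Real.sin (θ i))))
          (θ i) := by
        simp only [Function.update_self]
        exact (Real.hasDerivAt_sin (θ i)).mul (((Real.hasDerivAt_cos (θ i)).const_mul a₁).const_add a₀)
      have hB : HasDerivAt (fun x => Φ (Function.update θ i x)) _ (θ i) :=
        (((hpd i 0).const_mul c₁).const_add c₀).add ((hpd i 1).const_mul c₂)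
      have hC := hasDerivAt_wt s hs t θ hθ i
      refine ((hA.mul hB).mul hC).congr_deriv ?_
      have hk : Real.sin (θ i) * ∑ c, s c * Real.sin (θ i) / (1 - s c * Real.cos (θ i)) =
          ∑ c, s c + Fintype.card κ * Real.cos (θ i) := by
        have : ∀ c, Real.sin (θ i) * (s c * Real.sin (θ i) / (1 - s c * Real.cos (θ i))) =
            s c + Real.cos (θ i) := by
          intro c
          have h1 := one_sub_ne (hs c) (hθ.2 i)
          have h2 := Real.sin_sq (θ i)
          have h3 := hs c
          rw [← mul_div_assoc, div_eq_iff h1]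
          linear_combination s c * h2 + Real.cos (θ i) * h3
        rw [Finset.mul_sum]
        simp only [this, Finset.sum_add_distrib, Finset.sum_const, Finset.card_univ, nsmul_eq_mul]
      simp only [Function.update_eq_self, Function.update_self, Pi.mul_apply, ← hk]
      push_cast
      have h2 := Real.sin_sq (θ i)
      rw [← h2]
      ring
    simp only [hder]
    rw [← Finset.sum_mul]
    change _ * wt n s t θ = _
    congr 1
    have hL := loop_symm (Real.cos ∘ θ) hθ.1 a₀ a₁
    simp only [Function.comp_apply] at hL
    have hcalc : ∑ i : Fin n, ((Real.cos (θ i) * (a₀ + a₁ * Real.cos (θ i)) -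
        a₁ * (1 - Real.cos (θ i) ^ 2)) * Φ θ
        - (1 - Real.cos (θ i) ^ 2) * (a₀ + a₁ * Real.cos (θ i)) * (c₁ + 2 * c₂ * Real.cos (θ i))
        + (a₀ + a₁ * Real.cos (θ i)) * Φ θ *
          (- 2 * (1 - Real.cos (θ i) ^ 2) * ∑ k, 1 / (Real.cos (θ i) - Real.cos (θ k))
            + (∑ c, s c + Fintype.card κ * Real.cos (θ i)) - t * (1 - Real.cos (θ i) ^ 2)))
        = ∑ i : Fin n, ((Real.cos (θ i) * (a₀ + a₁ * Real.cos (θ i)) -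
          a₁ * (1 - Real.cos (θ i) ^ 2)) * Φ θ
        - (1 - Real.cos (θ i) ^ 2) * (a₀ + a₁ * Real.cos (θ i)) * (c₁ + 2 * c₂ * Real.cos (θ i))
        + (a₀ + a₁ * Real.cos (θ i)) * Φ θ *
            ((∑ c, s c + Fintype.card κ * Real.cos (θ i)) - t * (1 - Real.cos (θ i) ^ 2)))
          - Φ θ * (2 * ∑ i, (a₀ + a₁ * Real.cos (θ i)) * (1 - Real.cos (θ i) ^ 2) *
            ∑ k, 1 / (Real.cos (θ i) - Real.cos (θ k))) := by
      rw [Finset.mul_sum, Finset.mul_sum, ← Finset.sum_sub_distrib]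
      refine Finset.sum_congr rfl fun i _ => ?_
      ring
    rw [hcalc, hL]
    have hp1 : ∑ i, Real.cos (θ i) = psum 1 (Real.cos ∘ θ) := by simp [psum]
    have hp2 : ∑ i, Real.cos (θ i) ^ 2 = psum 2 (Real.cos ∘ θ) := by simp [psum]
    have hp3 : ∑ i, Real.cos (θ i) ^ 3 = psum 3 (Real.cos ∘ θ) := by simp [psum]
    have hp4 : ∑ i, Real.cos (θ i) ^ 4 = psum 4 (Real.cos ∘ θ) := by simp [psum]
    have hpoly : ∀ b₀ b₁ b₂ b₃ b₄ : ℝ, ∑ i, (b₀ + b₁ * Real.cos (θ i) + b₂ * Real.cos (θ i) ^ 2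
        + b₃ * Real.cos (θ i) ^ 3 + b₄ * Real.cos (θ i) ^ 4) = b₀ * n + b₁ * psum 1 (Real.cos ∘ θ)
        + b₂ * psum 2 (Real.cos ∘ θ) + b₃ * psum 3 (Real.cos ∘ θ) + b₄ * psum 4 (Real.cos ∘ θ) := by
      intro b₀ b₁ b₂ b₃ b₄
      simp only [Finset.sum_add_distrib, ← Finset.mul_sum, hp1, hp2, hp3, hp4]
      simp [mul_comm]
    have hS : ∑ i : Fin n, ((Real.cos (θ i) * (a₀ + a₁ * Real.cos (θ i)) -
          a₁ * (1 - Real.cos (θ i) ^ 2)) * Φ θ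
        - (1 - Real.cos (θ i) ^ 2) * (a₀ + a₁ * Real.cos (θ i)) * (c₁ + 2 * c₂ * Real.cos (θ i))
        + (a₀ + a₁ * Real.cos (θ i)) * Φ θ *
            ((∑ c, s c + Fintype.card κ * Real.cos (θ i)) - t * (1 - Real.cos (θ i) ^ 2))) =
        ∑ i : Fin n, ((-a₁ * Φ θ - a₀ * c₁ + a₀ * Φ θ * (∑ c, s c - t))
          + (a₀ * Φ θ - (a₁ * c₁ + 2 * a₀ * c₂) + Φ θ * (a₀ * Fintype.card κ +
              a₁ * (∑ c, s c - t))) * Real.cos (θ i)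
          + (2 * a₁ * Φ θ - (2 * a₁ * c₂ - a₀ * c₁) + Φ θ * (a₁ * Fintype.card κ + a₀ * t))
              * Real.cos (θ i) ^ 2
          + ((a₁ * c₁ + 2 * a₀ * c₂) + Φ θ * a₁ * t) * Real.cos (θ i) ^ 3
          + (2 * a₁ * c₂) * Real.cos (θ i) ^ 4) :=
      Finset.sum_congr rfl fun i _ => by ring
    rw [hS, hpoly]
    simp only [hΦ]
    ring

end

/-! ### Moments of the eigenangles -/

section

variable {κ : Type} [Fintype κ] {n : ℕ}

/-- The expectation of `S (cos θ)` against the (unnormalized) joint density. -/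
def ev (n : ℕ) (s : κ → ℝ) (t : ℝ) (S : (Fin n → ℝ) → ℝ) : ℝ :=
  hank circ n Real.cos (om s t) S

lemma ev_eq (s : κ → ℝ) (t : ℝ) (S : (Fin n → ℝ) → ℝ) :
    ev n s t S = ∫ θ, S (Real.cos ∘ θ) * wt n s t θ ∂tor n := rfl

lemma wt_eq_exp (s : κ → ℝ) (t : ℝ) (θ : Fin n → ℝ) :
    wt n s t θ = wt n s 0 θ * Real.exp (t * psum 1 (Real.cos ∘ θ)) := by
  simp only [wt, om, psum, Finset.prod_mul_distrib, Function.comp_apply, pow_one]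
  rw [Finset.mul_sum, Real.exp_sum]
  simp [mul_assoc]

lemma continuous_cos_comp : Continuous fun θ : Fin n → ℝ => Real.cos ∘ θ := by
  refine continuous_pi fun i => ?_
  simp only [Function.comp_apply]; fun_prop

lemma integrable_ev (s : κ → ℝ) (t : ℝ) {S : (Fin n → ℝ) → ℝ} (hS : Continuous S) :
    Integrable (fun θ => S (Real.cos ∘ θ) * wt n s t θ) (tor n) :=
  integrable_tor ((hS.comp continuous_cos_comp).mul (contDiff_wt s t).continuous)

lemma ev_sum (s : κ → ℝ) (t : ℝ) {m : ℕ} (a : Fin m → ℝ) (S : Fin m → (Fin n → ℝ) → ℝ)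
    (hS : ∀ i, Continuous (S i)) :
    ev n s t (fun z => ∑ i, a i * S i z) = ∑ i, a i * ev n s t (S i) := by
  simp only [ev_eq, Finset.sum_mul, mul_assoc]
  rw [integral_finsetSum _ fun i _ => (integrable_ev s t (hS i)).const_mul (a i)]
  simp only [integral_const_mul]

@[fun_prop]
lemma continuous_psum (k : ℕ) : Continuous (fun z : Fin n → ℝ => psum k z) :=
  (contDiff_psum k).continuous

lemma hasDerivAt_ev (s : κ → ℝ) (t : ℝ) {S : (Fin n → ℝ) → ℝ} (hS : Continuous S) :
    HasDerivAt (fun t => ev n s t S) (ev n s t (fun z => psum 1 z * S z)) t := by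
  have he : ∀ t S, ev n s t S = ∫ θ, S (Real.cos ∘ θ) *
      (wt n s 0 θ * Real.exp (t * psum 1 (Real.cos ∘ θ))) ∂tor n := by
    intro t S
    rw [ev_eq]
    congr 1; funext θ
    rw [wt_eq_exp s t θ]
  simp only [he]
  have hp : Continuous fun θ : Fin n → ℝ => psum 1 (Real.cos ∘ θ) :=
    (continuous_psum 1).comp continuous_cos_comp
  have hS' : Continuous fun θ : Fin n → ℝ => S (Real.cos ∘ θ) := hS.comp continuous_cos_comp
  have hw : Continuous (wt n s 0) := (contDiff_wt s 0).continuous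
  refine (hasDerivAt_integral_of_dominated_loc_of_deriv_le (s := Metric.ball t 1)
    (F := fun t θ => S (Real.cos ∘ θ) * (wt n s 0 θ * Real.exp (t * psum 1 (Real.cos ∘ θ))))
    (F' := fun t θ => psum 1 (Real.cos ∘ θ) * S (Real.cos ∘ θ) *
      (wt n s 0 θ * Real.exp (t * psum 1 (Real.cos ∘ θ))))
    (bound := fun θ => |psum 1 (Real.cos ∘ θ) * S (Real.cos ∘ θ) * wt n s 0 θ| *
      Real.exp ((|t| + 1) * |psum 1 (Real.cos ∘ θ)|)) (Metric.ball_mem_nhds t one_pos)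
    ?_ ?_ ?_ ?_ ?_ ?_).2
  · refine Filter.Eventually.of_forall fun t => Continuous.aestronglyMeasurable ?_
    fun_prop
  · exact integrable_tor (by fun_prop)
  · exact Continuous.aestronglyMeasurable (by fun_prop)
  · refine Filter.Eventually.of_forall fun θ x hx => ?_
    rw [Real.norm_eq_abs, ← mul_assoc, abs_mul, Real.abs_exp]
    refine mul_le_mul_of_nonneg_left (Real.exp_le_exp.2 ?_) (abs_nonneg _)
    have h1 : |x| ≤ |t| + 1 := by
      have h2 := Metric.mem_ball.1 hx
      rw [Real.dist_eq] at h2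
      have := abs_sub_abs_le_abs_sub x t
      linarith
    calc x * psum 1 (Real.cos ∘ θ) ≤ |x * psum 1 (Real.cos ∘ θ)| := le_abs_self _
      _ = |x| * |psum 1 (Real.cos ∘ θ)| := abs_mul _ _
      _ ≤ _ := mul_le_mul_of_nonneg_right h1 (abs_nonneg _)
  · exact integrable_tor (by fun_prop)
  · refine Filter.Eventually.of_forall fun θ x _ => ?_
    refine ((((hasDerivAt_id x).mul_const (psum 1 (Real.cos ∘ θ))).exp.const_mul
      (wt n s 0 θ)).const_mul (S (Real.cos ∘ θ))).congr_deriv ?_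
    simp only [id]
    ring

lemma wt_nonneg (s : κ → ℝ) (hs : ∀ c, s c ^ 2 = 1) (t : ℝ) (θ : Fin n → ℝ) :
    0 ≤ wt n s t θ := by
  refine mul_nonneg (sq_nonneg _) (Finset.prod_nonneg fun i _ =>
    mul_nonneg (Finset.prod_nonneg fun c _ => ?_) (Real.exp_pos _).le)
  have h1 : |s c * Real.cos (θ i)| ≤ 1 := by
    rw [← sq_le_one_iff_abs_le_one, mul_pow, hs c, one_mul]
    exact Real.cos_sq_le_one _
  linarith [le_abs_self (s c * Real.cos (θ i))]

lemma wt_ne_zero (s : κ → ℝ) (hs : ∀ c, s c ^ 2 = 1) (t : ℝ) {θ : Fin n → ℝ} (hθ : Gen θ) :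
    wt n s t θ ≠ 0 := by
  refine mul_ne_zero (alt_stair_ne_zero hθ.1) (Finset.prod_ne_zero_iff.2 fun i _ =>
    mul_ne_zero (Finset.prod_ne_zero_iff.2 fun c _ => one_sub_ne (hs c) (hθ.2 i))
      (Real.exp_pos _).ne')

lemma ev_one_pos (s : κ → ℝ) (hs : ∀ c, s c ^ 2 = 1) (t : ℝ) : 0 < ev n s t (fun _ => 1) := by
  rw [ev_eq]
  simp only [one_mul]
  have hc : Continuous (wt n s t) := (contDiff_wt s t).continuous
  rw [integral_pos_iff_support_of_nonneg (wt_nonneg s hs t) (integrable_tor hc), tor_eq,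
    Measure.restrict_apply hc.isOpen_support.measurableSet]
  have hB : IsOpen (Set.univ.pi fun _ : Fin n => Set.Ioo 0 (2 * Real.pi)) :=
    isOpen_set_pi Set.finite_univ fun _ _ => isOpen_Ioo
  have hBn : (Set.univ.pi fun _ : Fin n => Set.Ioo 0 (2 * Real.pi)).Nonempty :=
    ⟨fun _ => Real.pi, fun _ _ => ⟨Real.pi_pos, by linarith [Real.pi_pos]⟩⟩
  obtain ⟨θ, hθ, hg⟩ := (dense_gen n).inter_open_nonempty _ hB hBn
  have hO : IsOpen (Function.support (wt n s t) ∩ Set.univ.pi fun _ : Fin n => Set.Ioo 0 (2 * Real.pi)) :=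
    hc.isOpen_support.inter hB
  refine (hO.measure_pos volume ⟨θ, wt_ne_zero s hs t hg, hθ⟩).trans_le (measure_mono ?_)
  exact Set.inter_subset_inter_right _ (Set.pi_mono fun _ _ => Set.Ioo_subset_Ioc_self)

/-- The loop equations and the bilinear (KP) relation, as relations between the moments. -/
lemma moments (s : κ → ℝ) (hs : ∀ c, s c ^ 2 = 1) (t : ℝ) :
    ∃ P₂ P₂₁ P₃ P₃₁ P₂₂ : ℝ, ∀ F : ℕ → ℝ, (∀ k, F k = ev n s t (fun z => psum 1 z ^ k)) →
    ∀ L σ : ℝ, L = 2 * n - 1 + Fintype.card κ → σ = ∑ c, s c →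
    L * F 1 + (n * σ - t * n) * F 0 + t * P₂ = 0 ∧
    L * F 2 + (n * σ - t * n) * F 1 + t * P₂₁ - n * F 0 + P₂ = 0 ∧
    L * P₂₁ + (n * σ - t * n) * P₂ + t * P₂₂ - 2 * F 1 + 2 * P₃ = 0 ∧
    L * P₂ - n ^ 2 * F 0 + F 2 + σ * F 1 - t * F 1 + t * P₃ = 0 ∧
    L * P₂₁ - n ^ 2 * F 1 + F 3 + σ * F 2 - t * F 2 + t * P₃₁ - F 1 + P₃ = 0 ∧
    (F 4 + 3 * P₂₂ - 4 * P₃₁) * F 0 - 4 * (F 3 - P₃) * F 1 + 3 * ((F 2 + P₂) * (F 2 - P₂)) = 0 := by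
  refine ⟨ev n s t (psum 2), ev n s t (fun z => psum 2 z * psum 1 z), ev n s t (psum 3),
    ev n s t (fun z => psum 3 z * psum 1 z), ev n s t (fun z => psum 2 z ^ 2), ?_⟩
  intro F hF L σ hL hσ
  have hl := fun a₀ a₁ c₀ c₁ c₂ => loop (n := n) s hs t a₀ a₁ c₀ c₁ c₂
  simp only [← hL, ← hσ] at hl
  change ∀ a₀ a₁ c₀ c₁ c₂ : ℝ, ev n s t _ = 0 at hl
  refine ⟨?_, ?_, ?_, ?_, ?_, ?_⟩
  · rw [← hl 1 0 1 0 0]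
    have := ev_sum (n := n) s t ![L, n * σ - t * n, t]
      ![fun z => psum 1 z ^ 1, fun z => psum 1 z ^ 0, psum 2] (by
        intro i; fin_cases i <;> simp <;> fun_prop)
    simp only [Fin.sum_univ_succ, Fin.sum_univ_zero] at this
    simp at this
    rw [hF, hF]
    simp
    rw [add_assoc, ← this]
    congr 1; funext z; ring
  · rw [← hl 1 0 0 1 0]
    have := ev_sum (n := n) s t ![L, n * σ - t * n, t, -n, 1]
      ![fun z => psum 1 z ^ 2, fun z => psum 1 z ^ 1, fun z => psum 2 z * psum 1 z,
        fun z => psum 1 z ^ 0, psum 2] (by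
        intro i; fin_cases i <;> simp <;> fun_prop)
    simp only [Fin.sum_univ_succ, Fin.sum_univ_zero] at this
    simp at this
    rw [hF, hF, hF]
    simp
    refine Eq.trans ?_ (this.symm.trans ?_)
    · ring
    · congr 1; funext z; ring
  · rw [← hl 1 0 0 0 1]
    have := ev_sum (n := n) s t ![L, n * σ - t * n, t, -2, 2]
      ![fun z => psum 2 z * psum 1 z, psum 2, fun z => psum 2 z ^ 2,
        fun z => psum 1 z ^ 1, psum 3] (by
        intro i; fin_cases i <;> simp <;> fun_prop)
    simp only [Fin.sum_univ_succ, Fin.sum_univ_zero] at this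
    simp at this
    rw [hF]
    simp
    refine Eq.trans ?_ (this.symm.trans ?_)
    · ring
    · congr 1; funext z; ring
  · rw [← hl 0 1 1 0 0]
    have := ev_sum (n := n) s t ![L, -n ^ 2, 1, σ - t, t]
      ![psum 2, fun z => psum 1 z ^ 0, fun z => psum 1 z ^ 2,
        fun z => psum 1 z ^ 1, psum 3] (by
        intro i; fin_cases i <;> simp <;> fun_prop)
    simp only [Fin.sum_univ_succ, Fin.sum_univ_zero] at this
    simp at this
    rw [hF, hF, hF]
    simp
    refine Eq.trans ?_ (this.symm.trans ?_)
    · ring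
    · congr 1; funext z; ring
  · rw [← hl 0 1 0 1 0]
    have := ev_sum (n := n) s t ![L, -n ^ 2 - 1, 1, σ - t, t, 1]
      ![fun z => psum 2 z * psum 1 z, fun z => psum 1 z ^ 1, fun z => psum 1 z ^ 3,
        fun z => psum 1 z ^ 2, fun z => psum 3 z * psum 1 z, psum 3] (by
        intro i; fin_cases i <;> simp <;> fun_prop)
    simp only [Fin.sum_univ_succ, Fin.sum_univ_zero] at this
    simp at this
    rw [hF, hF, hF]
    simp
    refine Eq.trans ?_ (this.symm.trans ?_)
    · ring
    · congr 1; funext z; ring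
  · have hk := kp circ n Real.cos (om s t) (fun k => by
      unfold circ
      refine Continuous.integrableOn_Ioc ?_
      unfold om
      fun_prop)
    change ev n s t _ * ev n s t _ - 4 * ev n s t _ * ev n s t _ +
      3 * (ev n s t _ * ev n s t _) = 0 at hk
    rw [← hk]
    have h1 := ev_sum (n := n) s t ![1, 3, -4]
      ![fun z => psum 1 z ^ 4, fun z => psum 2 z ^ 2, fun z => psum 3 z * psum 1 z] (by
        intro i; fin_cases i <;> simp <;> fun_prop)
    have h2 := ev_sum (n := n) s t ![1, -1] ![fun z => psum 1 z ^ 3, psum 3] (by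
        intro i; fin_cases i <;> simp <;> fun_prop)
    have h3 := ev_sum (n := n) s t ![1, 1] ![fun z => psum 1 z ^ 2, psum 2] (by
        intro i; fin_cases i <;> simp <;> fun_prop)
    have h4 := ev_sum (n := n) s t ![1, -1] ![fun z => psum 1 z ^ 2, psum 2] (by
        intro i; fin_cases i <;> simp <;> fun_prop)
    simp only [Fin.sum_univ_succ, Fin.sum_univ_zero] at h1 h2 h3 h4
    simp at h1 h2 h3 h4
    rw [hF, hF, hF, hF, hF]
    simp
    have e1 : ev n s t (fun z => psum 1 z ^ 4 + 3 * psum 2 z ^ 2 - 4 * (psum 1 z * psum 3 z)) =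
        ev n s t (fun z => psum 1 z ^ 4) + (3 * ev n s t (fun z => psum 2 z ^ 2) +
        -(4 * ev n s t (fun z => psum 3 z * psum 1 z))) := by
      rw [← h1]; congr 1; funext z; ring
    simp only [← sub_eq_add_neg] at h2 h4
    rw [e1, h2, h3, h4]
    ring

end

/-! ### Elimination and the differential equation -/

section

variable {κ : Type} [Fintype κ] {n : ℕ}

/-- The algebraic elimination: the moments of the power sums other than `p₁` are solved for in
turn from the loop equations, and the bilinear relation then is the differential equation. Here
`mₖ` are the normalized moments of `p₁` at `t = 2x`, the cumulants of `p₁` appear as derivatives. -/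
lemma elimination (N r σ L x m₁ m₂ m₃ m₄ q₂ q₂₁ q₃ q₃₁ q₂₂ : ℝ) (hx : x ≠ 0)
    (hc : (r = 0 ∧ σ = 0) ∨ (r = 1 ∧ σ = 1) ∨ (r = 1 ∧ σ = -1) ∨ (r = 2 ∧ σ = 0))
    (hL : L = 2 * N - 1 + r)
    (e₁ : L * m₁ + (N * σ - 2 * x * N) + 2 * x * q₂ = 0)
    (e₂ : L * m₂ + (N * σ - 2 * x * N) * m₁ + 2 * x * q₂₁ - N + q₂ = 0)
    (e₃ : L * q₂₁ + (N * σ - 2 * x * N) * q₂ + 2 * x * q₂₂ - 2 * m₁ + 2 * q₃ = 0)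
    (e₄ : L * q₂ - N ^ 2 + m₂ + σ * m₁ - 2 * x * m₁ + 2 * x * q₃ = 0)
    (e₅ : L * q₂₁ - N ^ 2 * m₁ + m₃ + σ * m₂ - 2 * x * m₂ + 2 * x * q₃₁ - m₁ + q₃ = 0)
    (e₆ : (m₄ + 3 * q₂₂ - 4 * q₃₁) - 4 * (m₃ - q₃) * m₁ + 3 * ((m₂ + q₂) * (m₂ - q₂)) = 0) :
    (24 * (m₃ - 3 * m₁ * m₂ + 2 * m₁ ^ 3)
        + 16 * x * (m₄ - 4 * m₁ * m₃ - 3 * m₂ ^ 2 + 12 * m₁ ^ 2 * m₂ - 6 * m₁ ^ 4))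
      + (1 / x) * (8 * (m₂ - m₁ ^ 2) + 8 * x * (m₃ - 3 * m₁ * m₂ + 2 * m₁ ^ 3))
      + (6 / x) * (σ + 2 * m₁ + 4 * x * (m₂ - m₁ ^ 2)) ^ 2
      - (4 / x ^ 2) * (x * (σ + 2 * m₁)) * (σ + 2 * m₁ + 4 * x * (m₂ - m₁ ^ 2))
      - ((16 * x ^ 2 + L ^ 2) / x ^ 2) * (σ + 2 * m₁ + 4 * x * (m₂ - m₁ ^ 2))
      + (16 / x) * (x * (σ + 2 * m₁)) + 2 * (L ^ 2 - 1) / x = 0 := by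
  have h₂ : q₂ = -(L * m₁ + (N * σ - 2 * x * N)) / (2 * x) := by
    field_simp; linear_combination e₁
  have h₂₁ : q₂₁ = -(L * m₂ + (N * σ - 2 * x * N) * m₁ - N + q₂) / (2 * x) := by
    field_simp; linear_combination e₂
  have h₃ : q₃ = -(L * q₂ - N ^ 2 + m₂ + σ * m₁ - 2 * x * m₁) / (2 * x) := by
    field_simp; linear_combination e₄
  have h₃₁ : q₃₁ = -(L * q₂₁ - N ^ 2 * m₁ + m₃ + σ * m₂ - 2 * x * m₂ - m₁ + q₃) / (2 * x) := by
    field_simp; linear_combination e₅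
  have h₂₂ : q₂₂ = -(L * q₂₁ + (N * σ - 2 * x * N) * q₂ - 2 * m₁ + 2 * q₃) / (2 * x) := by
    field_simp; linear_combination e₃
  have h₄ : m₄ = -(3 * q₂₂ - 4 * q₃₁) + 4 * (m₃ - q₃) * m₁ - 3 * ((m₂ + q₂) * (m₂ - q₂)) := by
    linear_combination e₆
  rw [h₄, h₂₂, h₃₁, h₃, h₂₁, h₂, hL]
  rcases hc with ⟨rfl, rfl⟩ | ⟨rfl, rfl⟩ | ⟨rfl, rfl⟩ | ⟨rfl, rfl⟩ <;> field_simp <;> ring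

/-- A function of the form `C e^{σx} F₀(2x)`, `F₀` the partition function of the eigenangles,
has the logarithmic derivative required by the differential equation. -/
lemma ode_of_partition (s : κ → ℝ) (hs : ∀ c, s c ^ 2 = 1) (ℓ : ℕ) (hℓ : 1 ≤ ℓ)
    (hn : 2 * n + Fintype.card κ = ℓ + 1)
    (hc : (Fintype.card κ = 0 ∧ ∑ c, s c = 0) ∨ (Fintype.card κ = 1 ∧ ∑ c, s c = 1) ∨
      (Fintype.card κ = 1 ∧ ∑ c, s c = -1) ∨ (Fintype.card κ = 2 ∧ ∑ c, s c = 0))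
    (C : ℝ) (hC : 0 < C) (E : ℝ → ℝ)
    (hE : ∀ x, E x = C * Real.exp ((∑ c, s c) * x) * ev n s (2 * x) (fun _ => 1))
    (f : ℝ → ℝ) (hf : ∀ x, f x = x * deriv (fun y => Real.log (E y)) x) :
    f 0 = 0 ∧ deriv f 0 = 0 ∧
    ∀ x : ℝ, x ≠ 0 →
      iteratedDeriv 3 f x + (1 / x) * iteratedDeriv 2 f x + (6 / x) * (deriv f x) ^ 2
        - (4 / x ^ 2) * f x * deriv f x - ((16 * x ^ 2 + (ℓ : ℝ) ^ 2) / x ^ 2) * deriv f x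
        + (16 / x) * f x + 2 * ((ℓ : ℝ) ^ 2 - 1) / x = 0 := by
  set σ := ∑ c, s c with hσ
  set F : ℕ → ℝ → ℝ := fun k t => ev n s t (fun z => psum 1 z ^ k) with hF
  have hF0 : ∀ t, 0 < F 0 t := by
    intro t
    simpa [hF] using ev_one_pos (n := n) s hs t
  have hFd : ∀ k t, HasDerivAt (F k) (F (k + 1) t) t := by
    intro k t
    have h := hasDerivAt_ev (n := n) s t (S := fun z => psum 1 z ^ k) (by fun_prop)
    simpa only [hF, pow_succ'] using h
  -- normalized moments of `p₁`; the derivatives of `f` are expressed through their cumulants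
  set m : ℕ → ℝ → ℝ := fun k x => F k (2 * x) / F 0 (2 * x) with hm
  have hmd : ∀ k x, HasDerivAt (m k) (2 * (m (k + 1) x - m k x * m 1 x)) x := by
    intro k x
    have h2 : HasDerivAt (fun x : ℝ => 2 * x) 2 x := by
      simpa using (hasDerivAt_id x).const_mul 2
    have ha : HasDerivAt (fun x => F k (2 * x)) _ x := (hFd k (2 * x)).comp x h2
    have hb : HasDerivAt (fun x => F 0 (2 * x)) _ x := (hFd 0 (2 * x)).comp x h2
    refine (ha.div hb (hF0 _).ne').congr_deriv ?_
    have := (hF0 (2 * x)).ne'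
    simp only [hm]
    field_simp
  have hlog : ∀ x, HasDerivAt (fun y => Real.log (E y)) (σ + 2 * m 1 x) x := by
    intro x
    have he : (fun y => Real.log (E y)) = fun y => Real.log C + σ * y + Real.log (F 0 (2 * y)) := by
      funext y
      have h0 := hF0 (2 * y)
      have : ev n s (2 * y) (fun _ => 1) = F 0 (2 * y) := by simp [hF]
      rw [hE, this, Real.log_mul (mul_pos hC (Real.exp_pos _)).ne' h0.ne',
        Real.log_mul hC.ne' (Real.exp_pos _).ne', Real.log_exp]
    rw [he]
    have h2 : HasDerivAt (fun x : ℝ => 2 * x) 2 x := by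
      simpa using (hasDerivAt_id x).const_mul 2
    have hb : HasDerivAt (fun x => F 0 (2 * x)) _ x := (hFd 0 (2 * x)).comp x h2
    refine ((((hasDerivAt_id x).const_mul σ).const_add (Real.log C)).add
      (hb.log (hF0 _).ne')).congr_deriv ?_
    simp only [hm]
    ring_nf
  have hfe : f = fun x => x * (σ + 2 * m 1 x) := by
    funext x
    rw [hf, (hlog x).deriv]
  have d1 : deriv f = fun x => σ + 2 * m 1 x + 4 * x * (m 2 x - m 1 x ^ 2) := by
    funext x
    rw [hfe]
    refine HasDerivAt.deriv (((hasDerivAt_id x).mul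
      (((hmd 1 x).const_mul 2).const_add σ)).congr_deriv ?_)
    simp only [id]; ring
  have d2 : iteratedDeriv 2 f = fun x => 8 * (m 2 x - m 1 x ^ 2)
      + 8 * x * (m 3 x - 3 * m 1 x * m 2 x + 2 * m 1 x ^ 3) := by
    rw [iteratedDeriv_succ, iteratedDeriv_one, d1]
    funext x
    refine HasDerivAt.deriv (((((hmd 1 x).const_mul 2).const_add σ).add
      (((hasDerivAt_id x).const_mul 4).mul
        ((hmd 2 x).sub ((hmd 1 x).fun_pow 2)))).congr_deriv ?_)
    simp only [id, Pi.mul_apply, Pi.add_apply, Pi.sub_apply]; push_cast; ring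
  have d3 : iteratedDeriv 3 f = fun x => 24 * (m 3 x - 3 * m 1 x * m 2 x + 2 * m 1 x ^ 3)
      + 16 * x * (m 4 x - 4 * m 1 x * m 3 x - 3 * m 2 x ^ 2 + 12 * m 1 x ^ 2 * m 2 x
        - 6 * m 1 x ^ 4) := by
    rw [iteratedDeriv_succ, d2]
    funext x
    refine HasDerivAt.deriv (((((hmd 2 x).sub ((hmd 1 x).fun_pow 2)).const_mul 8).add
      (((hasDerivAt_id x).const_mul 8).mul (((hmd 3 x).sub
        (((hmd 1 x).const_mul 3).mul (hmd 2 x))).add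
          (((hmd 1 x).fun_pow 3).const_mul 2)))).congr_deriv ?_)
    simp only [id, Pi.mul_apply, Pi.add_apply, Pi.sub_apply]; push_cast; ring
  have hL : (ℓ : ℝ) = 2 * n - 1 + Fintype.card κ := by
    have : (2 * n + Fintype.card κ : ℝ) = ℓ + 1 := by exact_mod_cast hn
    linarith
  have hmom : ∀ x, ∃ q₂ q₂₁ q₃ q₃₁ q₂₂ : ℝ,
    ℓ * m 1 x + (n * σ - 2 * x * n) + 2 * x * q₂ = 0 ∧
    ℓ * m 2 x + (n * σ - 2 * x * n) * m 1 x + 2 * x * q₂₁ - n + q₂ = 0 ∧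
    ℓ * q₂₁ + (n * σ - 2 * x * n) * q₂ + 2 * x * q₂₂ - 2 * m 1 x + 2 * q₃ = 0 ∧
    ℓ * q₂ - n ^ 2 + m 2 x + σ * m 1 x - 2 * x * m 1 x + 2 * x * q₃ = 0 ∧
    ℓ * q₂₁ - n ^ 2 * m 1 x + m 3 x + σ * m 2 x - 2 * x * m 2 x + 2 * x * q₃₁ - m 1 x + q₃ = 0 ∧
    (m 4 x + 3 * q₂₂ - 4 * q₃₁) - 4 * (m 3 x - q₃) * m 1 x
      + 3 * ((m 2 x + q₂) * (m 2 x - q₂)) = 0 := by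
    intro x
    obtain ⟨P₂, P₂₁, P₃, P₃₁, P₂₂, hP⟩ := moments (n := n) s hs (2 * x)
    obtain ⟨e1, e2, e3, e4, e5, e6⟩ := hP (fun k => F k (2 * x)) (fun k => rfl) ℓ σ hL hσ
    have h0 := (hF0 (2 * x)).ne'
    refine ⟨P₂ / F 0 (2 * x), P₂₁ / F 0 (2 * x), P₃ / F 0 (2 * x), P₃₁ / F 0 (2 * x),
      P₂₂ / F 0 (2 * x), ?_, ?_, ?_, ?_, ?_, ?_⟩ <;> simp only [hm] <;> field_simp
    · linear_combination e1
    · linear_combination e2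
    · linear_combination e3
    · linear_combination e4
    · linear_combination e5
    · linear_combination e6
  have hℓ' : (ℓ : ℝ) ≠ 0 := by positivity
  refine ⟨by simp [hfe], ?_, fun x hx => ?_⟩
  · rw [d1]
    -- at `x = 0` the first loop equation determines the mean of `p₁`
    obtain ⟨q₂, _, _, _, _, e1, _⟩ := hmom 0
    simp only [mul_zero, zero_mul, sub_zero, add_zero] at e1 ⊢
    have : (ℓ : ℝ) * (σ + 2 * m 1 0) = 0 := by
      have e2 : (ℓ : ℝ) * (σ + 2 * m 1 0) = σ * (ℓ - 2 * n) := by linear_combination 2 * e1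
      rw [e2, hL]
      rcases hc with ⟨h1, h2⟩ | ⟨h1, h2⟩ | ⟨h1, h2⟩ | ⟨h1, h2⟩ <;> rw [h1, h2] <;> push_cast <;> ring
    exact (mul_eq_zero.1 this).resolve_left hℓ'
  · obtain ⟨q₂, q₂₁, q₃, q₃₁, q₂₂, e1, e2, e3, e4, e5, e6⟩ := hmom x
    rw [d3, d2, d1, hfe]
    refine elimination n (Fintype.card κ) σ ℓ x _ _ _ _ q₂ q₂₁ q₃ q₃₁ q₂₂ hx ?_ hL e1 e2 e3 e4 e5 e6
    rcases hc with ⟨h1, h2⟩ | ⟨h1, h2⟩ | ⟨h1, h2⟩ | ⟨h1, h2⟩ <;> rw [h1, h2] <;> simp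

end

/-! ### The orthogonal group -/

/-- The orthogonal group `O(m)`. -/
abbrev Om (m : ℕ) := Matrix.orthogonalGroup (Fin m) ℝ

instance (m : ℕ) : BorelSpace (Om m) := ⟨rfl⟩

instance (m : ℕ) : SecondCountableTopology (Om m) := by
  have : SecondCountableTopology (Matrix (Fin m) (Fin m) ℝ) :=
    inferInstanceAs (SecondCountableTopology (Fin m → Fin m → ℝ))
  exact TopologicalSpace.Subtype.secondCountableTopology _

instance (m : ℕ) : CompactSpace (Om m) := by
  refine isCompact_iff_compactSpace.1 (?_ : IsCompact
    (Matrix.orthogonalGroup (Fin m) ℝ : Set (Matrix (Fin m) (Fin m) ℝ)))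
  have hK : IsCompact (Set.univ.pi fun _ : Fin m => Set.univ.pi fun _ : Fin m =>
      Set.Icc (-1 : ℝ) 1) :=
    isCompact_univ_pi fun _ => isCompact_univ_pi fun _ => isCompact_Icc
  have hcl : IsClosed {M : Matrix (Fin m) (Fin m) ℝ | M * Mᵀ = 1} :=
    isClosed_eq (by fun_prop) continuous_const
  refine IsCompact.of_isClosed_subset (s := (Set.univ.pi fun _ : Fin m => Set.univ.pi
    fun _ : Fin m => Set.Icc (-1 : ℝ) 1 : Set (Matrix (Fin m) (Fin m) ℝ))) hK ?_ ?_
  · have : (Matrix.orthogonalGroup (Fin m) ℝ : Set (Matrix (Fin m) (Fin m) ℝ)) =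
        {M : Matrix (Fin m) (Fin m) ℝ | M * Mᵀ = 1} :=
      Set.ext fun M => Matrix.mem_orthogonalGroup_iff (Fin m) ℝ
    rw [this]
    exact hcl
  · intro M hM i _ j _
    have := entry_norm_bound_of_unitary (𝕜 := ℝ) (U := M) hM i j
    exact abs_le.1 this

lemma Om.mul_transpose {m : ℕ} (U : Om m) :
    (U : Matrix (Fin m) (Fin m) ℝ) * (U : Matrix _ _ ℝ)ᵀ = 1 :=
  (Matrix.mem_orthogonalGroup_iff (Fin m) ℝ).1 U.2

lemma Om.transpose_mul {m : ℕ} (U : Om m) :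
    (U : Matrix (Fin m) (Fin m) ℝ)ᵀ * (U : Matrix _ _ ℝ) = 1 :=
  (Matrix.mem_orthogonalGroup_iff' (Fin m) ℝ).1 U.2

/-- A continuous function is integrable for a finite measure carried by a compact set. -/
lemma integrable_of_compact {X E : Type*} [TopologicalSpace X] [MeasurableSpace X]
    [OpensMeasurableSpace X] [SecondCountableTopology X] [NormedAddCommGroup E]
    [SecondCountableTopology E]
    {τ : Measure X} [IsFiniteMeasure τ] {K : Set X} (hK : IsCompact K) (hτ : ∀ᵐ x ∂τ, x ∈ K)
    {f : X → E} (hf : Continuous f) : Integrable f τ := by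
  obtain ⟨C, hC⟩ := hK.exists_bound_of_continuousOn hf.continuousOn
  refine Integrable.of_bound ?_ C (hτ.mono fun x hx => hC x hx)
  borelize E
  exact (hf.measurable.aemeasurable).aestronglyMeasurable

lemma integrable_O {m : ℕ} {μ : Measure (Om m)} [IsFiniteMeasure μ] {E : Type*}
    [NormedAddCommGroup E] [SecondCountableTopology E] {f : Om m → E} (hf : Continuous f) :
    Integrable f μ :=
  integrable_of_compact isCompact_univ (by simp) hf

/-- Fubini for a continuous integrand over a compact interval. -/
lemma swap_interval {X : Type*} [TopologicalSpace X] [MeasurableSpace X]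
    [OpensMeasurableSpace X] [SecondCountableTopology X]
    {τ : Measure X} [IsFiniteMeasure τ] {K : Set X} (hK : IsCompact K) (hτ : ∀ᵐ x ∂τ, x ∈ K)
    {f : ℝ → X → ℂ} (hf : Continuous (Function.uncurry f)) (a b : ℝ) :
    ∫ x in a..b, ∫ y, f x y ∂τ = ∫ y, (∫ x in a..b, f x y) ∂τ := by
  refine intervalIntegral_integral_swap ?_
  have : IsFiniteMeasure (volume.restrict (Set.uIoc a b)) :=
    ⟨by rw [Measure.restrict_apply_univ, Set.uIoc]; exact measure_Ioc_lt_top⟩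
  refine integrable_of_compact (K := Set.uIcc a b ×ˢ K) (isCompact_uIcc.prod hK) ?_ hf
  have h1 : ∀ᵐ x ∂(volume.restrict (Set.uIoc a b)), x ∈ Set.uIcc a b :=
    (ae_restrict_mem measurableSet_uIoc).mono fun x hx => Set.uIoc_subset_uIcc hx
  filter_upwards [Measure.quasiMeasurePreserving_fst.ae h1,
    Measure.quasiMeasurePreserving_snd.ae hτ] with x h1 h2 using ⟨h1, h2⟩

/-! ### Entrywise calculus -/

/-- Entrywise differentiability of a curve of matrices. -/
def MD {p q : Type*} (M : ℝ → Matrix p q ℂ) (M' : Matrix p q ℂ) (x : ℝ) : Prop :=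
  ∀ i j, HasDerivAt (fun y => M y i j) (M' i j) x

lemma MD.const {p q : Type*} (M : Matrix p q ℂ) (x : ℝ) : MD (fun _ => M) 0 x :=
  fun i j => hasDerivAt_const x (M i j)

lemma MD.mul {p q r : Type*} [Fintype q] {M : ℝ → Matrix p q ℂ} {M' : Matrix p q ℂ}
    {N : ℝ → Matrix q r ℂ} {N' : Matrix q r ℂ} {x : ℝ} (hM : MD M M' x) (hN : MD N N' x) :
    MD (fun y => M y * N y) (M' * N x + M x * N') x := by
  intro i j
  simp only [Matrix.mul_apply, Matrix.add_apply, ← Finset.sum_add_distrib]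
  exact HasDerivAt.fun_sum fun k _ => (hM i k).mul (hN k j)

lemma MD.transpose {p q : Type*} {M : ℝ → Matrix p q ℂ} {M' : Matrix p q ℂ} {x : ℝ}
    (hM : MD M M' x) : MD (fun y => (M y)ᵀ) M'ᵀ x := fun i j => hM j i

lemma MD.trace {p : Type*} [Fintype p] {M : ℝ → Matrix p p ℂ} {M' : Matrix p p ℂ} {x : ℝ}
    (hM : MD M M' x) : HasDerivAt (fun y => (M y).trace) M'.trace x := by
  simp only [Matrix.trace, Matrix.diag]
  exact HasDerivAt.fun_sum fun k _ => hM k k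

lemma MD.const_mul {p q r : Type*} [Fintype q] (N : Matrix p q ℂ) {M : ℝ → Matrix q r ℂ}
    {M' : Matrix q r ℂ} {x : ℝ} (hM : MD M M' x) : MD (fun y => N * M y) (N * M') x := by
  have := (MD.const N x).mul hM
  simpa using this

lemma MD.mul_const {p q r : Type*} [Fintype q] (N : Matrix q r ℂ) {M : ℝ → Matrix p q ℂ}
    {M' : Matrix p q ℂ} {x : ℝ} (hM : MD M M' x) : MD (fun y => M y * N) (M' * N) x := by
  have := hM.mul (MD.const N x)
  simpa using this

/-- Complexification of a real matrix. -/
def mC {p q : Type*} (M : Matrix p q ℝ) : Matrix p q ℂ := M.map Complex.ofReal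

lemma mC_mul {p q r : Type*} [Fintype q] (M : Matrix p q ℝ) (N : Matrix q r ℝ) :
    mC (M * N) = mC M * mC N := Matrix.map_mul (f := Complex.ofRealHom)

lemma mC_one {p : Type*} [DecidableEq p] : mC (1 : Matrix p p ℝ) = 1 := by
  simp [mC]

lemma mC_transpose {p q : Type*} (M : Matrix p q ℝ) : mC Mᵀ = (mC M)ᵀ := rfl

lemma mC_trace {p : Type*} [Fintype p] (M : Matrix p p ℝ) : (mC M).trace = (M.trace : ℂ) := by
  simp [mC, Matrix.trace]

/-! ### Infinitesimal left invariance -/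

/-- The infinitesimal rotation in the `(p, q)` coordinate plane. -/
def genE {m : ℕ} (p q : Fin m) : Matrix (Fin m) (Fin m) ℝ := single p q 1 - single q p 1

/-- The rotation by the angle `x` in the `(p, q)` coordinate plane. -/
def givens {m : ℕ} (p q : Fin m) (x : ℝ) : Matrix (Fin m) (Fin m) ℝ :=
  1 + Real.sin x • genE p q + (Real.cos x - 1) • (single p p 1 + single q q 1)

lemma genE_mul_genE {m : ℕ} {p q : Fin m} (h : p ≠ q) :
    genE p q * genE p q = -(single p p 1 + single q q 1) := by
  simp [genE, sub_mul, mul_sub, h, h.symm]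
  abel

lemma genE_mul_P {m : ℕ} {p q : Fin m} (h : p ≠ q) :
    genE p q * (single p p 1 + single q q 1) = genE p q := by
  simp [genE, sub_mul, mul_add, h, h.symm]
  abel

lemma P_mul_genE {m : ℕ} {p q : Fin m} (h : p ≠ q) :
    (single p p 1 + single q q 1) * genE p q = genE p q := by
  simp [genE, mul_sub, add_mul, h, h.symm]

lemma P_mul_P {m : ℕ} {p q : Fin m} (h : p ≠ q) :
    (single p p 1 + single q q 1 : Matrix (Fin m) (Fin m) ℝ) * (single p p 1 + single q q 1) =
      single p p 1 + single q q 1 := by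
  simp [mul_add, add_mul, h, h.symm]

lemma genE_transpose {m : ℕ} (p q : Fin m) : (genE p q)ᵀ = - genE p q := by
  simp [genE, transpose_sub]

lemma givens_mem {m : ℕ} {p q : Fin m} (h : p ≠ q) (x : ℝ) :
    givens p q x ∈ Matrix.orthogonalGroup (Fin m) ℝ := by
  rw [Matrix.mem_orthogonalGroup_iff]
  have ht : (givens p q x)ᵀ = 1 - Real.sin x • genE p q +
      (Real.cos x - 1) • (single p p 1 + single q q 1) := by
    simp only [givens, transpose_add, transpose_smul, genE_transpose, transpose_one,
      transpose_single]
    simp [sub_eq_add_neg]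
  rw [ht, givens]
  have h1 := genE_mul_genE h
  have h2 := genE_mul_P h
  have h3 := P_mul_genE h
  have h4 := P_mul_P h
  set P : Matrix (Fin m) (Fin m) ℝ := single p p 1 + single q q 1
  set E : Matrix (Fin m) (Fin m) ℝ := genE p q
  simp only [add_mul, mul_add, mul_sub, one_mul, mul_one, smul_mul_assoc, mul_smul_comm, h1, h2, h3, h4]
  have h5 := Real.sin_sq_add_cos_sq x
  simp only [smul_neg]
  match_scalars <;> first | ring1 | linear_combination h5

/-- The one-parameter subgroup of rotations in the `(p, q)` coordinate plane. -/
def givensO {m : ℕ} {p q : Fin m} (h : p ≠ q) (x : ℝ) : Om m := ⟨givens p q x, givens_mem h x⟩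

lemma continuous_givensO {m : ℕ} {p q : Fin m} (h : p ≠ q) : Continuous (givensO h) := by
  refine Continuous.subtype_mk ?_ _
  unfold givens
  fun_prop

lemma MD_givens {m : ℕ} {p q : Fin m} (h : p ≠ q) (x : ℝ) :
    MD (fun y => mC (givens p q y)) (mC (genE p q) * mC (givens p q x)) x := by
  rw [← mC_mul]
  have h1 : genE p q * givens p q x = Real.cos x • genE p q -
      Real.sin x • (single p p 1 + single q q 1) := by
    rw [givens, mul_add, mul_add, mul_one, mul_smul_comm, mul_smul_comm, genE_mul_genE h, genE_mul_P h]
    module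
  intro i j
  rw [h1]
  simp only [mC, Matrix.map_apply]
  refine HasDerivAt.ofReal_comp ?_
  simp only [givens, Matrix.add_apply, Matrix.sub_apply, Matrix.smul_apply, smul_eq_mul]
  refine ((((Real.hasDerivAt_sin x).mul_const _).const_add _).add
    (((Real.hasDerivAt_cos x).sub_const 1).mul_const _)).congr_deriv ?_
  ring

/-! ### Frames and the conjugated matrices -/

/-- A basis of `ℂ^m` (the columns of `A`) stable under complex conjugation, which acts on the
index set by the involution `bar`, and whose dual basis for the bilinear form `∑ i, x i * y i` is
the conjugate one.  This is the shape of an eigenbasis of a real orthogonal matrix. -/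
structure Frame (m : ℕ) (I : Type) [Fintype I] [DecidableEq I] where
  /-- The action of complex conjugation on indices. -/
  bar : I → I
  bar_bar : ∀ a, bar (bar a) = a
  /-- The matrix whose columns are the basis vectors. -/
  A : Matrix (Fin m) I ℂ
  mul_dual : A * (Matrix.of fun a i => A i (bar a)) = 1
  dual_mul : (Matrix.of fun a i => A i (bar a)) * A = 1
  conj_A : ∀ i a, (starRingEnd ℂ) (A i a) = A i (bar a)

lemma integral_comb {m : ℕ} {μ : Measure (Om m)} [IsFiniteMeasure μ] {f g h : Om m → ℂ}
    (hf : Continuous f) (hg : Continuous g) (hh : Continuous h) (k : ℂ) :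
    ∫ U, (f U - g U + k * h U) ∂μ = ∫ U, f U ∂μ - ∫ U, g U ∂μ + k * ∫ U, h U ∂μ := by
  rw [integral_add (f := fun U => f U - g U) ((integrable_O hf).sub (integrable_O hg)) ((integrable_O hh).const_mul k),
    integral_sub (integrable_O hf) (integrable_O hg), integral_const_mul]

namespace Frame

variable {m : ℕ} {I : Type} [Fintype I] [DecidableEq I] (Φ : Frame m I)

/-- The matrix whose rows form the dual basis. -/
def dual : Matrix I (Fin m) ℂ := Matrix.of fun a i => Φ.A i (Φ.bar a)

lemma dual_apply (a : I) (i : Fin m) : Φ.dual a i = Φ.A i (Φ.bar a) := rfl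

lemma A_dual : Φ.A * Φ.dual = 1 := Φ.mul_dual

lemma dual_A : Φ.dual * Φ.A = 1 := Φ.dual_mul

/-- The matrix of `U K Uᵀ` in the frame. -/
def hat (U : Om m) (K : Matrix (Fin m) (Fin m) ℂ) : Matrix I I ℂ :=
  Φ.dual * (mC (U : Matrix (Fin m) (Fin m) ℝ) * K * (mC (U : Matrix (Fin m) (Fin m) ℝ))ᵀ) * Φ.A

lemma mC_transpose_mul (U : Om m) :
    (mC (U : Matrix (Fin m) (Fin m) ℝ))ᵀ * mC (U : Matrix (Fin m) (Fin m) ℝ) = 1 := by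
  rw [← mC_transpose, ← mC_mul, Om.transpose_mul, mC_one]

lemma mC_mul_transpose (U : Om m) :
    mC (U : Matrix (Fin m) (Fin m) ℝ) * (mC (U : Matrix (Fin m) (Fin m) ℝ))ᵀ = 1 := by
  rw [← mC_transpose, ← mC_mul, Om.mul_transpose, mC_one]

lemma hat_mul (U : Om m) (K L : Matrix (Fin m) (Fin m) ℂ) :
    Φ.hat U (K * L) = Φ.hat U K * Φ.hat U L := by
  unfold hat
  set V := mC (U : Matrix (Fin m) (Fin m) ℝ)
  have h1 := Φ.A_dual
  have h2 : Vᵀ * V = 1 := mC_transpose_mul U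
  calc Φ.dual * (V * (K * L) * Vᵀ) * Φ.A
      = Φ.dual * (V * K * (1 : Matrix _ _ ℂ) * L * Vᵀ) * Φ.A := by
        simp only [Matrix.mul_one, Matrix.mul_assoc]
    _ = Φ.dual * (V * K * (Vᵀ * 1 * V) * L * Vᵀ) * Φ.A := by
        rw [Matrix.mul_one Vᵀ, h2]
    _ = _ := by
        rw [← h1]
        simp only [Matrix.mul_assoc]

lemma flip_transpose (X : Matrix (Fin m) (Fin m) ℂ) (a b : I) :
    (Φ.dual * Xᵀ * Φ.A) a b = (Φ.dual * X * Φ.A) (Φ.bar b) (Φ.bar a) := by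
  simp only [Matrix.mul_apply, dual_apply, Φ.bar_bar, Finset.sum_mul, Matrix.transpose_apply]
  rw [Finset.sum_comm]
  refine Finset.sum_congr rfl fun i _ => Finset.sum_congr rfl fun j _ => ?_
  ring

/-- Transposition of a real operator becomes a flip combined with conjugation of indices. -/
lemma hat_transpose (U : Om m) (K : Matrix (Fin m) (Fin m) ℂ) (a b : I) :
    Φ.hat U Kᵀ a b = Φ.hat U K (Φ.bar b) (Φ.bar a) := by
  unfold hat
  rw [← Φ.flip_transpose]
  simp only [Matrix.transpose_mul, Matrix.transpose_transpose, Matrix.mul_assoc]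

lemma continuous_mC : Continuous fun U : Om m => mC (U : Matrix (Fin m) (Fin m) ℝ) :=
  (continuous_subtype_val).matrix_map Complex.continuous_ofReal

lemma continuous_hat (K : Matrix (Fin m) (Fin m) ℂ) : Continuous fun U => Φ.hat U K := by
  unfold hat
  have := continuous_mC (m := m)
  fun_prop

lemma continuous_hat_apply (K : Matrix (Fin m) (Fin m) ℂ) (a b : I) :
    Continuous fun U => Φ.hat U K a b :=
  (Φ.continuous_hat K).matrix_elem a b

/-! ### Ward identities -/

/-- The exponential weight `exp (tr (D Q̂))`. -/
def wexp (D : Matrix I I ℂ) (Q : Matrix (Fin m) (Fin m) ℂ) (U : Om m) : ℂ :=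
  Complex.exp (D * Φ.hat U Q).trace

lemma continuous_wexp (D : Matrix I I ℂ) (Q : Matrix (Fin m) (Fin m) ℂ) :
    Continuous (Φ.wexp D Q) := by
  unfold wexp
  have := Φ.continuous_hat Q
  fun_prop

/-- The derivative of `B̂ c e * exp (tr (D Q̂))` along the left-invariant direction `F`, without
the exponential factor, as a linear function of `F` (written in the frame). -/
def wlin (D : Matrix I I ℂ) (B Q : Matrix (Fin m) (Fin m) ℂ) (c e : I) (U : Om m) :
    Matrix I I ℂ →ₗ[ℂ] ℂ where
  toFun F := (F * Φ.hat U B - Φ.hat U B * F) c e +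
    Φ.hat U B c e * (D * (F * Φ.hat U Q - Φ.hat U Q * F)).trace
  map_add' F G := by
    simp only [Matrix.add_mul, Matrix.mul_add, Matrix.mul_sub, Matrix.add_apply, Matrix.sub_apply,
      Matrix.trace_add, Matrix.trace_sub]
    ring
  map_smul' k F := by
    simp only [Matrix.smul_mul, Matrix.mul_smul, Matrix.mul_sub, Matrix.smul_apply,
      Matrix.sub_apply, Matrix.trace_smul, Matrix.trace_sub, smul_eq_mul, RingHom.id_apply]
    ring

lemma wlin_apply (D : Matrix I I ℂ) (B Q : Matrix (Fin m) (Fin m) ℂ) (c e : I) (U : Om m)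
    (F : Matrix I I ℂ) : Φ.wlin D B Q c e U F = (F * Φ.hat U B - Φ.hat U B * F) c e +
    Φ.hat U B c e * (D * (F * Φ.hat U Q - Φ.hat U Q * F)).trace := rfl

lemma continuous_wlin (D : Matrix I I ℂ) (B Q : Matrix (Fin m) (Fin m) ℂ) (c e : I)
    (F : Matrix I I ℂ) : Continuous fun U => Φ.wlin D B Q c e U F := by
  simp only [wlin_apply]
  have h1 := Φ.continuous_hat Q
  have h2 := Φ.continuous_hat B
  have h3 := Φ.continuous_hat_apply B c e
  refine Continuous.add ?_ (h3.mul ?_)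
  · exact Continuous.matrix_elem (by fun_prop) c e
  · fun_prop

lemma MD_hat {p q : Fin m} (h : p ≠ q) (U : Om m) (K : Matrix (Fin m) (Fin m) ℂ) (x : ℝ) :
    MD (fun y => Φ.hat (givensO h y * U) K)
      (Φ.dual * mC (genE p q) * Φ.A * Φ.hat (givensO h x * U) K -
        Φ.hat (givensO h x * U) K * (Φ.dual * mC (genE p q) * Φ.A)) x := by
  have hg : ∀ y, mC ((givensO h y * U : Om m) : Matrix (Fin m) (Fin m) ℝ) =
      mC (givens p q y) * mC (U : Matrix (Fin m) (Fin m) ℝ) := fun y => by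
    rw [← mC_mul]; rfl
  have h1 : MD (fun y => mC ((givensO h y * U : Om m) : Matrix (Fin m) (Fin m) ℝ))
      (mC (genE p q) * mC ((givensO h x * U : Om m) : Matrix (Fin m) (Fin m) ℝ)) x := by
    simp only [hg, ← Matrix.mul_assoc]
    exact (MD_givens h x).mul_const _
  have h2 := (((h1.mul_const K).mul h1.transpose).const_mul Φ.dual).mul_const Φ.A
  unfold hat
  convert h2 using 1
  set V := mC ((givensO h x * U : Om m) : Matrix (Fin m) (Fin m) ℝ)
  set E := mC (genE p q)
  have hE : Eᵀ = -E := by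
    simp only [E]
    rw [← mC_transpose, genE_transpose]
    ext i j
    simp [mC]
  have hA := Φ.A_dual
  rw [Matrix.transpose_mul, hE, Matrix.mul_add, Matrix.add_mul, sub_eq_add_neg]
  congr 1
  · calc Φ.dual * E * Φ.A * (Φ.dual * (V * K * Vᵀ) * Φ.A)
        = Φ.dual * E * (Φ.A * Φ.dual) * (V * K * Vᵀ) * Φ.A := by
          simp only [Matrix.mul_assoc]
      _ = _ := by
          rw [hA]; simp only [Matrix.mul_assoc, Matrix.one_mul]
  · calc -(Φ.dual * (V * K * Vᵀ) * Φ.A * (Φ.dual * E * Φ.A))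
        = -(Φ.dual * (V * K * Vᵀ) * (Φ.A * Φ.dual) * E * Φ.A) := by
          simp only [Matrix.mul_assoc]
      _ = _ := by
          rw [hA]; simp only [Matrix.mul_assoc, Matrix.one_mul, Matrix.mul_neg, Matrix.neg_mul]

/-- Left invariance of Haar measure under the rotations in a coordinate plane. -/
lemma ward_genE (μ : Measure (Om m)) [IsProbabilityMeasure μ] [μ.IsMulLeftInvariant]
    (D : Matrix I I ℂ) (B Q : Matrix (Fin m) (Fin m) ℂ) (c e : I) {p q : Fin m} (h : p ≠ q) :
    ∫ U, Φ.wlin D B Q c e U (Φ.dual * mC (genE p q) * Φ.A) * Φ.wexp D Q U ∂μ = 0 := by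
  set E := Φ.dual * mC (genE p q) * Φ.A
  set G : Om m → ℂ := fun U => Φ.wlin D B Q c e U E * Φ.wexp D Q U with hG
  have hGc : Continuous G := (Φ.continuous_wlin D B Q c e E).mul (Φ.continuous_wexp D Q)
  have hcont : Continuous (Function.uncurry fun (x : ℝ) (U : Om m) => G (givensO h x * U)) := by
    refine hGc.comp ?_
    exact ((continuous_givensO h).comp continuous_fst).mul continuous_snd
  have hper : givensO h (2 * Real.pi) = givensO h 0 := by
    apply Subtype.ext
    simp [givensO, givens]
  have hzero : ∀ U, ∫ x in (0 : ℝ)..(2 * Real.pi), G (givensO h x * U) = 0 := by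
    intro U
    have hd : ∀ x : ℝ, HasDerivAt (fun y => Φ.hat (givensO h y * U) B c e *
        Φ.wexp D Q (givensO h y * U)) (G (givensO h x * U)) x := by
      intro x
      have hB := Φ.MD_hat h U B x c e
      have hQ := ((Φ.MD_hat h U Q x).const_mul D).trace.cexp
      refine (hB.mul hQ).congr_deriv ?_
      simp only [hG, wlin_apply, wexp, E]
      ring
    rw [intervalIntegral.integral_eq_sub_of_hasDerivAt (fun x _ => hd x)]
    · rw [hper]; ring
    · exact (hcont.comp (by fun_prop : Continuous fun x : ℝ => (x, U))).intervalIntegrable _ _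
  have hsw := swap_interval (τ := μ) isCompact_univ (by simp) hcont 0 (2 * Real.pi)
  simp only [hzero, integral_zero] at hsw
  simp only [integral_mul_left_eq_self G] at hsw
  rw [intervalIntegral.integral_const, sub_zero, smul_eq_zero] at hsw
  rcases hsw with h0 | h0
  · exact absurd h0 (by positivity)
  · exact h0

/-- Invariance of Haar measure under a complex combination of infinitesimal rotations. -/
lemma ward_antisymm (μ : Measure (Om m)) [IsProbabilityMeasure μ] [μ.IsMulLeftInvariant]
    (D : Matrix I I ℂ) (B Q : Matrix (Fin m) (Fin m) ℂ) (c e : I) (Y : Matrix (Fin m) (Fin m) ℂ)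
    (hY : Yᵀ = -Y) :
    ∫ U, Φ.wlin D B Q c e U (Φ.dual * Y * Φ.A) * Φ.wexp D Q U ∂μ = 0 := by
  have hsum : Y = ∑ p, ∑ q, (Y p q / 2) • mC (genE p q) := by
    have h1 := matrix_eq_sum_single Y
    have h2 : Yᵀ = ∑ p, ∑ q, single q p (Y p q) := by
      conv_lhs => rw [h1]
      simp only [Matrix.transpose_sum, transpose_single]
    have h3 : ∀ p q, (Y p q / 2) • mC (genE p q) =
        (1 / 2 : ℂ) • single p q (Y p q) - (1 / 2 : ℂ) • single q p (Y p q) := by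
      intro p q
      have : mC (genE p q) = single p q 1 - single q p 1 := by
        ext i j
        simp only [mC, genE, Matrix.map_apply, Matrix.sub_apply, Matrix.single_apply]
        split_ifs <;> simp
      rw [this, smul_sub, smul_single, smul_single, smul_single, smul_single]
      simp [div_eq_inv_mul]
    simp only [h3, Finset.sum_sub_distrib, ← Finset.smul_sum, ← h1, ← h2, hY]
    module
  have hF : Φ.dual * Y * Φ.A =
      ∑ p, ∑ q, (Y p q / 2) • (Φ.dual * mC (genE p q) * Φ.A) := by
    conv_lhs => rw [hsum]
    simp only [Matrix.mul_sum, Matrix.sum_mul, Matrix.mul_smul, Matrix.smul_mul]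
  have hintg : ∀ p q, Integrable (fun U => Y p q / 2 *
      (Φ.wlin D B Q c e U (Φ.dual * mC (genE p q) * Φ.A) * Φ.wexp D Q U)) μ := fun p q =>
    integrable_O (continuous_const.mul ((Φ.continuous_wlin D B Q c e _).mul
      (Φ.continuous_wexp D Q)))
  have hpt : ∀ U, Φ.wlin D B Q c e U (Φ.dual * Y * Φ.A) * Φ.wexp D Q U = ∑ p, ∑ q, Y p q / 2 *
      (Φ.wlin D B Q c e U (Φ.dual * mC (genE p q) * Φ.A) * Φ.wexp D Q U) := by
    intro U
    rw [hF]
    simp only [map_sum, map_smul, Finset.sum_mul, smul_eq_mul, mul_assoc]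
  simp only [hpt]
  rw [integral_finsetSum _ fun p _ => integrable_finsetSum _ fun q _ => hintg p q]
  refine Finset.sum_eq_zero fun p _ => ?_
  rw [integral_finsetSum _ fun q _ => hintg p q]
  refine Finset.sum_eq_zero fun q _ => ?_
  rw [integral_const_mul]
  by_cases hpq : p = q
  · have : mC (genE p q) = 0 := by
      ext i j
      simp [mC, genE, hpq]
    simp [this]
  · rw [Φ.ward_genE μ D B Q c e hpq, mul_zero]

/-- Invariance under the infinitesimal rotation `single a b 1 - single b' a' 1` of the frame,
tested against the matrix entry `B̂ a b`. -/
lemma ward (μ : Measure (Om m)) [IsProbabilityMeasure μ] [μ.IsMulLeftInvariant]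
    (d : I → ℂ) (hd : ∀ a, d a * d (Φ.bar a) = 1) (B Q : Matrix (Fin m) (Fin m) ℂ) (a b : I)
    (hab : b ≠ Φ.bar a) :
    (d a - d b) * ∫ U, Φ.hat U B a b * (Φ.hat U Q b a -
        d (Φ.bar a) * d (Φ.bar b) * Φ.hat U Q (Φ.bar a) (Φ.bar b)) * Φ.wexp (diagonal d) Q U ∂μ =
      ∫ U, Φ.hat U B a a * Φ.wexp (diagonal d) Q U ∂μ -
        ∫ U, Φ.hat U B b b * Φ.wexp (diagonal d) Q U ∂μ := by
  set F : Matrix I I ℂ := single a b 1 - single (Φ.bar b) (Φ.bar a) 1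
  have hab' : a ≠ Φ.bar b := fun h => hab (by rw [h, Φ.bar_bar])
  have hFlip : (Φ.A * F * Φ.dual)ᵀ = - (Φ.A * F * Φ.dual) := by
    ext i j
    simp only [F, Matrix.mul_sub, Matrix.sub_mul, Matrix.transpose_apply, Matrix.neg_apply,
      Matrix.sub_apply, Matrix.mul_apply, Matrix.single_apply, mul_ite, mul_one, mul_zero,
      dual_apply, ite_and, Finset.sum_ite_eq, Finset.mem_univ, if_true, ite_mul, zero_mul]
    simp only [Φ.bar_bar]
    ring
  have hF : Φ.dual * (Φ.A * F * Φ.dual) * Φ.A = F := by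
    calc _ = (Φ.dual * Φ.A) * F * (Φ.dual * Φ.A) := by simp only [Matrix.mul_assoc]
      _ = F := by rw [Φ.dual_A, Matrix.one_mul, Matrix.mul_one]
  have hw := Φ.ward_antisymm μ (diagonal d) B Q a b _ hFlip
  rw [hF] at hw
  have h1 : (d a - d b) * (d (Φ.bar a) * d (Φ.bar b)) = d (Φ.bar b) - d (Φ.bar a) := by
    linear_combination d (Φ.bar b) * hd a - d (Φ.bar a) * hd b
  have hpt : ∀ U, Φ.wlin (diagonal d) B Q a b U F = (Φ.hat U B b b - Φ.hat U B a a) +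
      (d a - d b) * (Φ.hat U B a b * (Φ.hat U Q b a -
        d (Φ.bar a) * d (Φ.bar b) * Φ.hat U Q (Φ.bar a) (Φ.bar b))) := by
    intro U
    rw [wlin_apply]
    generalize Φ.hat U B = X
    generalize Φ.hat U Q = Z
    simp only [F, Matrix.mul_sub, Matrix.sub_mul, Matrix.sub_apply,
      Matrix.trace, Matrix.diag, Matrix.diagonal_mul]
    simp only [Matrix.mul_apply, Matrix.single_apply, mul_ite, mul_one, mul_zero, ite_and,
      Finset.sum_ite_eq, Finset.mem_univ, if_true, ite_mul, zero_mul, one_mul,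
      hab.symm, hab'.symm, if_false, Finset.sum_const_zero, Finset.sum_ite_irrel]
    simp only [mul_sub, Finset.sum_sub_distrib, mul_ite, mul_zero, Finset.sum_ite_eq,
      Finset.mem_univ, if_true]
    linear_combination (X a b * Z (Φ.bar a) (Φ.bar b)) * h1
  have hc : ∀ a b, Continuous fun U => Φ.hat U B a b := Φ.continuous_hat_apply B
  have hc' : ∀ a b, Continuous fun U => Φ.hat U Q a b := Φ.continuous_hat_apply Q
  have hce := Φ.continuous_wexp (diagonal d) Q
  have hpt' : ∀ U, Φ.wlin (diagonal d) B Q a b U F * Φ.wexp (diagonal d) Q U =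
      (Φ.hat U B b b * Φ.wexp (diagonal d) Q U - Φ.hat U B a a * Φ.wexp (diagonal d) Q U) +
      (d a - d b) * (Φ.hat U B a b * (Φ.hat U Q b a -
        d (Φ.bar a) * d (Φ.bar b) * Φ.hat U Q (Φ.bar a) (Φ.bar b)) *
          Φ.wexp (diagonal d) Q U) := by
    intro U
    rw [hpt]; ring
  simp only [hpt'] at hw
  have hw' := (integral_comb ((hc b b).mul hce) ((hc a a).mul hce) (((hc a b).mul ((hc' b a).sub
    ((continuous_const (y := d (Φ.bar a) * d (Φ.bar b))).mul
      (hc' (Φ.bar a) (Φ.bar b))))).mul hce) (d a - d b)).symm.trans hw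
  simp only [Pi.mul_apply, Pi.sub_apply] at hw'
  linear_combination hw'

end Frame

/-! ### Summation of the Ward identities -/

namespace Frame

variable {m : ℕ} {I : Type} [Fintype I] [DecidableEq I] (Φ : Frame m I)

/-- Conjugation of indices as a permutation. -/
def barE : Equiv.Perm I := Function.Involutive.toPerm Φ.bar Φ.bar_bar

lemma hat_antisymm {B : Matrix (Fin m) (Fin m) ℂ} (hB : Bᵀ = -B) (U : Om m) (a b : I) :
    Φ.hat U B (Φ.bar b) (Φ.bar a) = - Φ.hat U B a b := by
  rw [← Φ.hat_transpose, hB]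
  simp [hat]

/-- The sum of `(d a + d b) / (d a - d b)` over the indices `b` other than `a` and its
conjugate. -/
def cotSum (d : I → ℂ) (a : I) : ℂ :=
  ∑ b, if b = a ∨ b = Φ.bar a then 0 else (d a + d b) / (d a - d b)

/-- The variation of the exponent, antisymmetrized so as to involve the combinations of entries
that occur in `ward`. -/
lemma two_trace (d : I → ℂ) (hd : ∀ a, d a * d (Φ.bar a) = 1) {B : Matrix (Fin m) (Fin m) ℂ}
    (hB : Bᵀ = -B) (Q : Matrix (Fin m) (Fin m) ℂ) (U : Om m) :
    2 * (diagonal d * (Φ.hat U Q * Φ.hat U B)).trace = ∑ a, ∑ b, d b * (Φ.hat U B a b *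
      (Φ.hat U Q b a - d (Φ.bar a) * d (Φ.bar b) * Φ.hat U Q (Φ.bar a) (Φ.bar b))) := by
  have hanti := fun a b => Φ.hat_antisymm hB U a b
  set X := Φ.hat U B
  set Z := Φ.hat U Q
  have h1 : (diagonal d * (Z * X)).trace = ∑ a, ∑ b, d b * (Z b a * X a b) := by
    simp only [Matrix.trace, Matrix.diag, Matrix.diagonal_mul]
    simp only [Matrix.mul_apply, Finset.mul_sum]
    rw [Finset.sum_comm]
  have h2 : (diagonal d * (Z * X)).trace = ∑ a, ∑ b,
      -(d (Φ.bar a) * (Z (Φ.bar a) (Φ.bar b) * X a b)) := by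
    rw [h1, Finset.sum_comm, ← Equiv.sum_comp Φ.barE]
    refine Finset.sum_congr rfl fun a _ => ?_
    rw [← Equiv.sum_comp Φ.barE]
    refine Finset.sum_congr rfl fun b _ => ?_
    change d (Φ.bar a) * (Z (Φ.bar a) (Φ.bar b) * X (Φ.bar b) (Φ.bar a)) = _
    rw [hanti]; ring
  rw [two_mul]
  nth_rewrite 1 [h1]
  rw [h2, ← Finset.sum_add_distrib]
  refine Finset.sum_congr rfl fun a _ => ?_
  rw [← Finset.sum_add_distrib]
  refine Finset.sum_congr rfl fun b _ => ?_
  linear_combination (X a b * Z (Φ.bar a) (Φ.bar b) * d (Φ.bar a)) * hd b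

/-- The Ward identities summed over all pairs of indices: the off-diagonal entries are
eliminated in favour of the diagonal ones. -/
lemma core_angles (μ : Measure (Om m)) [IsProbabilityMeasure μ] [μ.IsMulLeftInvariant]
    (d : I → ℂ) (hd : ∀ a, d a * d (Φ.bar a) = 1) (hinj : Function.Injective d)
    {B : Matrix (Fin m) (Fin m) ℂ} (hB : Bᵀ = -B) (Q : Matrix (Fin m) (Fin m) ℂ) :
    2 * ∫ U, (diagonal d * (Φ.hat U Q * Φ.hat U B)).trace * Φ.wexp (diagonal d) Q U ∂μ =
      ∑ a, ∫ U, Φ.hat U B a a * (Φ.cotSum d a + (d a * Φ.hat U Q a a -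
        d (Φ.bar a) * Φ.hat U Q (Φ.bar a) (Φ.bar a))) * Φ.wexp (diagonal d) Q U ∂μ := by
  have hc : ∀ a b, Continuous fun U => Φ.hat U B a b := Φ.continuous_hat_apply B
  have hc' : ∀ a b, Continuous fun U => Φ.hat U Q a b := Φ.continuous_hat_apply Q
  have hce := Φ.continuous_wexp (diagonal d) Q
  set β : I → ℂ := fun a => ∫ U, Φ.hat U B a a * Φ.wexp (diagonal d) Q U ∂μ with hβ
  set j : I → I → Om m → ℂ := fun a b U => Φ.hat U B a b * (Φ.hat U Q b a -
        d (Φ.bar a) * d (Φ.bar b) * Φ.hat U Q (Φ.bar a) (Φ.bar b)) * Φ.wexp (diagonal d) Q U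
    with hj
  have hjc : ∀ a b, Continuous (j a b) := fun a b =>
    ((hc a b).mul ((hc' b a).sub (continuous_const.mul (hc' _ _)))).mul hce
  set J : I → I → ℂ := fun a b => ∫ U, j a b U ∂μ with hJ
  have hL : 2 * ∫ U, (diagonal d * (Φ.hat U Q * Φ.hat U B)).trace * Φ.wexp (diagonal d) Q U ∂μ =
      ∑ a, ∑ b, d b * J a b := by
    rw [← integral_const_mul]
    have : ∀ U, 2 * ((diagonal d * (Φ.hat U Q * Φ.hat U B)).trace * Φ.wexp (diagonal d) Q U) =
        ∑ a, ∑ b, d b * j a b U := by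
      intro U
      rw [← mul_assoc, Φ.two_trace d hd hB, Finset.sum_mul]
      refine Finset.sum_congr rfl fun a _ => ?_
      rw [Finset.sum_mul]
      refine Finset.sum_congr rfl fun b _ => ?_
      simp only [hj]
      ring
    simp only [this]
    have hi : ∀ a b, Integrable (fun U => d b * j a b U) μ := fun a b =>
      (integrable_O (hjc a b)).const_mul _
    rw [integral_finsetSum _ fun a _ => integrable_finsetSum _ fun b _ => hi a b]
    refine Finset.sum_congr rfl fun a _ => ?_
    rw [integral_finsetSum _ fun b _ => hi a b]
    exact Finset.sum_congr rfl fun b _ => integral_const_mul _ _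
  have hR : ∀ a, ∫ U, Φ.hat U B a a * (Φ.cotSum d a + (d a * Φ.hat U Q a a -
        d (Φ.bar a) * Φ.hat U Q (Φ.bar a) (Φ.bar a))) * Φ.wexp (diagonal d) Q U ∂μ =
      Φ.cotSum d a * β a + d a * J a a := by
    intro a
    have : ∀ U, Φ.hat U B a a * (Φ.cotSum d a + (d a * Φ.hat U Q a a -
        d (Φ.bar a) * Φ.hat U Q (Φ.bar a) (Φ.bar a))) * Φ.wexp (diagonal d) Q U =
        Φ.cotSum d a * (Φ.hat U B a a * Φ.wexp (diagonal d) Q U) + d a * j a a U := by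
      intro U
      simp only [hj]
      linear_combination (Φ.hat U B a a * Φ.wexp (diagonal d) Q U * d (Φ.bar a) *
        Φ.hat U Q (Φ.bar a) (Φ.bar a)) * hd a
    simp only [this]
    rw [integral_add ((integrable_O (f := fun U => Φ.hat U B a a * Φ.wexp (diagonal d) Q U)
        ((hc a a).mul hce)).const_mul _)
      ((integrable_O (hjc a a)).const_mul _), integral_const_mul, integral_const_mul]
  rw [hL]
  simp only [hR]
  set c : I → I → ℂ := fun a b => if b = a ∨ b = Φ.bar a then 0 else d b / (d a - d b) with hcdef
  have hterm : ∀ a b, d b * J a b = (if b = a then d a * J a a else 0) +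
      (c a b * β a - c a b * β b) := by
    intro a b
    by_cases h1 : b = a
    · subst h1; simp [hcdef]
    · by_cases h2 : b = Φ.bar a
      · have hz : ∀ U, Φ.hat U B a b = 0 := by
          intro U
          have := Φ.hat_antisymm hB U a b
          rw [h2, Φ.bar_bar] at this
          rw [h2]
          linear_combination this / 2
        have : J a b = 0 := by simp [hJ, hj, hz]
        have hc0 : c a b = 0 := if_pos (Or.inr h2)
        rw [this, hc0, if_neg h1]
        ring
      · have hw := Φ.ward μ d hd B Q a b h2
        have hne : d a - d b ≠ 0 := sub_ne_zero.2 fun h => h1 (hinj h).symm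
        have hw' : (d a - d b) * J a b = β a - β b := hw
        simp only [hcdef, h1, h2, or_self, if_false, zero_add]
        field_simp
        linear_combination d b * hw'
  have hcot : ∀ a, Φ.cotSum d a = ∑ b, (c a b - c b a) := by
    intro a
    unfold cotSum
    refine Finset.sum_congr rfl fun b _ => ?_
    have hsym : (a = b ∨ a = Φ.bar b) ↔ (b = a ∨ b = Φ.bar a) := by
      constructor
      · rintro (h | h)
        · exact Or.inl h.symm
        · exact Or.inr (by rw [h, Φ.bar_bar])
      · rintro (h | h)
        · exact Or.inl h.symm
        · exact Or.inr (by rw [h, Φ.bar_bar])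
    simp only [hcdef, hsym]
    split_ifs with h
    · simp
    · have hne : d a - d b ≠ 0 := sub_ne_zero.2 fun h' => h (Or.inl (hinj h').symm)
      have hne' : d b - d a ≠ 0 := sub_ne_zero.2 fun h' => h (Or.inl (hinj h'))
      field_simp
      ring
  have hrow : ∀ a, ∑ b, d b * J a b = d a * J a a + ((∑ b, c a b * β a) - ∑ b, c a b * β b) := by
    intro a
    rw [Finset.sum_congr rfl fun b _ => hterm a b, Finset.sum_add_distrib, Finset.sum_sub_distrib,
      Finset.sum_ite_eq' Finset.univ a, if_pos (Finset.mem_univ a)]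
  rw [Finset.sum_congr rfl fun a _ => hrow a, Finset.sum_add_distrib, Finset.sum_sub_distrib,
    Finset.sum_comm (f := fun a b => c a b * β b), Finset.sum_add_distrib]
  have : ∑ a, Φ.cotSum d a * β a = (∑ a, ∑ b, c a b * β a) - ∑ a, ∑ b, c b a * β a := by
    rw [← Finset.sum_sub_distrib]
    refine Finset.sum_congr rfl fun a _ => ?_
    rw [hcot, Finset.sum_mul, ← Finset.sum_sub_distrib]
    exact Finset.sum_congr rfl fun b _ => by ring
  rw [this]
  ring

end Frame

/-! ### Eigenangles -/

/-- Indices of the eigenvalues of an orthogonal matrix: `n` conjugate pairs and real eigenvalues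
indexed by `κ`. -/
abbrev Ix (n : ℕ) (κ : Type) := (Fin n × Bool) ⊕ κ

/-- Complex conjugation on the indices of the eigenvalues. -/
def ixBar {n : ℕ} {κ : Type} : Ix n κ → Ix n κ
  | Sum.inl (j, b) => Sum.inl (j, !b)
  | Sum.inr c => Sum.inr c

/-- The eigenvalues `exp (± i θ_j)` and `s c`. -/
def ang {n : ℕ} {κ : Type} (s : κ → ℝ) (θ : Fin n → ℝ) : Ix n κ → ℂ
  | Sum.inl (j, true) => Complex.exp (θ j * Complex.I)
  | Sum.inl (j, false) => Complex.exp (-(θ j * Complex.I))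
  | Sum.inr c => (s c : ℂ)

section Angles

variable {κ : Type} {n : ℕ}

lemma ang_bar (s : κ → ℝ) (hs : ∀ c, s c ^ 2 = 1) (θ : Fin n → ℝ) (a : Ix n κ) :
    ang s θ a * ang s θ (ixBar a) = 1 := by
  rcases a with ⟨j, b⟩ | c
  · cases b <;> simp [ang, ixBar, ← Complex.exp_add]
  · simp only [ang, ixBar]
    rw [← Complex.ofReal_mul, ← sq, hs, Complex.ofReal_one]

lemma ang_re (s : κ → ℝ) (θ : Fin n → ℝ) (j : Fin n) (b : Bool) :
    (ang s θ (Sum.inl (j, b))).re = Real.cos (θ j) := by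
  cases b
  · have : -((θ j : ℂ) * Complex.I) = ((-θ j : ℝ) : ℂ) * Complex.I := by push_cast; ring
    simp only [ang]
    rw [this, Complex.exp_ofReal_mul_I_re, Real.cos_neg]
  · simp only [ang]
    rw [Complex.exp_ofReal_mul_I_re]

lemma ang_im (s : κ → ℝ) (θ : Fin n → ℝ) (j : Fin n) (b : Bool) :
    (ang s θ (Sum.inl (j, b))).im = if b then Real.sin (θ j) else -Real.sin (θ j) := by
  cases b
  · have : -((θ j : ℂ) * Complex.I) = ((-θ j : ℝ) : ℂ) * Complex.I := by push_cast; ring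
    simp only [ang]
    rw [this, Complex.exp_ofReal_mul_I_im, Real.sin_neg]
    simp
  · simp only [ang]
    rw [Complex.exp_ofReal_mul_I_im]
    simp

lemma ang_injective {s : κ → ℝ} (hsi : Function.Injective s) {θ : Fin n → ℝ} (hθ : Gen θ) :
    Function.Injective (ang s θ) := by
  have key : ∀ j b c, ang s θ (Sum.inl (j, b)) ≠ ang s θ (Sum.inr c) := by
    intro j b c h
    have := congrArg Complex.im h
    rw [ang_im] at this
    simp only [ang, Complex.ofReal_im] at this
    cases b <;> simp [hθ.2 j] at this
  rintro (⟨j, b⟩ | c) (⟨k, b'⟩ | c') h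
  · have h1 := congrArg Complex.re h
    have h2 := congrArg Complex.im h
    rw [ang_re, ang_re] at h1
    have hjk : j = k := by
      by_contra hne
      exact hθ.1 j k hne h1
    subst hjk
    rw [ang_im, ang_im] at h2
    have h3 := hθ.2 j
    have h4 : b = b' := by
      cases b <;> cases b' <;> simp at h2 ⊢
      · exact h3 (by linarith)
      · exact h3 (by linarith)
    rw [h4]
  · exact absurd h (key _ _ _)
  · exact absurd h.symm (key _ _ _)
  · simp only [ang] at h
    rw [hsi (Complex.ofReal_injective h)]

/-- Two terms of `cotSum` for a conjugate pair add up to the logarithmic derivative of a factor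
`(cos x - cos y)²` of the density. -/
lemma cot_pair {x y : ℝ} (h1 : Complex.exp (x * Complex.I) ≠ Complex.exp (y * Complex.I))
    (h2 : Complex.exp (x * Complex.I) ≠ Complex.exp (-(y * Complex.I))) :
    Complex.I * ((Complex.exp (x * Complex.I) + Complex.exp (y * Complex.I)) /
        (Complex.exp (x * Complex.I) - Complex.exp (y * Complex.I)) +
      (Complex.exp (x * Complex.I) + Complex.exp (-(y * Complex.I))) /
        (Complex.exp (x * Complex.I) - Complex.exp (-(y * Complex.I)))) =
      ((2 * (-Real.sin x) * (1 / (Real.cos x - Real.cos y)) : ℝ) : ℂ) := by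
  push_cast
  rw [Complex.sin, Complex.cos, Complex.cos, neg_mul, neg_mul]
  rw [Complex.exp_neg, Complex.exp_neg] at *
  have hz := Complex.exp_ne_zero (x * Complex.I)
  have hw := Complex.exp_ne_zero (y * Complex.I)
  set z := Complex.exp (x * Complex.I)
  set w := Complex.exp (y * Complex.I)
  have d1 : z - w ≠ 0 := sub_ne_zero.2 h1
  have d2 : z * w - 1 ≠ 0 := by
    intro h
    apply h2
    field_simp
    linear_combination h
  have d3 : z - w⁻¹ = (z * w - 1) / w := by field_simp
  have d4 : (z + z⁻¹) / 2 - (w + w⁻¹) / 2 = (z - w) * (z * w - 1) / (2 * z * w) := by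
    field_simp
    ring
  rw [d3, d4]
  field_simp
  ring

/-- The term of `cotSum` for a real eigenvalue `σ` is the logarithmic derivative of the factor
`1 - σ cos x` of the density. -/
lemma cot_real {x σ : ℝ} (hσ : σ ^ 2 = 1) (h1 : Complex.exp (x * Complex.I) ≠ (σ : ℂ)) :
    Complex.I * ((Complex.exp (x * Complex.I) + σ) / (Complex.exp (x * Complex.I) - σ)) =
      ((σ * Real.sin x / (1 - σ * Real.cos x) : ℝ) : ℂ) := by
  push_cast
  rw [Complex.sin, Complex.cos, neg_mul]
  rw [Complex.exp_neg]
  have hz := Complex.exp_ne_zero (x * Complex.I)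
  set z := Complex.exp (x * Complex.I)
  have d1 : z - σ ≠ 0 := sub_ne_zero.2 h1
  have hσ' : (σ : ℂ) ^ 2 = 1 := by exact_mod_cast hσ
  have hσ0 : (σ : ℂ) ≠ 0 := by
    intro h; rw [h] at hσ'; simp at hσ'
  have d2 : 1 - (σ : ℂ) * ((z + z⁻¹) / 2) = - σ * (z - σ) ^ 2 / (2 * z) := by
    field_simp
    linear_combination (-2 * z + σ) * hσ'
  rw [d2]
  field_simp
  linear_combination (-1) * hσ'

end Angles

/-! ### The variation as a total derivative in the eigenangles -/

lemma Frame.cotSum_bar {m : ℕ} {I : Type} [Fintype I] [DecidableEq I] (Φ : Frame m I)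
    (d : I → ℂ) (hd : ∀ a, d a * d (Φ.bar a) = 1) (hinj : Function.Injective d) (a : I) :
    Φ.cotSum d (Φ.bar a) = - Φ.cotSum d a := by
  unfold cotSum
  rw [← Equiv.sum_comp Φ.barE, ← Finset.sum_neg_distrib]
  refine Finset.sum_congr rfl fun b _ => ?_
  change (if Φ.bar b = Φ.bar a ∨ Φ.bar b = Φ.bar (Φ.bar a) then 0 else
    (d (Φ.bar a) + d (Φ.bar b)) / (d (Φ.bar a) - d (Φ.bar b))) = _
  have hb : Function.Injective Φ.bar := Φ.barE.injective
  have hsym : (Φ.bar b = Φ.bar a ∨ Φ.bar b = Φ.bar (Φ.bar a)) ↔ (b = a ∨ b = Φ.bar a) := by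
    rw [hb.eq_iff, hb.eq_iff]
  simp only [hsym]
  split_ifs with h
  · simp
  · have hne : d a - d b ≠ 0 := sub_ne_zero.2 fun h' => h (Or.inl (hinj h').symm)
    have hne' : d (Φ.bar a) - d (Φ.bar b) ≠ 0 :=
      sub_ne_zero.2 fun h' => h (Or.inl (hb (hinj h')).symm)
    rw [← neg_div, div_eq_div_iff hne' hne]
    linear_combination 2 * hd a - 2 * hd b

section Angles

variable {κ : Type} [Fintype κ] [DecidableEq κ] {n m : ℕ} (Φ : Frame m (Ix n κ))

lemma cotSum_ang (hbar : Φ.bar = ixBar) {s : κ → ℝ} (hs : ∀ c, s c ^ 2 = 1)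
    (hsi : Function.Injective s) {θ : Fin n → ℝ} (hθ : Gen θ) (j : Fin n) :
    Complex.I * Φ.cotSum (ang s θ) (Sum.inl (j, true)) =
      ((2 * (-Real.sin (θ j)) * ∑ k, 1 / (Real.cos (θ j) - Real.cos (θ k))
        + ∑ c, s c * Real.sin (θ j) / (1 - s c * Real.cos (θ j)) : ℝ) : ℂ) := by
  have hinj := ang_injective hsi hθ
  unfold Frame.cotSum
  rw [hbar, Fintype.sum_sum_type, Fintype.sum_prod_type, mul_add, Complex.ofReal_add,
    Finset.mul_sum, Finset.mul_sum, Finset.mul_sum, Complex.ofReal_sum, Complex.ofReal_sum]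
  congr 1
  · refine Finset.sum_congr rfl fun k _ => ?_
    rw [Fintype.sum_bool]
    by_cases hk : k = j
    · subst hk
      simp [ixBar]
    · have h1 : ang s θ (Sum.inl (j, true)) ≠ ang s θ (Sum.inl (k, true)) := fun h =>
        hk (by simpa using (hinj h).symm)
      have h2 : ang s θ (Sum.inl (j, true)) ≠ ang s θ (Sum.inl (k, false)) := fun h => by
        simpa using hinj h
      rw [if_neg (by simp [ixBar, hk]), if_neg (by simp [ixBar, hk])]
      exact cot_pair h1 h2
  · refine Finset.sum_congr rfl fun c _ => ?_
    have h1 : ang s θ (Sum.inl (j, true)) ≠ ang s θ (Sum.inr c) := fun h => by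
      simpa using hinj h
    rw [if_neg (by simp [ixBar])]
    exact cot_real (hs c) h1

/-- The derivative in `θ_j` of `w(θ) exp (tr (D_θ Q̂))`. -/
def dG (s : κ → ℝ) (Q : Matrix (Fin m) (Fin m) ℂ) (j : Fin n) (θ : Fin n → ℝ) (U : Om m) : ℂ :=
  ((fderiv ℝ (wt n s 0) θ (Pi.single j 1) : ℝ) : ℂ) * Φ.wexp (diagonal (ang s θ)) Q U +
    (wt n s 0 θ : ℂ) * (Complex.I * (ang s θ (Sum.inl (j, true)) *
      Φ.hat U Q (Sum.inl (j, true)) (Sum.inl (j, true)) - ang s θ (Sum.inl (j, false)) *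
      Φ.hat U Q (Sum.inl (j, false)) (Sum.inl (j, false)))) * Φ.wexp (diagonal (ang s θ)) Q U

/-- For pairwise distinct eigenvalues, the variation of the integrand along `Q ↦ Q (1 + B)` is a
sum of derivatives in the eigenangles, after integration over the eigenframe. -/
lemma core_gen (μ : Measure (Om m)) [IsProbabilityMeasure μ] [μ.IsMulLeftInvariant]
    (hbar : Φ.bar = ixBar) {s : κ → ℝ} (hs : ∀ c, s c ^ 2 = 1)
    (hsi : Function.Injective s) {θ : Fin n → ℝ} (hθ : Gen θ)
    {B : Matrix (Fin m) (Fin m) ℂ} (hB : Bᵀ = -B) (Q : Matrix (Fin m) (Fin m) ℂ) :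
    ∫ U, (wt n s 0 θ : ℂ) * ((diagonal (ang s θ) * (Φ.hat U Q * Φ.hat U B)).trace *
        Φ.wexp (diagonal (ang s θ)) Q U) ∂μ =
      ∑ j : Fin n, -Complex.I * ∫ U, Φ.hat U B (Sum.inl (j, true)) (Sum.inl (j, true)) *
        dG Φ s Q j θ U ∂μ := by
  have hinj := ang_injective hsi hθ
  have hd : ∀ a, ang s θ a * ang s θ (Φ.bar a) = 1 := by
    rw [hbar]; exact ang_bar s hs θ
  have hcore := Φ.core_angles μ (ang s θ) hd hinj hB Q
  rw [integral_const_mul]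
  have hw : ∀ j, fderiv ℝ (wt n s 0) θ (Pi.single j 1) = wt n s 0 θ * (2 * (-Real.sin (θ j)) *
      ∑ k, 1 / (Real.cos (θ j) - Real.cos (θ k)) +
        ∑ c, s c * Real.sin (θ j) / (1 - s c * Real.cos (θ j))) := by
    intro j
    rw [fderiv_of_update (contDiff_wt s 0) (hasDerivAt_wt s hs 0 θ hθ j)]
    ring
  have hG : ∀ j U, dG Φ s Q j θ U = (wt n s 0 θ : ℂ) * Complex.I *
      ((Φ.cotSum (ang s θ) (Sum.inl (j, true)) + (ang s θ (Sum.inl (j, true)) *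
        Φ.hat U Q (Sum.inl (j, true)) (Sum.inl (j, true)) - ang s θ (Φ.bar (Sum.inl (j, true))) *
        Φ.hat U Q (Φ.bar (Sum.inl (j, true))) (Φ.bar (Sum.inl (j, true))))) *
          Φ.wexp (diagonal (ang s θ)) Q U) := by
    intro j U
    rw [dG, hw, Complex.ofReal_mul, ← cotSum_ang Φ hbar hs hsi hθ j, hbar]
    simp only [ixBar, Bool.not_true]
    ring
  set g : Ix n κ → ℂ := fun a => ∫ U, Φ.hat U B a a * (Φ.cotSum (ang s θ) a +
    (ang s θ a * Φ.hat U Q a a - ang s θ (Φ.bar a) * Φ.hat U Q (Φ.bar a) (Φ.bar a))) *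
      Φ.wexp (diagonal (ang s θ)) Q U ∂μ with hg
  have hgbar : ∀ a, g (Φ.bar a) = g a := by
    intro a
    refine integral_congr_ae (Filter.Eventually.of_forall fun U => ?_)
    simp only [Φ.bar_bar, Φ.cotSum_bar _ hd hinj, Φ.hat_antisymm hB U a a]
    ring
  have hgr : ∀ c, g (Sum.inr c) = 0 := by
    intro c
    have h0 : ∀ U, Φ.hat U B (Sum.inr c) (Sum.inr c) = 0 := by
      intro U
      have := Φ.hat_antisymm hB U (Sum.inr c) (Sum.inr c)
      rw [hbar] at this
      simp only [ixBar] at this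
      linear_combination this / 2
    simp [hg, h0]
  have hsum : ∑ a, g a = 2 * ∑ j : Fin n, g (Sum.inl (j, true)) := by
    rw [Fintype.sum_sum_type, Fintype.sum_prod_type]
    simp only [hgr, Finset.sum_const_zero, add_zero, Fintype.sum_bool]
    rw [Finset.mul_sum]
    refine Finset.sum_congr rfl fun j _ => ?_
    have := hgbar (Sum.inl (j, true))
    rw [hbar] at this
    simp only [ixBar, Bool.not_true] at this
    rw [this]; ring
  have h2 : ∫ U, (diagonal (ang s θ) * (Φ.hat U Q * Φ.hat U B)).trace *
      Φ.wexp (diagonal (ang s θ)) Q U ∂μ = ∑ j : Fin n, g (Sum.inl (j, true)) := by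
    have := hcore.trans hsum
    exact mul_left_cancel₀ two_ne_zero this
  rw [h2, Finset.mul_sum]
  refine Finset.sum_congr rfl fun j _ => ?_
  rw [← integral_const_mul, ← integral_const_mul]
  refine integral_congr_ae (Filter.Eventually.of_forall fun U => ?_)
  simp only [hG]
  linear_combination ((wt n s 0 θ : ℂ) * Φ.hat U B (Sum.inl (j, true)) (Sum.inl (j, true)) *
    (Φ.cotSum (ang s θ) (Sum.inl (j, true)) + (ang s θ (Sum.inl (j, true)) *
        Φ.hat U Q (Sum.inl (j, true)) (Sum.inl (j, true)) - ang s θ (Φ.bar (Sum.inl (j, true))) *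
        Φ.hat U Q (Φ.bar (Sum.inl (j, true))) (Φ.bar (Sum.inl (j, true))))) *
          Φ.wexp (diagonal (ang s θ)) Q U) * Complex.I_mul_I

end Angles

section Angles

variable {κ : Type} [Fintype κ] [DecidableEq κ] {n m : ℕ} (Φ : Frame m (Ix n κ))

lemma contDiff_ang {κ : Type} {n : ℕ} (s : κ → ℝ) (a : Ix n κ) :
    ContDiff ℝ 1 fun θ : Fin n → ℝ => ang s θ a := by
  have h : ∀ j : Fin n, ContDiff ℝ 1 fun θ : Fin n → ℝ => ((θ j : ℝ) : ℂ) := fun j =>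
    Complex.ofRealCLM.contDiff.comp (contDiff_apply ℝ ℝ j)
  rcases a with ⟨j, b⟩ | c
  · cases b
    · exact ((h j).mul contDiff_const).neg.cexp
    · exact ((h j).mul contDiff_const).cexp
  · exact contDiff_const

lemma trace_diag (d : Ix n κ → ℂ) (Z : Matrix (Ix n κ) (Ix n κ) ℂ) :
    (diagonal d * Z).trace = ∑ a, d a * Z a a := by
  simp [Matrix.trace, Matrix.diagonal_mul]

lemma contDiff_G (s : κ → ℝ) (Q : Matrix (Fin m) (Fin m) ℂ) (U : Om m) :
    ContDiff ℝ 1 fun θ : Fin n → ℝ => (wt n s 0 θ : ℂ) * Φ.wexp (diagonal (ang s θ)) Q U := by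
  refine (Complex.ofRealCLM.contDiff.comp (contDiff_wt s 0)).mul ?_
  unfold Frame.wexp
  simp only [trace_diag]
  exact (ContDiff.sum fun a _ => (contDiff_ang s a).mul contDiff_const).cexp

lemma continuous_wexp₂ (s : κ → ℝ) (Q : Matrix (Fin m) (Fin m) ℂ) :
    Continuous fun p : (Fin n → ℝ) × Om m => Φ.wexp (diagonal (ang s p.1)) Q p.2 := by
  unfold Frame.wexp
  simp only [trace_diag]
  refine Complex.continuous_exp.comp (continuous_finsetSum _ fun a _ => ?_)
  exact ((contDiff_ang s a).continuous.comp continuous_fst).mul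
    ((Φ.continuous_hat_apply Q a a).comp continuous_snd)

lemma continuous_wt₂ {κ : Type} [Fintype κ] {n m : ℕ} (s : κ → ℝ) :
    Continuous fun p : (Fin n → ℝ) × Om m => (wt n s 0 p.1 : ℂ) :=
  Complex.continuous_ofReal.comp ((contDiff_wt s 0).continuous.comp continuous_fst)

lemma continuous_dG (s : κ → ℝ) (Q : Matrix (Fin m) (Fin m) ℂ) (j : Fin n) :
    Continuous fun p : (Fin n → ℝ) × Om m => dG Φ s Q j p.1 p.2 := by
  unfold dG
  have h1 := continuous_wexp₂ Φ s Q
  have h2 : Continuous fun p : (Fin n → ℝ) × Om m => (wt n s 0 p.1 : ℂ) := continuous_wt₂ s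
  have h3 : ∀ a, Continuous fun p : (Fin n → ℝ) × Om m => ang s p.1 a := fun a =>
    (contDiff_ang s a).continuous.comp continuous_fst
  have h4 : ∀ a, Continuous fun p : (Fin n → ℝ) × Om m => Φ.hat p.2 Q a a := fun a =>
    (Φ.continuous_hat_apply Q a a).comp continuous_snd
  have h5 : Continuous fun p : (Fin n → ℝ) × Om m =>
      ((fderiv ℝ (wt n s 0) p.1 (Pi.single j 1) : ℝ) : ℂ) :=
    Complex.continuous_ofReal.comp ((((contDiff_wt s 0).continuous_fderiv one_ne_zero).clm_apply
      continuous_const).comp continuous_fst)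
  exact (h5.mul h1).add ((h2.mul (continuous_const.mul (((h3 _).mul (h4 _)).sub
    ((h3 _).mul (h4 _))))).mul h1)

lemma fderiv_G (s : κ → ℝ) (Q : Matrix (Fin m) (Fin m) ℂ) (U : Om m) (j : Fin n)
    (θ : Fin n → ℝ) :
    fderiv ℝ (fun θ : Fin n → ℝ => (wt n s 0 θ : ℂ) * Φ.wexp (diagonal (ang s θ)) Q U) θ
      (Pi.single j 1) = dG Φ s Q j θ U := by
  refine fderiv_of_update (contDiff_G Φ s Q U) ?_
  have h1 : HasDerivAt (fun x => wt n s 0 (Function.update θ j x))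
      (fderiv ℝ (wt n s 0) θ (Pi.single j 1)) (θ j) := by
    have := (((contDiff_wt s 0).differentiable one_ne_zero)
      (Function.update θ j (θ j))).hasFDerivAt.comp_hasDerivAt (θ j) (hasDerivAt_update θ j (θ j))
    rwa [Function.update_eq_self] at this
  have h2 : ∀ a : Ix n κ, HasDerivAt (fun x => ang s (Function.update θ j x) a)
      (if a = Sum.inl (j, true) then Complex.I * ang s θ a else
        if a = Sum.inl (j, false) then -Complex.I * ang s θ a else 0) (θ j) := by
    have hid : HasDerivAt (fun x : ℝ => (x : ℂ) * Complex.I) Complex.I (θ j) := by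
      simpa using (hasDerivAt_id (θ j)).ofReal_comp.mul_const Complex.I
    rintro (⟨k, b⟩ | c)
    · by_cases hk : k = j
      · subst hk
        cases b
        · simp only [ang, Function.update_self]
          refine hid.neg.cexp.congr_deriv ?_
          simp
          ring
        · simp only [ang, Function.update_self]
          refine hid.cexp.congr_deriv ?_
          simp
          ring
      · cases b <;> simp only [ang, Function.update_of_ne hk] <;>
          refine (hasDerivAt_const _ _).congr_deriv ?_ <;> simp [hk]
    · simp only [ang]
      refine (hasDerivAt_const _ _).congr_deriv ?_
      simp
  have h3 : HasDerivAt (fun x => Φ.wexp (diagonal (ang s (Function.update θ j x))) Q U)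
      (Φ.wexp (diagonal (ang s θ)) Q U * (Complex.I * (ang s θ (Sum.inl (j, true)) *
      Φ.hat U Q (Sum.inl (j, true)) (Sum.inl (j, true)) - ang s θ (Sum.inl (j, false)) *
      Φ.hat U Q (Sum.inl (j, false)) (Sum.inl (j, false))))) (θ j) := by
    unfold Frame.wexp
    simp only [trace_diag]
    refine (HasDerivAt.fun_sum fun a _ => (h2 a).mul_const (Φ.hat U Q a a)).cexp.congr_deriv ?_
    rw [Function.update_eq_self]
    congr 1
    simp only [ite_mul, zero_mul]
    have : ∀ a : Ix n κ, (if a = Sum.inl (j, true) then Complex.I * ang s θ a * Φ.hat U Q a a else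
        if a = Sum.inl (j, false) then -Complex.I * ang s θ a * Φ.hat U Q a a else 0) =
        (if a = Sum.inl (j, true) then Complex.I * ang s θ a * Φ.hat U Q a a else 0) +
        (if a = Sum.inl (j, false) then -Complex.I * ang s θ a * Φ.hat U Q a a else 0) := by
      intro a
      by_cases ha : a = Sum.inl (j, true)
      · subst ha; simp
      · simp [ha]
    simp only [this, Finset.sum_add_distrib, Finset.sum_ite_eq', Finset.mem_univ, if_true]
    ring
  refine (h1.ofReal_comp.mul h3).congr_deriv ?_
  simp only [dG, Function.update_eq_self]
  ring

lemma integral_dG (s : κ → ℝ) (Q : Matrix (Fin m) (Fin m) ℂ) (U : Om m) (j : Fin n) :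
    ∫ θ, dG Φ s Q j θ U ∂tor n = 0 := by
  simp only [← fderiv_G]
  refine ibp j _ (contDiff_G Φ s Q U) fun θ => ?_
  have hang : ang s (Function.update θ j (2 * Real.pi)) = ang s (Function.update θ j 0) := by
    funext a
    rcases a with ⟨k, b⟩ | c
    · by_cases hk : k = j
      · subst hk
        cases b
        · simp [ang, Complex.exp_neg, Complex.exp_two_pi_mul_I]
        · simp [ang, Complex.exp_two_pi_mul_I]
      · cases b <;> simp [ang, Function.update_of_ne hk]
    · rfl
  rw [wt_update_period, hang]

lemma integrable_pair (μ : Measure (Om m)) [IsProbabilityMeasure μ] {F : (Fin n → ℝ) × Om m → ℂ}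
    (hF : Continuous F) : Integrable F ((tor n).prod μ) := by
  refine integrable_of_compact (K := Set.Icc (0 : Fin n → ℝ) (fun _ => 2 * Real.pi) ×ˢ Set.univ)
    (isCompact_Icc.prod isCompact_univ) ?_ hF
  filter_upwards [Measure.quasiMeasurePreserving_fst.ae (tor_ae_mem n)] with x h1
    using ⟨h1, trivial⟩

/-- The average of `exp (tr (N Q))` over `N = Uᵀ T_θ U` is stationary along rotations of `Q`. -/
lemma core (μ : Measure (Om m)) [IsProbabilityMeasure μ] [μ.IsMulLeftInvariant]
    (hbar : Φ.bar = ixBar) {s : κ → ℝ} (hs : ∀ c, s c ^ 2 = 1)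
    (hsi : Function.Injective s)
    {B : Matrix (Fin m) (Fin m) ℂ} (hB : Bᵀ = -B) (Q : Matrix (Fin m) (Fin m) ℂ) :
    ∫ p : (Fin n → ℝ) × Om m, (wt n s 0 p.1 : ℂ) * ((diagonal (ang s p.1) *
      Φ.hat p.2 (Q * B)).trace * Φ.wexp (diagonal (ang s p.1)) Q p.2) ∂((tor n).prod μ) = 0 := by
  have hc1 : Continuous fun p : (Fin n → ℝ) × Om m => (wt n s 0 p.1 : ℂ) *
      ((diagonal (ang s p.1) * Φ.hat p.2 (Q * B)).trace *
        Φ.wexp (diagonal (ang s p.1)) Q p.2) := by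
    refine (continuous_wt₂ s).mul (Continuous.mul ?_ (continuous_wexp₂ Φ s Q))
    simp only [trace_diag]
    refine continuous_finsetSum _ fun a _ => ?_
    exact ((contDiff_ang s a).continuous.comp continuous_fst).mul
      ((Φ.continuous_hat_apply _ a a).comp continuous_snd)
  have hc2 : ∀ j : Fin n, Continuous fun p : (Fin n → ℝ) × Om m =>
      Φ.hat p.2 B (Sum.inl (j, true)) (Sum.inl (j, true)) * dG Φ s Q j p.1 p.2 := fun j =>
    ((Φ.continuous_hat_apply B _ _).comp continuous_snd).mul (continuous_dG Φ s Q j)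
  have hpar : ∀ {F : (Fin n → ℝ) → Om m → ℂ}, Continuous (Function.uncurry F) →
      Continuous fun θ => ∫ U, F θ U ∂μ := by
    intro F hF
    have := continuous_parametric_integral_of_continuous (μ := μ) hF isCompact_univ
    simpa using this
  have hall : (fun θ : Fin n → ℝ => ∫ U, (wt n s 0 θ : ℂ) * ((diagonal (ang s θ) *
      Φ.hat U (Q * B)).trace * Φ.wexp (diagonal (ang s θ)) Q U) ∂μ) =
      fun θ => ∑ j : Fin n, -Complex.I * ∫ U, Φ.hat U B (Sum.inl (j, true)) (Sum.inl (j, true)) *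
        dG Φ s Q j θ U ∂μ := by
    refine eq_of_gen (hpar hc1) (continuous_finsetSum _ fun j _ => continuous_const.mul
      (hpar (hc2 j))) fun θ hθ => ?_
    simp only [Φ.hat_mul]
    exact core_gen Φ μ hbar hs hsi hθ hB Q
  rw [integral_prod _ (integrable_pair μ hc1)]
  have hall' := fun θ => congrFun hall θ
  simp only [hall']
  have hintg : ∀ j : Fin n, Integrable (fun θ : Fin n → ℝ => -Complex.I * ∫ U,
      Φ.hat U B (Sum.inl (j, true)) (Sum.inl (j, true)) * dG Φ s Q j θ U ∂μ) (tor n) := fun j =>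
    integrable_tor (continuous_const.mul (hpar (F := fun θ U =>
      Φ.hat U B (Sum.inl (j, true)) (Sum.inl (j, true)) * dG Φ s Q j θ U) (hc2 j)))
  rw [integral_finsetSum _ fun j _ => hintg j]
  refine Finset.sum_eq_zero fun j _ => ?_
  rw [integral_const_mul]
  have hsw := integral_integral_swap (μ := tor n) (ν := μ)
    (f := fun θ U => Φ.hat U B (Sum.inl (j, true)) (Sum.inl (j, true)) * dG Φ s Q j θ U)
    (integrable_pair μ (hc2 j))
  rw [hsw]
  simp only [integral_const_mul, integral_dG, mul_zero, integral_zero]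

end Angles

/-! ### Rotation invariance of the conjugated average -/

section Psi

variable {κ : Type} [Fintype κ] [DecidableEq κ] {n m : ℕ} (Φ : Frame m (Ix n κ))

/-- The average of `exp (tr (N Q))` over `N = Uᵀ T_θ U`, with `U` Haar distributed and the
eigenangles `θ` weighted by `wt`. -/
def Psi (μ : Measure (Om m)) (s : κ → ℝ) (Q : Matrix (Fin m) (Fin m) ℂ) : ℂ :=
  ∫ p : (Fin n → ℝ) × Om m, (wt n s 0 p.1 : ℂ) * Φ.wexp (diagonal (ang s p.1)) Q p.2
    ∂((tor n).prod μ)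


/-- The average does not change along a curve `Q * M x` with `M x` orthogonal: its derivative is
an instance of `core` for the antisymmetric matrix `(M x)ᵀ * M' x`. -/
lemma Psi_curve (μ : Measure (Om m)) [IsProbabilityMeasure μ] [μ.IsMulLeftInvariant]
    (hbar : Φ.bar = ixBar) {s : κ → ℝ} (hs : ∀ c, s c ^ 2 = 1)
    (hsi : Function.Injective s) (Q : Matrix (Fin m) (Fin m) ℂ)
    (M : ℝ → Matrix (Fin m) (Fin m) ℝ) (hM : ∀ i j, ContDiff ℝ 1 fun x => M x i j)
    (hO : ∀ x, (M x)ᵀ * M x = 1) :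
    Psi Φ μ s (Q * mC (M 0)) = Psi Φ μ s (Q * mC (M 1)) := by
  set M' : ℝ → Matrix (Fin m) (Fin m) ℝ := fun x => Matrix.of fun i j =>
    deriv (fun y => M y i j) x with hM'
  have hMD : ∀ x, MD (fun y => mC (M y)) (mC (M' x)) x := fun x i j =>
    (((hM i j).differentiable one_ne_zero) x).hasDerivAt.ofReal_comp
  have hcM : Continuous fun x => mC (M x) := continuous_matrix fun i j =>
    Complex.continuous_ofReal.comp (hM i j).continuous
  have hcM' : Continuous fun x => mC (M' x) := continuous_matrix fun i j =>
    Complex.continuous_ofReal.comp ((hM i j).continuous_deriv le_rfl)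
  have hO' : ∀ x, (mC (M x))ᵀ * mC (M x) = 1 := fun x => by
    rw [← mC_transpose, ← mC_mul, hO, mC_one]
  have hO'' : ∀ x, mC (M x) * (mC (M x))ᵀ = 1 := fun x => mul_eq_one_comm.mp (hO' x)
  have hanti : ∀ x, ((mC (M x))ᵀ * mC (M' x))ᵀ = -((mC (M x))ᵀ * mC (M' x)) := by
    intro x
    have h1 := (hMD x).transpose.mul (hMD x)
    have h2 : (mC (M' x))ᵀ * mC (M x) + (mC (M x))ᵀ * mC (M' x) = 0 := by
      ext i j
      have h3 := h1 i j
      simp only [hO'] at h3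
      exact h3.unique (hasDerivAt_const _ _)
    rw [Matrix.transpose_mul, Matrix.transpose_transpose]
    exact eq_neg_of_add_eq_zero_left h2
  -- the integrand and its derivative in the curve parameter
  set F : ℝ → (Fin n → ℝ) × Om m → ℂ := fun x p =>
    (wt n s 0 p.1 : ℂ) * Φ.wexp (diagonal (ang s p.1)) (Q * mC (M x)) p.2 with hF
  set G : ℝ → (Fin n → ℝ) × Om m → ℂ := fun x p =>
    (wt n s 0 p.1 : ℂ) * ((diagonal (ang s p.1) * Φ.hat p.2 (Q * mC (M' x))).trace *
      Φ.wexp (diagonal (ang s p.1)) (Q * mC (M x)) p.2) with hG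
  have hder : ∀ p x, HasDerivAt (fun y => F y p) (G x p) x := by
    intro p x
    have h := (((((hMD x).const_mul Q).const_mul (mC (p.2 : Matrix (Fin m) (Fin m) ℝ))).mul_const
      (mC (p.2 : Matrix (Fin m) (Fin m) ℝ))ᵀ).const_mul Φ.dual).mul_const Φ.A
    have h' := ((h.const_mul (diagonal (ang s p.1))).trace.cexp).const_mul (wt n s 0 p.1 : ℂ)
    refine h'.congr_deriv ?_
    simp only [hG, Frame.wexp, Frame.hat]
    ring
  have hdiag : Continuous fun z : ℝ × ((Fin n → ℝ) × Om m) =>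
      (diagonal (ang s z.2.1) : Matrix (Ix n κ) (Ix n κ) ℂ) := by
    refine Continuous.matrix_diagonal (continuous_pi fun a => ?_)
    exact (contDiff_ang s a).continuous.comp (continuous_fst.comp continuous_snd)
  have hU : Continuous fun z : ℝ × ((Fin n → ℝ) × Om m) =>
      mC (z.2.2 : Matrix (Fin m) (Fin m) ℝ) :=
    Frame.continuous_mC.comp (continuous_snd.comp continuous_snd)
  have hhat : ∀ {N : ℝ → Matrix (Fin m) (Fin m) ℂ}, Continuous N →
      Continuous fun z : ℝ × ((Fin n → ℝ) × Om m) =>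
        (diagonal (ang s z.2.1) * Φ.hat z.2.2 (Q * N z.1)).trace := by
    intro N hN
    have hN' : Continuous fun z : ℝ × ((Fin n → ℝ) × Om m) => N z.1 := hN.comp continuous_fst
    unfold Frame.hat
    fun_prop
  have hGc : Continuous (Function.uncurry G) := by
    have h1 : Continuous fun z : ℝ × ((Fin n → ℝ) × Om m) => (wt n s 0 z.2.1 : ℂ) :=
      (continuous_wt₂ (m := m) s).comp continuous_snd
    have h2 := hhat hcM'
    have h3 : Continuous fun z : ℝ × ((Fin n → ℝ) × Om m) =>
        Φ.wexp (diagonal (ang s z.2.1)) (Q * mC (M z.1)) z.2.2 := by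
      unfold Frame.wexp
      exact (hhat hcM).cexp
    have h4 : Function.uncurry G = fun z : ℝ × ((Fin n → ℝ) × Om m) => (wt n s 0 z.2.1 : ℂ) *
        ((diagonal (ang s z.2.1) * Φ.hat z.2.2 (Q * mC (M' z.1))).trace *
          Φ.wexp (diagonal (ang s z.2.1)) (Q * mC (M z.1)) z.2.2) := rfl
    rw [h4]
    exact h1.mul (h2.mul h3)
  have hzero : ∀ x, ∫ p, G x p ∂((tor n).prod μ) = 0 := by
    intro x
    have h := core Φ μ hbar hs hsi (hanti x) (Q * mC (M x))
    have h2 : Q * mC (M x) * ((mC (M x))ᵀ * mC (M' x)) = Q * mC (M' x) := by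
      calc _ = Q * (mC (M x) * (mC (M x))ᵀ) * mC (M' x) := by simp only [Matrix.mul_assoc]
        _ = _ := by rw [hO'', Matrix.mul_one]
    rw [h2] at h
    exact h
  have hsw := swap_interval (τ := (tor n).prod μ)
    (K := Set.Icc (0 : Fin n → ℝ) (fun _ => 2 * Real.pi) ×ˢ Set.univ)
    (isCompact_Icc.prod isCompact_univ) (by
      filter_upwards [Measure.quasiMeasurePreserving_fst.ae (tor_ae_mem n)] with x h1
        using ⟨h1, trivial⟩) hGc 0 1
  simp only [hzero, intervalIntegral.integral_zero] at hsw
  have hftc : ∀ p, ∫ x in (0 : ℝ)..1, G x p = F 1 p - F 0 p := fun p =>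
    intervalIntegral.integral_eq_sub_of_hasDerivAt (fun x _ => hder p x)
      ((hGc.comp (by fun_prop : Continuous fun x : ℝ => (x, p))).intervalIntegrable _ _)
  simp only [hftc] at hsw
  have hFi : ∀ x, Integrable (F x) ((tor n).prod μ) := fun x =>
    integrable_pair μ ((continuous_wt₂ s).mul (continuous_wexp₂ Φ s _))
  rw [integral_sub (hFi 1) (hFi 0)] at hsw
  exact (sub_eq_zero.mp hsw.symm).symm

end Psi

/-- The reflection in the hyperplane orthogonal to `v` (the identity for `v = 0`). -/
def refl {m : ℕ} (v : Fin m → ℝ) : Matrix (Fin m) (Fin m) ℝ :=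
  1 - (2 / (v ⬝ᵥ v)) • vecMulVec v v

lemma refl_transpose {m : ℕ} (v : Fin m → ℝ) : (refl v)ᵀ = refl v := by
  simp [refl, transpose_vecMulVec]

lemma refl_mulVec {m : ℕ} (v w : Fin m → ℝ) :
    refl v *ᵥ w = w - (2 * (v ⬝ᵥ w) / (v ⬝ᵥ v)) • v := by
  simp only [refl, Matrix.sub_mulVec, Matrix.one_mulVec, Matrix.smul_mulVec, vecMulVec_mulVec]
  ext i
  simp
  ring

lemma refl_mul_self {m : ℕ} (v : Fin m → ℝ) (hv : v ≠ 0) : refl v * refl v = 1 := by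
  have h : v ⬝ᵥ v ≠ 0 := fun h => hv (dotProduct_self_eq_zero.mp h)
  simp only [refl, Matrix.mul_sub, Matrix.sub_mul, Matrix.mul_one, Matrix.one_mul,
    Matrix.smul_mul, Matrix.mul_smul, vecMulVec_mul_vecMulVec]
  ext i j
  simp [vecMulVec_apply]
  field_simp
  ring

lemma refl_det {m : ℕ} (v : Fin m → ℝ) (hv : v ≠ 0) : (refl v).det = -1 := by
  have h : v ⬝ᵥ v ≠ 0 := fun h => hv (dotProduct_self_eq_zero.mp h)
  have h1 : refl v = 1 + vecMulVec (-(2 / (v ⬝ᵥ v)) • v) v := by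
    simp [refl, smul_vecMulVec, sub_eq_add_neg]
  rw [h1, vecMulVec_eq Unit, det_one_add_replicateCol_mul_replicateRow]
  simp
  field_simp
  norm_num

lemma refl_smul {m : ℕ} (v : Fin m → ℝ) {c : ℝ} (hc : c ≠ 0) : refl (c • v) = refl v := by
  ext i j
  simp only [refl, Matrix.sub_apply, Matrix.smul_apply, vecMulVec_apply, dotProduct_smul,
    smul_dotProduct, Pi.smul_apply, smul_eq_mul]
  field_simp

section Connected

variable {κ : Type} [Fintype κ] [DecidableEq κ] {n m : ℕ} (Φ : Frame m (Ix n κ))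

/-- Two hyperplane reflections are joined by the reflections in the vectors of a segment. -/
lemma Psi_refl (μ : Measure (Om m)) [IsProbabilityMeasure μ] [μ.IsMulLeftInvariant]
    (hbar : Φ.bar = ixBar) {s : κ → ℝ} (hs : ∀ c, s c ^ 2 = 1)
    (hsi : Function.Injective s) (Q : Matrix (Fin m) (Fin m) ℂ) {u w : Fin m → ℝ}
    (hu : u ≠ 0) (hw : w ≠ 0) :
    Psi Φ μ s (Q * mC (refl u)) = Psi Φ μ s (Q * mC (refl w)) := by
  set v : ℝ → Fin m → ℝ := fun x => u + x • (w - u) with hv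
  have hv0 : v 0 = u := by simp [hv]
  have hv1 : v 1 = w := by simp [hv]
  by_cases h : ∀ x, v x ≠ 0
  · have key := Psi_curve Φ μ hbar hs hsi Q (fun x => refl (v x)) (fun i j => ?_) fun x => by
      rw [refl_transpose, refl_mul_self _ (h x)]
    · simpa only [hv0, hv1] using key
    · have hc : ∀ i, ContDiff ℝ 1 fun x => v x i := fun i => by
        simp only [hv, Pi.add_apply, Pi.smul_apply, Pi.sub_apply, smul_eq_mul]
        fun_prop
      have hd : ContDiff ℝ 1 fun x => v x ⬝ᵥ v x := ContDiff.sum fun i _ => (hc i).mul (hc i)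
      simp only [refl, Matrix.sub_apply, Matrix.smul_apply, vecMulVec_apply, smul_eq_mul]
      exact contDiff_const.sub ((contDiff_const.div hd fun x h0 =>
        h x (dotProduct_self_eq_zero.mp h0)).mul ((hc i).mul (hc j)))
  · push Not at h
    obtain ⟨x, hx⟩ := h
    have hx0 : x ≠ 0 := fun h0 => hu (by rw [← hv0, ← h0, hx])
    have hx1 : x ≠ 1 := fun h0 => hw (by rw [← hv1, ← h0, hx])
    have h2 : w = ((x - 1) / x) • u := by
      have : x • w = (x - 1) • u := by
        ext i
        have hi := congrFun hx i
        simp only [hv, Pi.add_apply, Pi.smul_apply, Pi.sub_apply, smul_eq_mul, Pi.zero_apply]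
          at hi ⊢
        linear_combination hi
      rw [div_eq_inv_mul, mul_smul, ← this, smul_smul, inv_mul_cancel₀ hx0, one_smul]
    rw [h2, refl_smul _ (div_ne_zero (sub_ne_zero.mpr hx1) hx0)]

end Connected

/-! ### Generation of the rotations by reflections -/

lemma refl_sub_mulVec {m : ℕ} {a b : Fin m → ℝ} (h : a ⬝ᵥ a = b ⬝ᵥ b) (hab : a - b ≠ 0) :
    refl (a - b) *ᵥ a = b := by
  have h0 : (a - b) ⬝ᵥ (a - b) ≠ 0 := fun h => hab (dotProduct_self_eq_zero.mp h)
  have h1 : 2 * ((a - b) ⬝ᵥ a) = (a - b) ⬝ᵥ (a - b) := by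
    simp only [sub_dotProduct, dotProduct_sub]
    rw [dotProduct_comm a b]
    linear_combination h
  rw [refl_mulVec, h1, div_self h0, one_smul, sub_sub_cancel]

lemma refl_mulVec_of_orth {m : ℕ} {v w : Fin m → ℝ} (h : v ⬝ᵥ w = 0) : refl v *ᵥ w = w := by
  rw [refl_mulVec, h]
  simp

lemma dot_of_orth {m : ℕ} {P : Matrix (Fin m) (Fin m) ℝ} (hP : Pᵀ * P = 1) (a b : Fin m → ℝ) :
    (P *ᵥ a) ⬝ᵥ (P *ᵥ b) = a ⬝ᵥ b := by
  rw [dotProduct_mulVec, vecMul_mulVec, hP, vecMul_one]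

section Connected

variable {κ : Type} [Fintype κ] [DecidableEq κ] {n m : ℕ} (Φ : Frame m (Ix n κ))

/-- Invariance under the rotations fixing the first `k` basis vectors (and its counterpart for
the other component), by descending induction on `k`; the step splits off the reflection which
maps the image of the `k`-th basis vector back to that vector. -/
lemma Psi_orth_aux (μ : Measure (Om m)) [IsProbabilityMeasure μ] [μ.IsMulLeftInvariant]
    (hbar : Φ.bar = ixBar) {s : κ → ℝ} (hs : ∀ c, s c ^ 2 = 1)
    (hsi : Function.Injective s) (j : ℕ) : ∀ (k : ℕ), k + j = m →
    ∀ P : Matrix (Fin m) (Fin m) ℝ, Pᵀ * P = 1 →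
    (∀ i : Fin m, (i : ℕ) < k → P *ᵥ Pi.single i 1 = Pi.single i 1) →
    ∀ Q : Matrix (Fin m) (Fin m) ℂ,
    (P.det = 1 → Psi Φ μ s (Q * mC P) = Psi Φ μ s Q) ∧
    (P.det = -1 → ∀ u : Fin m → ℝ, u ≠ 0 →
      Psi Φ μ s (Q * mC P) = Psi Φ μ s (Q * mC (refl u))) := by
  induction j with
  | zero =>
    intro k hk P hP hfix Q
    have h1 : P = 1 := by
      refine Matrix.ext_of_mulVec_single fun i => ?_
      rw [hfix i (by omega), Matrix.one_mulVec]
    subst h1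
    refine ⟨fun _ => by rw [mC_one, Matrix.mul_one], fun h => ?_⟩
    rw [Matrix.det_one] at h
    norm_num at h
  | succ j ih =>
    intro k hk P hP hfix Q
    set e : Fin m → ℝ := Pi.single (⟨k, by omega⟩ : Fin m) 1 with he
    by_cases hPe : P *ᵥ e = e
    · refine ih (k + 1) (by omega) P hP (fun i hi => ?_) Q
      rcases Nat.lt_succ_iff_lt_or_eq.mp hi with h | h
      · exact hfix i h
      · have : i = ⟨k, by omega⟩ := Fin.ext h
        rw [this]
        exact hPe
    · set v := P *ᵥ e - e with hv
      have hv0 : v ≠ 0 := sub_ne_zero.mpr hPe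
      have hRR := refl_mul_self v hv0
      have hP' : (refl v * P)ᵀ * (refl v * P) = 1 := by
        rw [Matrix.transpose_mul, refl_transpose, Matrix.mul_assoc, ← Matrix.mul_assoc (refl v),
          hRR, Matrix.one_mul, hP]
      have hfix' : ∀ i : Fin m, (i : ℕ) < k + 1 →
          (refl v * P) *ᵥ Pi.single i 1 = Pi.single i 1 := by
        intro i hi
        rw [← Matrix.mulVec_mulVec]
        rcases Nat.lt_succ_iff_lt_or_eq.mp hi with h | h
        · rw [hfix i h]
          refine refl_mulVec_of_orth ?_
          have h2 := dot_of_orth hP e (Pi.single i 1)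
          rw [hfix i h] at h2
          rw [hv, sub_dotProduct, h2, sub_self]
        · have : i = ⟨k, by omega⟩ := Fin.ext h
          rw [this]
          exact refl_sub_mulVec (dot_of_orth hP e e) hv0
      have hdet : (refl v * P).det = -P.det := by
        rw [Matrix.det_mul, refl_det v hv0, neg_one_mul]
      have hfac : mC (refl v) * mC (refl v * P) = mC P := by
        rw [← mC_mul, ← Matrix.mul_assoc, hRR, Matrix.one_mul]
      have hQ : Q * mC P = Q * mC (refl v) * mC (refl v * P) := by
        rw [Matrix.mul_assoc, hfac]
      have hih := ih (k + 1) (by omega) (refl v * P) hP' hfix' (Q * mC (refl v))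
      refine ⟨fun hd => ?_, fun hd u hu => ?_⟩
      · rw [hQ, hih.2 (by rw [hdet, hd]) v hv0, Matrix.mul_assoc, ← mC_mul, hRR, mC_one,
          Matrix.mul_one]
      · rw [hQ, hih.1 (by rw [hdet, hd, neg_neg])]
        exact Psi_refl Φ μ hbar hs hsi Q hv0 hu

/-- Invariance of the average under right multiplication of `Q` by rotations. -/
lemma Psi_orth (μ : Measure (Om m)) [IsProbabilityMeasure μ] [μ.IsMulLeftInvariant]
    (hbar : Φ.bar = ixBar) {s : κ → ℝ} (hs : ∀ c, s c ^ 2 = 1)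
    (hsi : Function.Injective s) (P : Matrix (Fin m) (Fin m) ℝ) (hP : Pᵀ * P = 1)
    (hd : P.det = 1) (Q : Matrix (Fin m) (Fin m) ℂ) :
    Psi Φ μ s (Q * mC P) = Psi Φ μ s Q :=
  (Psi_orth_aux Φ μ hbar hs hsi m 0 (by omega) P hP (fun i hi => absurd hi (by omega)) Q).1 hd

end Connected

/-! ### The standard frame -/

section StdFrame

variable {κ : Type} [Fintype κ] [DecidableEq κ] {n m : ℕ}

/-- The unitary `2 × 2` block diagonalizing plane rotations; the columns `true`, `false` belong
to the eigenvalues `exp (iθ)`, `exp (-iθ)`. -/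
def blk2 : Bool → Bool → ℂ
  | false, _ => ((1 / √2 : ℝ) : ℂ)
  | true, true => -Complex.I * ((1 / √2 : ℝ) : ℂ)
  | true, false => Complex.I * ((1 / √2 : ℝ) : ℂ)

/-- The block diagonal matrix with `n` blocks `blk2` and the identity on `κ`. -/
def blk {κ : Type} [DecidableEq κ] {n : ℕ} : Matrix (Ix n κ) (Ix n κ) ℂ := Matrix.of fun x a =>
  match x, a with
  | Sum.inl (j, b), Sum.inl (k, b') => if j = k then blk2 b b' else 0
  | Sum.inr c, Sum.inr d => if c = d then 1 else 0
  | _, _ => 0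

lemma blk_conj {κ : Type} [DecidableEq κ] {n : ℕ} (x a : Ix n κ) :
    (starRingEnd ℂ) (blk x a) = blk x (ixBar a) := by
  rcases x with ⟨j, b⟩ | c <;> rcases a with ⟨k, b'⟩ | d
  · by_cases h : j = k
    · cases b <;> cases b' <;> simp [blk, ixBar, blk2, h]
    · simp [blk, ixBar, h]
  · simp [blk, ixBar]
  · simp [blk, ixBar]
  · by_cases h : c = d <;> simp [blk, ixBar, h]

lemma blk_dual_mul :
    (Matrix.of fun a x => (blk : Matrix (Ix n κ) (Ix n κ) ℂ) x (ixBar a)) * blk = 1 := by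
  have h2 : ((1 / √2 : ℝ) : ℂ) * ((1 / √2 : ℝ) : ℂ) = 1 / 2 := by
    rw [← Complex.ofReal_mul, div_mul_div_comm, Real.mul_self_sqrt (by norm_num)]
    norm_num
  have hI := Complex.I_mul_I
  ext a b
  rw [Matrix.mul_apply, Fintype.sum_sum_type, Fintype.sum_prod_type]
  rcases a with ⟨j, x⟩ | c <;> rcases b with ⟨k, y⟩ | d
  · by_cases h : j = k
    · subst h
      cases x <;> cases y <;> simp only [blk, ixBar, blk2, Matrix.of_apply, Fintype.sum_bool,
        Bool.not_true, Bool.not_false, mul_ite, ite_mul, mul_zero, zero_mul,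
        Finset.sum_add_distrib, Finset.sum_ite_eq', Finset.mem_univ, if_true,
        Finset.sum_const_zero, add_zero, Matrix.one_apply, Sum.inl.injEq, Prod.mk.injEq,
        true_and, reduceCtorEq, if_false]
      · linear_combination (-Complex.I * Complex.I + 1) * h2 - (1 / 2) * hI
      · linear_combination (Complex.I * Complex.I + 1) * h2 + (1 / 2) * hI
      · linear_combination (Complex.I * Complex.I + 1) * h2 + (1 / 2) * hI
      · linear_combination (-Complex.I * Complex.I + 1) * h2 - (1 / 2) * hI
    · have hz : ∀ (p : Fin n) (b : Bool), (if p = j then blk2 b (!x) else 0) *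
          (if p = k then blk2 b y else 0) = 0 := by
        intro p b
        by_cases hp : p = j
        · rw [if_neg (fun hpk => h (hp.symm.trans hpk)), mul_zero]
        · rw [if_neg hp, zero_mul]
      simp only [blk, ixBar, Matrix.of_apply, hz, zero_mul, Finset.sum_const_zero, add_zero]
      rw [Matrix.one_apply_ne (by simp [h])]
  · simp [blk, ixBar]
  · simp [blk, ixBar]
  · simp [blk, ixBar, Matrix.one_apply, eq_comm]

/-- The standard frame: the columns are the common eigenvectors of the block diagonal matrices
made of `n` plane rotations and real diagonal entries. -/
def stdFrame (e : Fin m ≃ Ix n κ) : Frame m (Ix n κ) where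
  bar := ixBar
  bar_bar := by rintro (⟨j, b⟩ | c) <;> simp [ixBar]
  A := blk.submatrix e id
  mul_dual := by
    have h := mul_eq_one_comm.mp (blk_dual_mul (n := n) (κ := κ))
    ext i j
    have h' := congrFun (congrFun h (e i)) (e j)
    rw [Matrix.mul_apply] at h' ⊢
    simpa [Matrix.one_apply] using h'
  dual_mul := by
    ext a b
    have h' := congrFun (congrFun (blk_dual_mul (n := n) (κ := κ)) a) b
    rw [Matrix.mul_apply] at h' ⊢
    rw [← h']
    exact e.sum_comp fun x => blk x (ixBar a) * blk x b
  conj_A i a := blk_conj _ _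

end StdFrame

/-! ### Averaging over the orthogonal group -/

section Average

variable {κ : Type} [Fintype κ] [DecidableEq κ] {n m : ℕ} (Φ : Frame m (Ix n κ))

/-- The real orthogonal matrix with eigenvalues `ang s θ` in the given frame. -/
def Tmat (s : κ → ℝ) (θ : Fin n → ℝ) : Matrix (Fin m) (Fin m) ℝ :=
  (Φ.A * diagonal (ang s θ) * Φ.dual).map Complex.re

lemma Frame_conj_entry (d : Ix n κ → ℂ) (i j : Fin m) :
    (Φ.A * diagonal d * Φ.dual) i j = ∑ a, Φ.A i a * d a * Φ.A j (Φ.bar a) := by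
  rw [Matrix.mul_apply]
  simp only [Matrix.mul_diagonal, Frame.dual_apply]

lemma sum_bar (g : Ix n κ → ℂ) : ∑ a, g (Φ.bar a) = ∑ a, g a :=
  Equiv.sum_comp (Function.Involutive.toPerm Φ.bar Φ.bar_bar) g

lemma ang_conj {κ : Type} {n : ℕ} (s : κ → ℝ) (θ : Fin n → ℝ) (a : Ix n κ) :
    (starRingEnd ℂ) (ang s θ a) = ang s θ (ixBar a) := by
  rcases a with ⟨j, b⟩ | c
  · cases b <;> simp [ang, ixBar, ← Complex.exp_conj]
  · simp [ang, ixBar]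

lemma mC_Tmat (hbar : Φ.bar = ixBar) (s : κ → ℝ) (θ : Fin n → ℝ) :
    mC (Tmat Φ s θ) = Φ.A * diagonal (ang s θ) * Φ.dual := by
  ext i j
  simp only [mC, Tmat, Matrix.map_apply]
  refine Complex.conj_eq_iff_re.mp ?_
  rw [Frame_conj_entry, map_sum, ← sum_bar Φ]
  refine Finset.sum_congr rfl fun a _ => ?_
  rw [map_mul, map_mul, Φ.conj_A, Φ.conj_A, ang_conj, ← hbar, Φ.bar_bar]

lemma mC_injective {p q : Type*} {M N : Matrix p q ℝ} (h : mC M = mC N) : M = N := by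
  ext i j
  exact Complex.ofReal_injective (congrFun (congrFun h i) j)

lemma Tmat_orth (hbar : Φ.bar = ixBar) {s : κ → ℝ} (hs : ∀ c, s c ^ 2 = 1) (θ : Fin n → ℝ) :
    Tmat Φ s θ * (Tmat Φ s θ)ᵀ = 1 := by
  apply mC_injective
  rw [mC_mul, mC_transpose, mC_one, mC_Tmat Φ hbar]
  have h1 : (Φ.A * diagonal (ang s θ) * Φ.dual)ᵀ =
      Φ.A * diagonal (fun a => ang s θ (ixBar a)) * Φ.dual := by
    ext i j
    rw [Matrix.transpose_apply, Frame_conj_entry, Frame_conj_entry, ← sum_bar Φ]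
    refine Finset.sum_congr rfl fun a _ => ?_
    rw [Φ.bar_bar, hbar]
    ring
  rw [h1]
  calc _ = Φ.A * diagonal (ang s θ) * (Φ.dual * Φ.A) *
        diagonal (fun a => ang s θ (ixBar a)) * Φ.dual := by simp only [Matrix.mul_assoc]
    _ = Φ.A * (diagonal (ang s θ) * diagonal (fun a => ang s θ (ixBar a))) * Φ.dual := by
        rw [Φ.dual_A, Matrix.mul_one]; simp only [Matrix.mul_assoc]
    _ = 1 := by
        rw [Matrix.diagonal_mul_diagonal]
        simp only [ang_bar s hs]
        rw [Matrix.diagonal_one, Matrix.mul_one, Φ.A_dual]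

lemma Tmat_det (hbar : Φ.bar = ixBar) (s : κ → ℝ) (θ : Fin n → ℝ) :
    (Tmat Φ s θ).det = ∏ c, s c := by
  have h1 : (mC (Tmat Φ s θ)).det = ((Tmat Φ s θ).det : ℂ) :=
    ((Complex.ofRealHom).map_det (Tmat Φ s θ)).symm
  have h2 : (mC (Tmat Φ s θ)).det = ∏ a, ang s θ a := by
    rw [mC_Tmat Φ hbar, Matrix.det_conj_of_mul_eq_one Φ.A_dual Φ.dual_A, Matrix.det_diagonal]
  rw [h2, Fintype.prod_sum_type, Fintype.prod_prod_type] at h1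
  have h3 : ∀ j : Fin n, ∏ b, ang s θ (Sum.inl (j, b)) = 1 := by
    intro j
    simp [ang, ← Complex.exp_add]
  simp only [h3, Finset.prod_const_one, one_mul] at h1
  simp only [ang] at h1
  exact_mod_cast h1.symm

/-- The matrix `Uᵀ T_θ U` as an element of the orthogonal group. -/
def conjO (hbar : Φ.bar = ixBar) {s : κ → ℝ} (hs : ∀ c, s c ^ 2 = 1) (θ : Fin n → ℝ) (U : Om m) :
    Om m :=
  U⁻¹ * ⟨Tmat Φ s θ, (Matrix.mem_orthogonalGroup_iff _ _).2 (Tmat_orth Φ hbar hs θ)⟩ * U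

lemma conjO_coe (hbar : Φ.bar = ixBar) {s : κ → ℝ} (hs : ∀ c, s c ^ 2 = 1) (θ : Fin n → ℝ)
    (U : Om m) : (conjO Φ hbar hs θ U : Matrix (Fin m) (Fin m) ℝ) =
      (U : Matrix (Fin m) (Fin m) ℝ)ᵀ * Tmat Φ s θ * (U : Matrix (Fin m) (Fin m) ℝ) := rfl

lemma conjO_det (hbar : Φ.bar = ixBar) {s : κ → ℝ} (hs : ∀ c, s c ^ 2 = 1) (θ : Fin n → ℝ)
    (U : Om m) : (conjO Φ hbar hs θ U : Matrix (Fin m) (Fin m) ℝ).det = ∏ c, s c := by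
  rw [conjO_coe, Matrix.det_conj_of_mul_eq_one (Om.transpose_mul U) (Om.mul_transpose U),
    Tmat_det Φ hbar]

lemma wexp_real (hbar : Φ.bar = ixBar) {s : κ → ℝ} (hs : ∀ c, s c ^ 2 = 1) (θ : Fin n → ℝ)
    (U : Om m) (K : Matrix (Fin m) (Fin m) ℝ) :
    Φ.wexp (diagonal (ang s θ)) (mC K) U =
      ((Real.exp ((conjO Φ hbar hs θ U : Matrix (Fin m) (Fin m) ℝ) * K).trace : ℝ) : ℂ) := by
  unfold Frame.wexp
  rw [Complex.ofReal_exp, ← mC_trace, conjO_coe, mC_mul, mC_mul, mC_mul, mC_Tmat Φ hbar,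
    mC_transpose, Frame.hat]
  congr 1
  set V := mC (U : Matrix (Fin m) (Fin m) ℝ)
  calc (diagonal (ang s θ) * (Φ.dual * (V * mC K * Vᵀ) * Φ.A)).trace
      = ((diagonal (ang s θ) * Φ.dual * V * mC K) * (Vᵀ * Φ.A)).trace := by
        simp only [Matrix.mul_assoc]
    _ = ((Vᵀ * Φ.A) * (diagonal (ang s θ) * Φ.dual * V * mC K)).trace := Matrix.trace_mul_comm _ _
    _ = _ := by simp only [Matrix.mul_assoc]

lemma wexp_scalar (s : κ → ℝ) (θ : Fin n → ℝ) (U : Om m) (x : ℝ) :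
    Φ.wexp (diagonal (ang s θ)) (mC (x • (1 : Matrix (Fin m) (Fin m) ℝ))) U =
      ((Real.exp (2 * x * psum 1 (Real.cos ∘ θ) + (∑ c, s c) * x) : ℝ) : ℂ) := by
  have h1 : mC (x • (1 : Matrix (Fin m) (Fin m) ℝ)) = (x : ℂ) • 1 := by
    ext i j
    by_cases h : i = j <;> simp [mC, h]
  have h2 : Φ.hat U ((x : ℂ) • 1) = (x : ℂ) • 1 := by
    unfold Frame.hat
    rw [Matrix.mul_smul, Matrix.mul_one, Matrix.smul_mul, Frame.mC_mul_transpose, Matrix.mul_smul,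
      Matrix.mul_one, Matrix.smul_mul, Φ.dual_A]
  unfold Frame.wexp
  rw [h1, h2, Complex.ofReal_exp, trace_diag]
  congr 1
  simp only [Matrix.smul_apply, Matrix.one_apply_eq, smul_eq_mul, mul_one]
  rw [Fintype.sum_sum_type, Fintype.sum_prod_type]
  simp only [Fintype.sum_bool, ang, psum, pow_one, Function.comp_apply]
  push_cast
  simp only [Complex.cos, Finset.mul_sum, Finset.sum_mul, neg_mul]
  congr 1
  refine Finset.sum_congr rfl fun j _ => ?_
  ring

end Average

/-! ### The Weyl integration formula for the components -/

section Final

variable {κ : Type} [Fintype κ] [DecidableEq κ] {n m : ℕ} (Φ : Frame m (Ix n κ))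

lemma continuous_detO : Continuous fun M : Om m => (M : Matrix (Fin m) (Fin m) ℝ).det :=
  continuous_subtype_val.matrix_det

lemma measurableSet_det (e : ℝ) :
    MeasurableSet {M : Om m | (M : Matrix (Fin m) (Fin m) ℝ).det = e} :=
  (isClosed_eq continuous_detO continuous_const).measurableSet

/-- Both components have positive measure, as a reflection exchanges them. -/
lemma measure_SO_pos (hm : 0 < m) (μ : Measure (Om m)) [IsProbabilityMeasure μ]
    [μ.IsMulLeftInvariant] :
    0 < μ.real {M : Om m | (M : Matrix (Fin m) (Fin m) ℝ).det = 1} := by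
  set v : Fin m → ℝ := Pi.single ⟨0, hm⟩ 1
  have hv : v ≠ 0 := fun h => by simpa [v] using congrFun h ⟨0, hm⟩
  set R : Om m := ⟨refl v, (Matrix.mem_orthogonalGroup_iff _ _).2 (by
    rw [refl_transpose, refl_mul_self v hv])⟩
  have hR : (R : Matrix (Fin m) (Fin m) ℝ).det = -1 := refl_det v hv
  set S := {M : Om m | (M : Matrix (Fin m) (Fin m) ℝ).det = 1}
  have h1 : μ ((fun M => R * M) ⁻¹' S) = μ S := measure_preimage_mul μ R S
  have h2 : Set.univ ⊆ S ∪ (fun M => R * M) ⁻¹' S := by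
    intro M _
    have hM : (M : Matrix (Fin m) (Fin m) ℝ).det * (M : Matrix (Fin m) (Fin m) ℝ).det = 1 := by
      have := congrArg Matrix.det (Om.mul_transpose M)
      rwa [Matrix.det_mul, Matrix.det_transpose, Matrix.det_one] at this
    rcases mul_self_eq_one_iff.mp hM with h | h
    · exact Or.inl h
    · right
      change ((R : Matrix (Fin m) (Fin m) ℝ) * (M : Matrix (Fin m) (Fin m) ℝ)).det = 1
      rw [Matrix.det_mul, hR, h]
      norm_num
  have h3 : μ S ≠ 0 := by
    intro h0
    have := measure_mono_null h2 (measure_union_null h0 (h1.trans h0))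
    simp at this
  exact ENNReal.toReal_pos h3 (measure_ne_top _ _)

/-- The integral over the component of determinant `e`. -/
def compInt (μ : Measure (Om m)) (e x : ℝ) : ℝ :=
  ∫ M : Om m, (if (M : Matrix (Fin m) (Fin m) ℝ).det = e then
    Real.exp (x * (M : Matrix (Fin m) (Fin m) ℝ).trace) else 0) ∂μ

/-- Left translation by an element of determinant `e` moves the special orthogonal group to the
component of determinant `e`. -/
lemma compInt_translate (μ : Measure (Om m)) [μ.IsMulLeftInvariant] {e : ℝ} (he : e ≠ 0) (x : ℝ)
    (N : Om m) (hN : (N : Matrix (Fin m) (Fin m) ℝ).det = e) :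
    ∫ M in {M : Om m | (M : Matrix (Fin m) (Fin m) ℝ).det = 1},
      Real.exp ((N : Matrix (Fin m) (Fin m) ℝ) *
        (x • (M : Matrix (Fin m) (Fin m) ℝ))).trace ∂μ = compInt μ e x := by
  rw [← integral_indicator (measurableSet_det 1), compInt,
    ← integral_mul_left_eq_self (fun M : Om m => if (M : Matrix (Fin m) (Fin m) ℝ).det = e then
      Real.exp (x * (M : Matrix (Fin m) (Fin m) ℝ).trace) else 0) N]
  refine integral_congr_ae (Filter.Eventually.of_forall fun M => ?_)
  have hc : ((N * M : Om m) : Matrix (Fin m) (Fin m) ℝ) =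
      (N : Matrix (Fin m) (Fin m) ℝ) * (M : Matrix (Fin m) (Fin m) ℝ) := rfl
  have hd : ((N * M : Om m) : Matrix (Fin m) (Fin m) ℝ).det = e ↔
      (M : Matrix (Fin m) (Fin m) ℝ).det = 1 := by
    rw [hc, Matrix.det_mul, hN, mul_eq_left₀ he]
  by_cases h : (M : Matrix (Fin m) (Fin m) ℝ).det = 1
  · simp only [Set.indicator, Set.mem_ofPred_eq, h, if_true, hd.2 h]
    rw [hc, Matrix.mul_smul, Matrix.trace_smul, smul_eq_mul]
  · simp only [Set.indicator, Set.mem_ofPred_eq, h, if_false, hd]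

/-- At a scalar matrix the average depends on the traces, hence on the eigenangles, only. -/
lemma Psi_one (μ : Measure (Om m)) [IsProbabilityMeasure μ] (s : κ → ℝ) (x : ℝ) :
    Psi Φ μ s (mC (x • (1 : Matrix (Fin m) (Fin m) ℝ))) =
      ((Real.exp ((∑ c, s c) * x) * ev n s (2 * x) (fun _ => 1) : ℝ) : ℂ) := by
  unfold Psi
  have hi : Integrable (fun p : (Fin n → ℝ) × Om m => (wt n s 0 p.1 : ℂ) *
      Φ.wexp (diagonal (ang s p.1)) (mC (x • (1 : Matrix (Fin m) (Fin m) ℝ))) p.2)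
      ((tor n).prod μ) :=
    integrable_pair μ ((continuous_wt₂ s).mul (continuous_wexp₂ Φ s _))
  rw [integral_prod _ hi]
  simp only [wexp_scalar, integral_const, probReal_univ, one_smul]
  rw [ev_eq, ← integral_const_mul, ← integral_complex_ofReal]
  refine integral_congr_ae (Filter.Eventually.of_forall fun θ => ?_)
  simp only [wt_eq_exp s (2 * x) θ, Real.exp_add]
  push_cast
  ring

/-- The Weyl integration formula for `exp (x tr M)`: the double average over `M ∈ SO(m)` and
`N = Uᵀ T_θ U` of `exp (x tr (N M))` is evaluated in both orders. For fixed `N` it is the integral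
over the component of `N`, for fixed `M` it is independent of `M`. -/
lemma average (hbar : Φ.bar = ixBar) {s : κ → ℝ} (hs : ∀ c, s c ^ 2 = 1)
    (hsi : Function.Injective s) (μ : Measure (Om m)) [IsProbabilityMeasure μ]
    [μ.IsMulLeftInvariant] (x : ℝ) :
    ev n s 0 (fun _ => 1) * compInt μ (∏ c, s c) x =
      μ.real {M : Om m | (M : Matrix (Fin m) (Fin m) ℝ).det = 1} *
        (Real.exp ((∑ c, s c) * x) * ev n s (2 * x) (fun _ => 1)) := by
  have he : ∏ c, s c ≠ 0 := Finset.prod_ne_zero_iff.2 fun c _ h => by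
    have := hs c
    rw [h] at this
    norm_num at this
  set S := {M : Om m | (M : Matrix (Fin m) (Fin m) ℝ).det = 1} with hS
  set ν := μ.restrict S with hν
  set F : Om m → (Fin n → ℝ) × Om m → ℂ := fun M p => (wt n s 0 p.1 : ℂ) *
    Φ.wexp (diagonal (ang s p.1)) (mC (x • (M : Matrix (Fin m) (Fin m) ℝ))) p.2 with hF
  have hFc : Continuous (Function.uncurry F) := by
    have hd : Continuous fun z : Om m × ((Fin n → ℝ) × Om m) =>
        (diagonal (ang s z.2.1) : Matrix (Ix n κ) (Ix n κ) ℂ) := by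
      refine Continuous.matrix_diagonal (continuous_pi fun a => ?_)
      exact (contDiff_ang s a).continuous.comp (continuous_fst.comp continuous_snd)
    have hU : Continuous fun z : Om m × ((Fin n → ℝ) × Om m) =>
        mC (z.2.2 : Matrix (Fin m) (Fin m) ℝ) :=
      Frame.continuous_mC.comp (continuous_snd.comp continuous_snd)
    have hM : Continuous fun z : Om m × ((Fin n → ℝ) × Om m) =>
        mC (x • (z.1 : Matrix (Fin m) (Fin m) ℝ)) :=
      ((continuous_const_smul x).comp
        (continuous_subtype_val.comp continuous_fst)).matrix_map Complex.continuous_ofReal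
    have hw : Continuous fun z : Om m × ((Fin n → ℝ) × Om m) => (wt n s 0 z.2.1 : ℂ) :=
      (continuous_wt₂ (m := m) s).comp continuous_snd
    have h4 : Function.uncurry F = fun z : Om m × ((Fin n → ℝ) × Om m) => (wt n s 0 z.2.1 : ℂ) *
        Φ.wexp (diagonal (ang s z.2.1)) (mC (x • (z.1 : Matrix (Fin m) (Fin m) ℝ))) z.2.2 := rfl
    rw [h4]
    refine hw.mul ?_
    unfold Frame.wexp Frame.hat
    fun_prop
  have hFi : Integrable (Function.uncurry F) (ν.prod ((tor n).prod μ)) := by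
    refine integrable_of_compact
      (K := Set.univ ×ˢ (Set.Icc (0 : Fin n → ℝ) (fun _ => 2 * Real.pi) ×ˢ Set.univ))
      (isCompact_univ.prod (isCompact_Icc.prod isCompact_univ)) ?_ hFc
    filter_upwards [Measure.quasiMeasurePreserving_snd.ae
      (Measure.quasiMeasurePreserving_fst.ae (tor_ae_mem n))] with z h1
      using ⟨trivial, h1, trivial⟩
  have hsw := integral_integral_swap hFi
  -- for fixed `M` the inner integral is `Psi (x M)`, which rotation invariance reduces to `Psi x`
  have hleft : ∫ M, ∫ p, F M p ∂((tor n).prod μ) ∂ν = ((μ.real S *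
      (Real.exp ((∑ c, s c) * x) * ev n s (2 * x) (fun _ => 1)) : ℝ) : ℂ) := by
    have h1 : ∀ M ∈ S, ∫ p, F M p ∂((tor n).prod μ) =
        ((Real.exp ((∑ c, s c) * x) * ev n s (2 * x) (fun _ => 1) : ℝ) : ℂ) := by
      intro M hM
      rw [← Psi_one Φ μ s x, ← Psi_orth Φ μ hbar hs hsi _ (Om.transpose_mul M) hM, ← mC_mul,
        Matrix.smul_mul, Matrix.one_mul]
      rfl
    rw [hν, setIntegral_congr_fun (measurableSet_det 1) h1, setIntegral_const,
      Complex.real_smul]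
    push_cast
    rfl
  -- for fixed `N` of determinant `∏ s`, left translation by `N` maps `SO` to its component
  have hright : ∫ p, ∫ M, F M p ∂ν ∂((tor n).prod μ) =
      ((ev n s 0 (fun _ => 1) * compInt μ (∏ c, s c) x : ℝ) : ℂ) := by
    have h1 : ∀ p, ∫ M, F M p ∂ν = ((wt n s 0 p.1 * compInt μ (∏ c, s c) x : ℝ) : ℂ) := by
      intro p
      simp only [hF, wexp_real Φ hbar hs]
      rw [integral_const_mul, integral_complex_ofReal, hν,
        compInt_translate μ he x _ (conjO_det Φ hbar hs p.1 p.2), ← Complex.ofReal_mul]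
    simp only [h1]
    rw [integral_complex_ofReal, integral_mul_const]
    have h2 : ∫ p : (Fin n → ℝ) × Om m, wt n s 0 p.1 ∂((tor n).prod μ) =
        ev n s 0 (fun _ => 1) := by
      rw [ev_eq, integral_fun_fst (fun θ => wt n s 0 θ)]
      simp
    rw [h2]
  rw [hleft, hright] at hsw
  exact_mod_cast hsw.symm

end Final

/-! ### The components of the orthogonal group -/

/-- The equation for a component of `O(ℓ+1)`, once the number `n` of conjugate pairs of
eigenvalues and the forced real eigenvalues `s` of its elements are specified. -/
lemma ode_of_eigenvalues {κ : Type} [Fintype κ] [DecidableEq κ] {n : ℕ} (s : κ → ℝ)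
    (hs : ∀ c, s c ^ 2 = 1) (hsi : Function.Injective s) (ℓ : ℕ) (hℓ : 1 ≤ ℓ)
    (hn : 2 * n + Fintype.card κ = ℓ + 1)
    (hc : (Fintype.card κ = 0 ∧ ∑ c, s c = 0) ∨ (Fintype.card κ = 1 ∧ ∑ c, s c = 1) ∨
      (Fintype.card κ = 1 ∧ ∑ c, s c = -1) ∨ (Fintype.card κ = 2 ∧ ∑ c, s c = 0))
    (ε : ℝ) (hε : ∏ c, s c = ε) (μ : Measure (Om (ℓ + 1))) [IsProbabilityMeasure μ]
    [μ.IsMulLeftInvariant] (f : ℝ → ℝ)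
    (hf : ∀ x, f x = x * deriv (fun y => Real.log (expO (ℓ + 1) μ ε
      (fun M => Real.exp (y * Matrix.trace (M : Matrix (Fin (ℓ + 1)) (Fin (ℓ + 1)) ℝ))))) x) :
    f 0 = 0 ∧ deriv f 0 = 0 ∧
    ∀ x : ℝ, x ≠ 0 →
      iteratedDeriv 3 f x + (1 / x) * iteratedDeriv 2 f x + (6 / x) * (deriv f x) ^ 2
        - (4 / x ^ 2) * f x * deriv f x - ((16 * x ^ 2 + (ℓ : ℝ) ^ 2) / x ^ 2) * deriv f x
        + (16 / x) * f x + 2 * ((ℓ : ℝ) ^ 2 - 1) / x = 0 := by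
  have hcard : Fintype.card (Fin (ℓ + 1)) = Fintype.card (Ix n κ) := by
    simp only [Fintype.card_fin, Fintype.card_sum, Fintype.card_prod, Fintype.card_bool]
    omega
  have hZ := ev_one_pos (n := n) s hs 0
  have hSO := measure_SO_pos (Nat.succ_pos ℓ) μ
  refine ode_of_partition s hs ℓ hℓ hn hc
    (2 * (μ.real {M : Om (ℓ + 1) | (M : Matrix (Fin (ℓ + 1)) (Fin (ℓ + 1)) ℝ).det = 1} /
      ev n s 0 (fun _ => 1))) (by positivity) _ (fun x => ?_) f hf
  have h := average (stdFrame (Fintype.equivOfCardEq hcard)) rfl hs hsi μ x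
  rw [hε] at h
  have h2 : expO (ℓ + 1) μ ε (fun M => Real.exp (x * Matrix.trace
      (M : Matrix (Fin (ℓ + 1)) (Fin (ℓ + 1)) ℝ))) = 2 * compInt μ ε x := rfl
  rw [h2]
  field_simp
  linear_combination h

end OrthPV

theorem orthogonal_integral_painleveV_thirdOrder (ℓ : ℕ) (hℓ : 1 ≤ ℓ)
    (ε : ℝ) (hε : ε = 1 ∨ ε = -1)
    (μ : Measure (Matrix.orthogonalGroup (Fin (ℓ + 1)) ℝ)) [IsProbabilityMeasure μ]
    [μ.IsMulLeftInvariant]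
    (f : ℝ → ℝ)
    (hf : ∀ x, f x = x * deriv (fun y => Real.log (expO (ℓ + 1) μ ε
      (fun M => Real.exp (y * Matrix.trace (M : Matrix (Fin (ℓ + 1)) (Fin (ℓ + 1)) ℝ))))) x) :
    f 0 = 0 ∧ deriv f 0 = 0 ∧
    ∀ x : ℝ, x ≠ 0 →
      iteratedDeriv 3 f x + (1 / x) * iteratedDeriv 2 f x + (6 / x) * (deriv f x) ^ 2
        - (4 / x ^ 2) * f x * deriv f x - ((16 * x ^ 2 + (ℓ : ℝ) ^ 2) / x ^ 2) * deriv f x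
        + (16 / x) * f x + 2 * ((ℓ : ℝ) ^ 2 - 1) / x = 0 := by
  rcases Nat.even_or_odd' (ℓ + 1) with ⟨n, hn | hn⟩
  -- even dimension: no real eigenvalue is forced for `ε = 1`, both are for `ε = -1`
  · rcases hε with rfl | rfl
    · refine OrthPV.ode_of_eigenvalues (n := n) (fun c : Empty => c.elim) (fun c => c.elim)
        (fun c => c.elim) ℓ hℓ (by simpa using hn.symm) (Or.inl (by simp)) 1 (by simp) μ f hf
    -- `n - 1` does not truncate, since `2 * n = ℓ + 1 ≥ 2`
    · refine OrthPV.ode_of_eigenvalues (n := n - 1) (fun b : Bool => if b then (1 : ℝ) else -1)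
        (fun b => by cases b <;> simp) (fun a b h => ?_) ℓ hℓ
        (by rw [Fintype.card_bool]; omega) (Or.inr (Or.inr (Or.inr (by simp)))) (-1)
        (by simp) μ f hf
      cases a <;> cases b <;> first | rfl | (norm_num at h)
  -- odd dimension: the eigenvalue `ε` is forced
  · refine OrthPV.ode_of_eigenvalues (n := n) (fun _ : Unit => ε)
      (fun _ => by rcases hε with rfl | rfl <;> norm_num) (fun _ _ _ => rfl) ℓ hℓ
      (by rw [Fintype.card_unit]; exact hn.symm) ?_ ε (by simp) μ f hf
    rcases hε with rfl | rfl
    · exact Or.inr (Or.inl (by simp))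
    · exact Or.inr (Or.inr (Or.inl (by simp)))
end
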